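/- Let Ω ⊂ ℝⁿ (n ≥ 2) be a bounded polyhedral domain with singular set S ≠ ∅ and η(x) = dist(x, S), and let μ ≥ 1 be an integer. Then there exists a constant C > 0 such that for every function u : ℝⁿ → ℝ that is smooth on Ω, continuous on the closure of Ω, vanishes on ∂Ω, and satisfies ‖u‖_{K^1_1(Ω)} < ∞ and ‖Δu‖_{K^{μ−1}_{−1}(Ω)} < ∞, one has ‖u‖_{K^{μ+1}_1(Ω)} ≤ C ‖Δu‖_{K^{μ−1}_{−1}(Ω)}. -/

import Mathlib

open MeasureTheory Set Metric
open scoped RealInnerProductSpace ENNReal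

noncomputable section

/-- `H` is an affine hyperplane in `ℝⁿ`. -/
def IsAffineHyperplane {n : ℕ} (H : Set (EuclideanSpace ℝ (Fin n))) : Prop :=
  ∃ (v : EuclideanSpace ℝ (Fin n)) (c : ℝ), v ≠ 0 ∧ H = {x | ⟪v, x⟫ = c}

/-- `Ω` is a bounded polyhedral domain with boundary contained in the union of the minimal
finite family `𝓗` of affine hyperplanes. -/
structure IsPolyhedralDomain {n : ℕ} (Ω : Set (EuclideanSpace ℝ (Fin n)))
    (𝓗 : Finset (Set (EuclideanSpace ℝ (Fin n)))) : Prop where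
  isOpen : IsOpen Ω
  isBounded : Bornology.IsBounded Ω
  frontier_closure : frontier Ω = frontier (closure Ω)
  hyperplane : ∀ H ∈ 𝓗, IsAffineHyperplane H
  subset_union : frontier Ω ⊆ ⋃ H ∈ 𝓗, H
  minimal : ∀ 𝓗' ⊂ 𝓗, ¬ frontier Ω ⊆ ⋃ H ∈ 𝓗', H

/-- The set of singular boundary points: boundary points lying on at least two
distinct hyperplanes of the family `𝓗`. -/
def polySingularSet {n : ℕ} (Ω : Set (EuclideanSpace ℝ (Fin n)))
    (𝓗 : Finset (Set (EuclideanSpace ℝ (Fin n)))) : Set (EuclideanSpace ℝ (Fin n)) :=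
  {x | x ∈ frontier Ω ∧ ∃ H₁ ∈ 𝓗, ∃ H₂ ∈ 𝓗, H₁ ≠ H₂ ∧ x ∈ H₁ ∧ x ∈ H₂}

/-- Iterated partial derivative along a list of coordinate directions. -/
def derivAlong {n : ℕ} : List (Fin n) → (EuclideanSpace ℝ (Fin n) → ℝ) →
    EuclideanSpace ℝ (Fin n) → ℝ
  | [], u => u
  | i :: L, u => fun x => fderiv ℝ (derivAlong L u) x (EuclideanSpace.single i 1)

/-- The iterated partial derivative `∂^β` associated to a multi-index `β`. -/
def pderivMulti {n : ℕ} (β : Fin n → ℕ) (u : EuclideanSpace ℝ (Fin n) → ℝ) :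
    EuclideanSpace ℝ (Fin n) → ℝ :=
  derivAlong ((List.finRange n).flatMap fun i => List.replicate (β i) i) u

/-- The finite set of multi-indices `β : Fin n → ℕ` with `|β| = ∑ i, β i ≤ m`. -/
def multiIndicesLE (n m : ℕ) : Finset (Fin n → ℕ) :=
  ((Finset.univ : Finset (Fin n → Fin (m + 1))).filter
    (fun γ => ∑ i, (γ i : ℕ) ≤ m)).image (fun γ i => (γ i : ℕ))

/-- The squared Babuška–Kondratiev norm `‖u‖²_{K^μ_a(Ω)}` with weight the distance to `S`. -/
def KnormSq {n : ℕ} (Ω S : Set (EuclideanSpace ℝ (Fin n))) (μ : ℕ) (a : ℝ)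
    (u : EuclideanSpace ℝ (Fin n) → ℝ) : ℝ≥0∞ :=
  ∑ β ∈ multiIndicesLE n μ, ∫⁻ x in Ω,
    ENNReal.ofReal (infDist x S ^ (2 * (((∑ i, β i : ℕ) : ℝ) - a)) * pderivMulti β u x ^ 2)

/-- The Laplace operator `Δu = ∑ⱼ ∂²u/∂xⱼ²`. -/
def laplaceOp {n : ℕ} (u : EuclideanSpace ℝ (Fin n) → ℝ) :
    EuclideanSpace ℝ (Fin n) → ℝ :=
  fun x => ∑ j : Fin n, derivAlong [j, j] u x


/-- Euclidean space. -/
abbrev Eu (n : ℕ) := EuclideanSpace ℝ (Fin n)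

/-- Smoothness on a set. -/
abbrev Sm {n : ℕ} (U : Set (Eu n)) (u : Eu n → ℝ) : Prop := ContDiffOn ℝ (⊤ : ℕ∞) u U

/-- Directional derivative. -/
def pd {n : ℕ} (v : Eu n) (u : Eu n → ℝ) : Eu n → ℝ := fun x => fderiv ℝ u x v

lemma Sm.pd {n : ℕ} {U : Set (Eu n)} {u : Eu n → ℝ} (hU : IsOpen U) (hu : Sm U u) (v : Eu n) :
    Sm U (pd v u) := by
  have h : ContDiffOn ℝ (⊤ : ℕ∞) (fderiv ℝ u) U := hu.fderiv_of_isOpen hU (by simp)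
  exact h.clm_apply contDiffOn_const

lemma Sm.diffAt {n : ℕ} {U : Set (Eu n)} {u : Eu n → ℝ} (hU : IsOpen U) (hu : Sm U u)
    {x : Eu n} (hx : x ∈ U) : DifferentiableAt ℝ u x :=
  ((hu x hx).contDiffAt (hU.mem_nhds hx)).differentiableAt (by simp)

lemma pd_congr {n : ℕ} {U : Set (Eu n)} {f g : Eu n → ℝ} (hU : IsOpen U) (h : EqOn f g U)
    (v : Eu n) : EqOn (pd v f) (pd v g) U := by
  intro x hx
  have : f =ᶠ[nhds x] g := Filter.eventuallyEq_of_mem (hU.mem_nhds hx) h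
  simp [pd, this.fderiv_eq]

lemma pd_comm {n : ℕ} {U : Set (Eu n)} {u : Eu n → ℝ} (hU : IsOpen U) (hu : Sm U u) (v w : Eu n) :
    EqOn (pd v (pd w u)) (pd w (pd v u)) U := by
  intro x hx
  have hc := (hu x hx).contDiffAt (hU.mem_nhds hx)
  have hs : IsSymmSndFDerivAt ℝ u x := hc.isSymmSndFDerivAt (by
    simp only [minSmoothness_of_isRCLikeNormedField]
    exact WithTop.coe_le_coe.2 (le_top : (2 : ℕ∞) ≤ ⊤))
  have hd : DifferentiableAt ℝ (fderiv ℝ u) x :=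
    (((hu.fderiv_of_isOpen (m := (⊤ : ℕ∞)) hU (by simp)) x hx).contDiffAt
      (hU.mem_nhds hx)).differentiableAt (by simp)
  have key : ∀ a b : Eu n, pd a (pd b u) x = fderiv ℝ (fderiv ℝ u) x a b := by
    intro a b
    unfold pd
    rw [fderiv_clm_apply hd (by fun_prop)]
    simp
  rw [key, key]
  exact hs v w

lemma pd_vsum {n : ℕ} {ι : Type*} (s : Finset ι) (c : ι → ℝ) (b : ι → Eu n) (u : Eu n → ℝ) :
    pd (∑ j ∈ s, c j • b j) u = fun x => ∑ j ∈ s, c j * pd (b j) u x := by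
  funext x; simp [pd, map_sum]

lemma pd_fsum {n : ℕ} {ι : Type*} {U : Set (Eu n)} (hU : IsOpen U) (s : Finset ι) (c : ι → ℝ)
    (g : ι → Eu n → ℝ) (hg : ∀ i ∈ s, Sm U (g i)) (v : Eu n) :
    EqOn (pd v (fun x => ∑ i ∈ s, c i * g i x)) (fun x => ∑ i ∈ s, c i * pd v (g i) x) U := by
  intro x hx
  have : HasFDerivAt (fun x => ∑ i ∈ s, c i * g i x) (∑ i ∈ s, c i • fderiv ℝ (g i) x) x := by
    apply HasFDerivAt.fun_sum
    intro i hi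
    exact ((hg i hi).diffAt hU hx).hasFDerivAt.const_mul (c i)
  simp [pd, this.fderiv]

/-- The sum of the absolute values of all derivatives of order `k` along the frame `b`. -/
def MM {n : ℕ} (b : Fin n → Eu n) : ℕ → (Eu n → ℝ) → Eu n → ℝ
  | 0, u => fun x => |u x|
  | k + 1, u => fun x => ∑ j, MM b k (pd (b j) u) x

/-- Gradient of tangential derivatives. -/
def TT {n : ℕ} (b : Fin n → Eu n) (i0 : Fin n) : ℕ → (Eu n → ℝ) → Eu n → ℝ
  | 0, u => fun x => ∑ j, |pd (b j) u x|
  | k + 1, u => fun x => ∑ j ∈ Finset.univ.erase i0, TT b i0 k (pd (b j) u) x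

section
variable {n : ℕ} {U : Set (Eu n)} {b : Fin n → Eu n}

lemma MM_nonneg (k : ℕ) (u : Eu n → ℝ) (x : Eu n) : 0 ≤ MM b k u x := by
  induction k generalizing u with
  | zero => simp [MM]
  | succ k ih => exact Finset.sum_nonneg fun j _ => ih _

lemma TT_nonneg (i0 : Fin n) (k : ℕ) (u : Eu n → ℝ) (x : Eu n) : 0 ≤ TT b i0 k u x := by
  induction k generalizing u with
  | zero => exact Finset.sum_nonneg fun j _ => abs_nonneg _
  | succ k ih => exact Finset.sum_nonneg fun j _ => ih _

lemma MM_congr (hU : IsOpen U) (k : ℕ) {f g : Eu n → ℝ} (h : EqOn f g U) :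
    EqOn (MM b k f) (MM b k g) U := by
  induction k generalizing f g with
  | zero => intro x hx; simp [MM, h hx]
  | succ k ih => intro x hx; exact Finset.sum_congr rfl fun j _ => ih (pd_congr hU h (b j)) hx

lemma TT_congr (hU : IsOpen U) (i0 : Fin n) (k : ℕ) {f g : Eu n → ℝ} (h : EqOn f g U) :
    EqOn (TT b i0 k f) (TT b i0 k g) U := by
  induction k generalizing f g with
  | zero => intro x hx; exact Finset.sum_congr rfl fun j _ => by rw [pd_congr hU h (b j) hx]
  | succ k ih => intro x hx; exact Finset.sum_congr rfl fun j _ => ih (pd_congr hU h (b j)) hx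

lemma MM_cont (hU : IsOpen U) (k : ℕ) {u : Eu n → ℝ} (hu : Sm U u) :
    ContinuousOn (MM b k u) U := by
  induction k generalizing u with
  | zero => exact hu.continuousOn.abs
  | succ k ih => exact continuousOn_finsetSum _ fun j _ => ih (hu.pd hU _)

lemma TT_cont (hU : IsOpen U) (i0 : Fin n) (k : ℕ) {u : Eu n → ℝ} (hu : Sm U u) :
    ContinuousOn (TT b i0 k u) U := by
  induction k generalizing u with
  | zero => exact continuousOn_finsetSum _ fun j _ => (hu.pd hU _).continuousOn.abs
  | succ k ih => exact continuousOn_finsetSum _ fun j _ => ih (hu.pd hU _)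

lemma MM_fsum (hU : IsOpen U) (k : ℕ) {ι : Type*} (s : Finset ι) (c : ι → ℝ)
    (g : ι → Eu n → ℝ) (hg : ∀ i ∈ s, Sm U (g i)) {x : Eu n} (hx : x ∈ U) :
    MM b k (fun x => ∑ i ∈ s, c i * g i x) x ≤ ∑ i ∈ s, |c i| * MM b k (g i) x := by
  induction k generalizing g with
  | zero =>
    simp only [MM]
    refine (Finset.abs_sum_le_sum_abs _ _).trans (le_of_eq ?_)
    exact Finset.sum_congr rfl fun i _ => abs_mul _ _
  | succ k ih =>
    simp only [MM, Finset.mul_sum]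
    rw [Finset.sum_comm]
    refine Finset.sum_le_sum fun j _ => ?_
    rw [MM_congr hU k (pd_fsum hU s c g hg (b j)) hx]
    exact ih _ fun i hi => (hg i hi).pd hU _

/-- derivative along any vector with coordinates bounded by one -/
lemma MM_pd_le (hU : IsOpen U) (k : ℕ) {u : Eu n → ℝ} (hu : Sm U u) (v : Eu n) (c : Fin n → ℝ)
    (hv : v = ∑ j, c j • b j) (hc : ∀ j, |c j| ≤ 1) {x : Eu n} (hx : x ∈ U) :
    MM b k (pd v u) x ≤ MM b (k + 1) u x := by
  rw [hv, pd_vsum]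
  refine (MM_fsum hU k _ c _ (fun i _ => hu.pd hU _) hx).trans ?_
  exact Finset.sum_le_sum fun i _ => mul_le_of_le_one_left (MM_nonneg _ _ _) (hc i)

lemma MM_change (hU : IsOpen U) (b' : Fin n → Eu n) (c : Fin n → Fin n → ℝ)
    (hb : ∀ i, b' i = ∑ j, c i j • b j) (hc : ∀ i j, |c i j| ≤ 1) (k : ℕ) {u : Eu n → ℝ}
    (hu : Sm U u) {x : Eu n} (hx : x ∈ U) :
    MM b' k u x ≤ (n : ℝ) ^ k * MM b k u x := by
  induction k generalizing u with
  | zero => simp [MM]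
  | succ k ih =>
    have h1 : ∀ j, MM b' k (pd (b' j) u) x ≤ (n : ℝ) ^ k * MM b (k + 1) u x := fun j =>
      (ih (hu.pd hU _)).trans
        (mul_le_mul_of_nonneg_left (MM_pd_le hU k hu _ (c j) (hb j) (hc j) hx) (by positivity))
    calc MM b' (k + 1) u x = ∑ j, MM b' k (pd (b' j) u) x := rfl
      _ ≤ ∑ j : Fin n, (n : ℝ) ^ k * MM b (k + 1) u x := Finset.sum_le_sum fun j _ => h1 j
      _ = (n : ℝ) ^ (k + 1) * MM b (k + 1) u x := by simp; ring

lemma TT_normal (hU : IsOpen U) (i0 : Fin n) (k : ℕ) {u f : Eu n → ℝ} (hu : Sm U u)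
    (hf : EqOn (fun x => ∑ j, pd (b j) (pd (b j) u) x) f U) {x : Eu n} (hx : x ∈ U) :
    TT b i0 k (pd (b i0) u) x ≤ MM b k f x + 2 * TT b i0 (k + 1) u x := by
  induction k generalizing u f with
  | zero =>
    have h1 : f x = pd (b i0) (pd (b i0) u) x
        + ∑ j ∈ Finset.univ.erase i0, pd (b j) (pd (b j) u) x := by
      rw [← hf hx]; exact (Finset.add_sum_erase _ _ (Finset.mem_univ i0)).symm
    have h2 : ∀ j, |pd (b j) (pd (b j) u) x| ≤ TT b i0 0 (pd (b j) u) x := fun j =>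
      Finset.single_le_sum (f := fun l => |pd (b l) (pd (b j) u) x|)
        (fun _ _ => abs_nonneg _) (Finset.mem_univ j)
    have h3 : ∀ j, |pd (b j) (pd (b i0) u) x| ≤ TT b i0 0 (pd (b j) u) x := fun j => by
      rw [pd_comm hU hu _ _ hx]
      exact Finset.single_le_sum (f := fun l => |pd (b l) (pd (b j) u) x|)
        (fun _ _ => abs_nonneg _) (Finset.mem_univ i0)
    have h4 : TT b i0 0 (pd (b i0) u) x = |pd (b i0) (pd (b i0) u) x|
        + ∑ j ∈ Finset.univ.erase i0, |pd (b j) (pd (b i0) u) x| :=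
      (Finset.add_sum_erase _ (fun j => |pd (b j) (pd (b i0) u) x|) (Finset.mem_univ i0)).symm
    have h5 : |pd (b i0) (pd (b i0) u) x| ≤ |f x| +
        ∑ j ∈ Finset.univ.erase i0, |pd (b j) (pd (b j) u) x| := by
      have : pd (b i0) (pd (b i0) u) x = f x -
        ∑ j ∈ Finset.univ.erase i0, pd (b j) (pd (b j) u) x := by linarith
      rw [this]
      exact (abs_sub _ _).trans (add_le_add_right (Finset.abs_sum_le_sum_abs _ _) _)
    have h6 := Finset.sum_le_sum (s := Finset.univ.erase i0) fun j _ => h2 j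
    have h7 := Finset.sum_le_sum (s := Finset.univ.erase i0) fun j _ => h3 j
    have h8 : TT b i0 (0 + 1) u x = ∑ j ∈ Finset.univ.erase i0, TT b i0 0 (pd (b j) u) x := rfl
    have h9 : MM b 0 f x = |f x| := rfl
    linarith
  | succ k ih =>
    have h1 : ∀ j, TT b i0 k (pd (b j) (pd (b i0) u)) x ≤
        MM b k (pd (b j) f) x + 2 * TT b i0 (k + 1) (pd (b j) u) x := by
      intro j
      rw [TT_congr hU i0 k (pd_comm hU hu _ _) hx]
      refine ih (hu.pd hU _) ?_
      intro y hy
      rw [← pd_congr hU hf (b j) hy]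
      have := pd_fsum hU Finset.univ (fun _ => (1 : ℝ)) (fun l => pd (b l) (pd (b l) u))
        (fun i _ => (hu.pd hU _).pd hU _) (b j) hy
      simp only [one_mul] at this
      rw [this]
      refine Finset.sum_congr rfl fun l _ => ?_
      exact (pd_congr hU (pd_comm hU hu _ _) _ hy).trans (pd_comm hU (hu.pd hU _) _ _ hy)
    calc TT b i0 (k + 1) (pd (b i0) u) x
        = ∑ j ∈ Finset.univ.erase i0, TT b i0 k (pd (b j) (pd (b i0) u)) x := rfl
      _ ≤ ∑ j ∈ Finset.univ.erase i0,
          (MM b k (pd (b j) f) x + 2 * TT b i0 (k + 1) (pd (b j) u) x) :=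
          Finset.sum_le_sum fun j _ => h1 j
      _ = ∑ j ∈ Finset.univ.erase i0, MM b k (pd (b j) f) x
          + 2 * ∑ j ∈ Finset.univ.erase i0, TT b i0 (k + 1) (pd (b j) u) x := by
          rw [Finset.sum_add_distrib, Finset.mul_sum]
      _ ≤ MM b (k + 1) f x + 2 * TT b i0 (k + 1 + 1) u x := by
          refine add_le_add ?_ (le_of_eq rfl)
          exact Finset.sum_le_sum_of_subset_of_nonneg (Finset.erase_subset _ _)
            fun _ _ _ => MM_nonneg _ _ _

lemma lap_pd (hU : IsOpen U) {u f : Eu n → ℝ} (hu : Sm U u)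
    (hf : EqOn (fun x => ∑ j, pd (b j) (pd (b j) u) x) f U) (v : Eu n) :
    EqOn (fun x => ∑ j, pd (b j) (pd (b j) (pd v u)) x) (pd v f) U := by
  intro y hy
  rw [← pd_congr hU hf v hy]
  have := pd_fsum hU Finset.univ (fun _ => (1 : ℝ)) (fun l => pd (b l) (pd (b l) u))
    (fun i _ => (hu.pd hU _).pd hU _) v hy
  simp only [one_mul] at this
  rw [this]
  refine Finset.sum_congr rfl fun l _ => ?_
  exact (pd_congr hU (pd_comm hU hu _ _) _ hy).trans (pd_comm hU (hu.pd hU _) _ _ hy)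

lemma MM_le_TT (hU : IsOpen U) (i0 : Fin n) (k : ℕ) {u f : Eu n → ℝ} (hu : Sm U u)
    (hf : EqOn (fun x => ∑ j, pd (b j) (pd (b j) u) x) f U) {x : Eu n} (hx : x ∈ U) :
    MM b (k + 2) u x ≤ 3 ^ (k + 1) * (TT b i0 (k + 1) u x + MM b k f x) := by
  have split : ∀ (g : (Eu n → ℝ) → ℝ), ∑ j, g (pd (b j) u) = g (pd (b i0) u)
      + ∑ j ∈ Finset.univ.erase i0, g (pd (b j) u) := fun g =>
    (Finset.add_sum_erase _ (fun j => g (pd (b j) u)) (Finset.mem_univ i0)).symm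
  induction k generalizing u f with
  | zero =>
    have h1 : MM b (0 + 2) u x = ∑ j, TT b i0 0 (pd (b j) u) x := rfl
    have h2 := split (fun g => TT b i0 0 g x)
    have h3 := TT_normal hU i0 0 hu hf hx
    have h4 : TT b i0 (0 + 1) u x = ∑ j ∈ Finset.univ.erase i0, TT b i0 0 (pd (b j) u) x := rfl
    have := MM_nonneg (b := b) 0 f x
    norm_num at *
    linarith
  | succ k ih =>
    have h1 : ∀ j, MM b (k + 2) (pd (b j) u) x ≤ 3 ^ (k + 1) *
        (TT b i0 (k + 1) (pd (b j) u) x + MM b k (pd (b j) f) x) := fun j => by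
      refine ih (hu.pd hU _) (lap_pd hU hu hf (b j)) ?_
      intro g
      exact (Finset.add_sum_erase _ (fun l => g (pd (b l) (pd (b j) u))) (Finset.mem_univ i0)).symm
    have h2 := split (fun g => TT b i0 (k + 1) g x)
    have h3 := TT_normal hU i0 (k + 1) hu hf hx
    have h4 : TT b i0 (k + 1 + 1) u x
      = ∑ j ∈ Finset.univ.erase i0, TT b i0 (k + 1) (pd (b j) u) x := rfl
    have h5 : MM b (k + 1) f x = ∑ j, MM b k (pd (b j) f) x := rfl
    have h6 := MM_nonneg (b := b) (k + 1) f x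
    calc MM b (k + 1 + 2) u x = ∑ j, MM b (k + 2) (pd (b j) u) x := rfl
      _ ≤ ∑ j, 3 ^ (k + 1) * (TT b i0 (k + 1) (pd (b j) u) x + MM b k (pd (b j) f) x) :=
        Finset.sum_le_sum fun j _ => h1 j
      _ = 3 ^ (k + 1) * (∑ j, TT b i0 (k + 1) (pd (b j) u) x + MM b (k + 1) f x) := by
        rw [← Finset.mul_sum, Finset.sum_add_distrib, h5]
      _ ≤ 3 ^ (k + 1) * (3 * (TT b i0 (k + 1 + 1) u x + MM b (k + 1) f x)) := by
        gcongr
        linarith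
      _ = _ := by ring

end

lemma exists_trunc : ∃ (φ : ℝ → ℝ) (M : ℝ), 1 ≤ M ∧ ContDiff ℝ (⊤ : ℕ∞) φ ∧
    (∀ s, |s| ≤ 1 → φ s = 0) ∧ (∀ s, |s| < 1 → deriv φ s = 0) ∧ (∀ s, 0 ≤ deriv φ s) ∧
    (∀ s, deriv φ s ≤ M) ∧ (∀ s, φ s ^ 2 ≤ s ^ 2 * deriv φ s) ∧ (∀ s, φ s ^ 2 ≤ s ^ 2) ∧
    (∀ s, 2 ≤ |s| → deriv φ s = 1) := by
  set T := Real.smoothTransition with hT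
  have hTs : ContDiff ℝ (⊤ : ℕ∞) T := Real.smoothTransition.contDiff
  let φ : ℝ → ℝ := fun s => s * T (s ^ 2 - 1)
  have hφ : ContDiff ℝ (⊤ : ℕ∞) φ := by
    exact contDiff_id.mul (hTs.comp ((contDiff_id.pow 2).sub contDiff_const))
  have hder : ∀ s, deriv φ s = T (s ^ 2 - 1) + s * (deriv T (s ^ 2 - 1) * (2 * s)) := by
    intro s
    have h1 : HasDerivAt (fun s : ℝ => s ^ 2 - 1) (2 * s) s := by
      simpa using ((hasDerivAt_id s).pow 2).sub_const 1
    have h2 : HasDerivAt T (deriv T (s ^ 2 - 1)) (s ^ 2 - 1) :=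
      (hTs.differentiable (by simp) _).hasDerivAt
    have h4 : HasDerivAt (fun s => T (s ^ 2 - 1)) (deriv T (s ^ 2 - 1) * (2 * s)) s :=
      HasDerivAt.comp (h₂ := T) s h2 h1
    have h3 : HasDerivAt φ (1 * T (s ^ 2 - 1) + s * (deriv T (s ^ 2 - 1) * (2 * s))) s :=
      (hasDerivAt_id s).mul h4
    rw [h3.deriv]; ring
  have hTd : ∀ t, 0 ≤ deriv T t := fun t => Real.smoothTransition.monotone.deriv_nonneg
  have hge : ∀ s, T (s ^ 2 - 1) ≤ deriv φ s := by
    intro s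
    rw [hder]
    have := hTd (s ^ 2 - 1)
    nlinarith [mul_nonneg this (sq_nonneg s)]
  have h1 : ∀ s, 2 ≤ |s| → deriv φ s = 1 := by
    intro s hs
    have : φ =ᶠ[nhds s] id := by
      have : ∀ᶠ t in nhds s, (3/2 : ℝ) < |t| :=
        (continuous_abs.tendsto s).eventually (lt_mem_nhds (by linarith))
      filter_upwards [this] with t ht
      have : T (t ^ 2 - 1) = 1 := Real.smoothTransition.one_of_one_le (by
        rw [← sq_abs]; nlinarith)
      simp [φ, this]
    rw [this.deriv_eq]; simp
  have hcd : Continuous (deriv φ) := hφ.continuous_deriv (by simp)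
  obtain ⟨M, hM⟩ := (isCompact_Icc (a := (-2 : ℝ)) (b := 2)).bddAbove_image hcd.continuousOn
  have hsq : ∀ s, φ s ^ 2 = s ^ 2 * T (s ^ 2 - 1) ^ 2 := fun s => by simp [φ]; ring
  have hT0 : ∀ s, 0 ≤ T s := Real.smoothTransition.nonneg
  have hT1 : ∀ s, T s ≤ 1 := Real.smoothTransition.le_one
  refine ⟨φ, max M 1, le_max_right _ _, hφ, ?_, ?_, ?_, ?_, ?_, ?_, h1⟩
  · intro s hs
    have : T (s ^ 2 - 1) = 0 := Real.smoothTransition.zero_of_nonpos (by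
      rw [← sq_abs]; nlinarith [abs_nonneg s])
    simp [φ, this]
  · intro s hs
    have : φ =ᶠ[nhds s] fun _ => 0 := by
      have : ∀ᶠ t in nhds s, |t| < 1 :=
        (continuous_abs.tendsto s).eventually (gt_mem_nhds hs)
      filter_upwards [this] with t ht
      have : T (t ^ 2 - 1) = 0 := Real.smoothTransition.zero_of_nonpos (by
        rw [← sq_abs]; nlinarith [abs_nonneg t])
      simp [φ, this]
    rw [this.deriv_eq]; simp
  · exact fun s => (hT0 _).trans (hge s)
  · intro s
    by_cases hs : 2 ≤ |s|
    · rw [h1 s hs]; exact le_max_right _ _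
    · push Not at hs
      have := abs_lt.1 hs
      exact (hM ⟨s, ⟨this.1.le, this.2.le⟩, rfl⟩).trans (le_max_left _ _)
  · intro s
    rw [hsq]
    have h2 : T (s ^ 2 - 1) ^ 2 ≤ T (s ^ 2 - 1) := by
      nlinarith [hT0 (s ^ 2 - 1), hT1 (s ^ 2 - 1)]
    exact mul_le_mul_of_nonneg_left (h2.trans (hge s)) (sq_nonneg _)
  · intro s
    rw [hsq]
    have h2 : T (s ^ 2 - 1) ^ 2 ≤ 1 := by
      nlinarith [hT0 (s ^ 2 - 1), hT1 (s ^ 2 - 1)]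
    exact mul_le_of_le_one_right (sq_nonneg _) h2

section
variable {n : ℕ} {U : Set (Eu n)}

lemma ae_pd_zero (hU : IsOpen U) {w : Eu n → ℝ} (hw : Sm U w) (v : Eu n) :
    ∀ᵐ x : Eu n, x ∈ U → w x = 0 → pd v w x = 0 := by
  have hm : MeasurableSet (U ∩ w ⁻¹' {0} ∩ (U ∩ (pd v w) ⁻¹' {0}ᶜ)) := by
    apply MeasurableSet.inter
    · obtain ⟨s, hs, h⟩ := continuousOn_iff_isClosed.1 hw.continuousOn {0} isClosed_singleton
      rw [inter_comm U, h]
      exact hs.measurableSet.inter hU.measurableSet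
    · exact ((hw.pd hU v).continuousOn.isOpen_inter_preimage hU isOpen_compl_singleton).measurableSet
  have key := ae_mem_of_ae_add_linearMap_mem (LinearMap.toSpanSingleton ℝ (Eu n) v) volume volume
    hm.compl ?_
  · filter_upwards [key] with x hx hxU hx0
    by_contra hne
    exact hx ⟨⟨hxU, hx0⟩, hxU, hne⟩
  · intro y
    rw [ae_iff]
    set Z : Set ℝ := {t | ¬ y + (LinearMap.toSpanSingleton ℝ (Eu n) v) t ∈
      (U ∩ w ⁻¹' {0} ∩ (U ∩ (pd v w) ⁻¹' {0}ᶜ))ᶜ} with hZ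
    have hdisc : DiscreteTopology Z := by
      rw [discreteTopology_subtype_iff]
      intro t ht
      simp only [hZ, mem_ofPred_eq, mem_compl_iff, not_not] at ht
      obtain ⟨⟨h1, h2⟩, -, h3⟩ := ht
      have hd : HasDerivAt (fun t : ℝ => w (y + t • v)) (pd v w (y + t • v)) t := by
        have h5 := (hw.diffAt hU h1).hasFDerivAt
        have h6 : HasDerivAt (fun t : ℝ => y + t • v) v t := by
          simpa using ((hasDerivAt_id t).smul_const v).const_add y
        exact h5.comp_hasDerivAt t h6
      have := hd.eventually_ne (c := 0) h3
      rw [Filter.inf_principal_eq_bot]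
      filter_upwards [this] with s hs hsZ
      simp only [hZ, mem_ofPred_eq, mem_compl_iff, not_not] at hsZ
      exact hs hsZ.1.2
    have : Countable Z := TopologicalSpace.separableSpace_iff_countable.1 inferInstance
    exact (Set.countable_coe_iff.1 this).measure_zero _

/-- A function continuous on `U`, vanishing off a compact subset, is continuous, compactly supported
and integrable. -/
lemma cpt_cont (hU : IsOpen U) {h : Eu n → ℝ} {K : Set (Eu n)} (hK : IsCompact K) (hKU : K ⊆ U)
    (hc : ContinuousOn h U) (h0 : ∀ x, x ∉ K → h x = 0) : Continuous h ∧ HasCompactSupport h := by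
  refine ⟨?_, HasCompactSupport.intro hK h0⟩
  rw [continuous_iff_continuousAt]
  intro x
  by_cases hx : x ∈ U
  · exact hc.continuousAt (hU.mem_nhds hx)
  · have hxK : x ∈ Kᶜ := fun h => hx (hKU h)
    have : h =ᶠ[nhds x] fun _ => 0 :=
      Filter.eventuallyEq_of_mem (hK.isClosed.isOpen_compl.mem_nhds hxK) fun y hy => h0 y hy
    exact this.continuousAt

lemma cpt_int (hU : IsOpen U) {h : Eu n → ℝ} {K : Set (Eu n)} (hK : IsCompact K) (hKU : K ⊆ U)
    (hc : ContinuousOn h U) (h0 : ∀ x, x ∉ K → h x = 0) : Integrable h :=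
  let h := cpt_cont hU hK hKU hc h0
  h.1.integrable_of_hasCompactSupport h.2

lemma cpt_smooth (hU : IsOpen U) {h : Eu n → ℝ} {K : Set (Eu n)} (hK : IsCompact K) (hKU : K ⊆ U)
    (hc : Sm U h) (h0 : ∀ x, x ∉ K → h x = 0) :
    ContDiff ℝ (⊤ : ℕ∞) h ∧ HasCompactSupport h ∧ tsupport h ⊆ K := by
  refine ⟨?_, HasCompactSupport.intro hK h0, ?_⟩
  · rw [contDiff_iff_contDiffAt]
    intro x
    by_cases hx : x ∈ U
    · exact (hc x hx).contDiffAt (hU.mem_nhds hx)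
    · have hxK : x ∈ Kᶜ := fun h => hx (hKU h)
      have : h =ᶠ[nhds x] fun _ => 0 :=
        Filter.eventuallyEq_of_mem (hK.isClosed.isOpen_compl.mem_nhds hxK) fun y hy => h0 y hy
      exact contDiffAt_const.congr_of_eventuallyEq this
  · refine closure_minimal ?_ hK.isClosed
    intro x hx
    by_contra h
    exact hx (h0 x h)

/-- Sum of squares of derivatives along the frame `b`. -/
def gs (b : Fin n → Eu n) (u : Eu n → ℝ) (x : Eu n) : ℝ := ∑ j, pd (b j) u x ^ 2

lemma gs_nonneg (b : Fin n → Eu n) (u : Eu n → ℝ) (x : Eu n) : 0 ≤ gs b u x :=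
  Finset.sum_nonneg fun _ _ => sq_nonneg _

lemma gs_cont (hU : IsOpen U) (b : Fin n → Eu n) {u : Eu n → ℝ} (hu : Sm U u) :
    ContinuousOn (gs b u) U :=
  continuousOn_finsetSum _ fun j _ => (hu.pd hU (b j)).continuousOn.pow 2

lemma pw1 (z φ p q w d : ℝ) (hd : 0 ≤ d) (h : φ ^ 2 ≤ w ^ 2 * d) :
    -(z ^ 2 * d * q ^ 2 / 4 + 4 * (p ^ 2 * w ^ 2)) ≤ 2 * z * φ * p * q := by
  have hX : 0 ≤ z ^ 2 * d * q ^ 2 / 4 := by positivity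
  have hY : 0 ≤ 4 * (p ^ 2 * w ^ 2) := by positivity
  have h2 : (2 * z * φ * p * q) ^ 2 ≤ (z ^ 2 * d * q ^ 2 / 4 + 4 * (p ^ 2 * w ^ 2)) ^ 2 := by
    have : (z * p * q) ^ 2 * φ ^ 2 ≤ (z * p * q) ^ 2 * (w ^ 2 * d) :=
      mul_le_mul_of_nonneg_left h (sq_nonneg _)
    nlinarith [sq_nonneg (z ^ 2 * d * q ^ 2 / 4 - 4 * (p ^ 2 * w ^ 2))]
  exact (abs_le.1 (abs_le_of_sq_le_sq h2 (by positivity))).1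

lemma pw2 (z φ p q w d M : ℝ) (hz : z ^ 2 ≤ 1) (hd : 0 ≤ d) (hM : d ≤ M) (h : φ ^ 2 ≤ w ^ 2) :
    (2 * z * φ * p + z ^ 2 * d * q) ^ 2 ≤ 8 * (p ^ 2 * w ^ 2) + 2 * M * (z ^ 2 * d * q ^ 2) := by
  have h1 : (2 * z * φ * p + z ^ 2 * d * q) ^ 2 ≤
      2 * (2 * z * φ * p) ^ 2 + 2 * (z ^ 2 * d * q) ^ 2 := by
    nlinarith [sq_nonneg (2 * z * φ * p - z ^ 2 * d * q)]
  have h2 : (2 * z * φ * p) ^ 2 ≤ 4 * (p ^ 2 * w ^ 2) := by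
    have : z ^ 2 * φ ^ 2 ≤ 1 * w ^ 2 := mul_le_mul hz h (sq_nonneg _) (by norm_num)
    nlinarith [mul_le_mul_of_nonneg_left this (sq_nonneg p)]
  have h3 : (z ^ 2 * d * q) ^ 2 ≤ M * (z ^ 2 * d * q ^ 2) := by
    have e1 : z ^ 2 * d ≤ 1 * M := mul_le_mul hz hM hd (by norm_num)
    have e2 : 0 ≤ z ^ 2 * d * q ^ 2 := by positivity
    nlinarith [mul_le_mul_of_nonneg_right e1 e2]
  linarith

lemma energy : ∃ C : ℝ, 0 < C ∧ ∀ {n : ℕ} {U : Set (Eu n)} (_ : IsOpen U) (b : Fin n → Eu n)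
    {w ζ : Eu n → ℝ} (_ : Sm U w) (_ : ContDiff ℝ (⊤ : ℕ∞) ζ) (_ : ∀ x, 0 ≤ ζ x) (_ : ∀ x, ζ x ≤ 1)
    (_ : ∀ ε > 0, IsCompact {x | x ∈ U ∧ ε ≤ |w x| ∧ x ∈ tsupport ζ}) (K : ℝ) (_ : 0 ≤ K)
    (_ : ∀ Ψ : Eu n → ℝ, ContDiff ℝ (⊤ : ℕ∞) Ψ → HasCompactSupport Ψ → tsupport Ψ ⊆ U →
      |∫ x, Ψ x * ∑ j, pd (b j) (pd (b j) w) x| ≤ K * √(∫ x, gs b Ψ x)),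
    ∫⁻ x in U, ENNReal.ofReal (ζ x ^ 2 * gs b w x) ≤
      ENNReal.ofReal C * ((∫⁻ x in U, ENNReal.ofReal (gs b ζ x * w x ^ 2)) + ENNReal.ofReal (K ^ 2)) := by
  obtain ⟨φ, M, hM1, hφ, hφ0, hφd0, hφd, hφM, hφ2, hφ2', hφ1⟩ := exists_trunc
  refine ⟨10 + 4 * M, by linarith, ?_⟩
  intro n U hU b w ζ hw hζ hζ0 hζ1 hcomp K hK0 hK
  by_cases hB : ∫⁻ x in U, ENNReal.ofReal (gs b ζ x * w x ^ 2) = ⊤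
  · rw [hB, top_add, ENNReal.mul_top (by simp; linarith)]; exact le_top
  have hζU : Sm U ζ := hζ.contDiffOn
  have hbc : ContinuousOn (fun x => gs b ζ x * w x ^ 2) U :=
    (gs_cont hU b hζU).mul (hw.continuousOn.pow 2)
  have hbnn : ∀ x, 0 ≤ gs b ζ x * w x ^ 2 := fun x => mul_nonneg (gs_nonneg _ _ _) (sq_nonneg _)
  have hbI : IntegrableOn (fun x => gs b ζ x * w x ^ 2) U := by
    refine ⟨hbc.aestronglyMeasurable hU.measurableSet, ?_⟩
    rw [hasFiniteIntegral_iff_ofReal (Filter.Eventually.of_forall hbnn)]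
    exact lt_top_iff_ne_top.2 hB
  set B := ∫ x in U, gs b ζ x * w x ^ 2 with hBdef
  have hBl : ∫⁻ x in U, ENNReal.ofReal (gs b ζ x * w x ^ 2) = ENNReal.ofReal B :=
    (ofReal_integral_eq_lintegral_ofReal hbI (Filter.Eventually.of_forall hbnn)).symm
  have hB0 : 0 ≤ B := integral_nonneg hbnn
  -- the main step
  have main : ∀ ε > 0, ∫⁻ x in U, ENNReal.ofReal (ζ x ^ 2 * deriv φ (w x / ε) * gs b w x) ≤
      ENNReal.ofReal (10 * B + 4 * M * K ^ 2) := by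
    intro ε hε
    set Kε := {x | x ∈ U ∧ ε ≤ |w x| ∧ x ∈ tsupport ζ} with hKε
    have hKc := hcomp ε hε
    have hKU : Kε ⊆ U := fun x hx => hx.1
    have offK : ∀ x ∈ U, x ∉ Kε → |w x / ε| < 1 ∨ (ζ x = 0 ∧ gs b ζ x = 0) := by
      intro x hx hxK
      by_cases h : ε ≤ |w x|
      · right
        have hxs : x ∉ tsupport ζ := fun hh => hxK ⟨hx, h, hh⟩
        refine ⟨image_eq_zero_of_notMem_tsupport hxs, ?_⟩
        have : fderiv ℝ ζ x = 0 := by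
          apply image_eq_zero_of_notMem_tsupport
          exact fun hh => hxs (tsupport_fderiv_subset ℝ hh)
        simp [gs, pd, this]
      · left
        rw [abs_div, abs_of_pos hε, div_lt_one hε]
        exact not_le.1 h
    have hφw : Sm U (fun x => ε * φ (w x / ε)) :=
      contDiffOn_const.mul (hφ.comp_contDiffOn (hw.div_const ε))
    set Ψ : Eu n → ℝ := U.indicator (fun x => ζ x ^ 2 * (ε * φ (w x / ε))) with hΨ
    have hΨ0 : ∀ x, x ∉ Kε → Ψ x = 0 := by
      intro x hx
      by_cases hxU : x ∈ U
      · rw [hΨ, indicator_of_mem hxU]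
        rcases offK x hxU hx with h | h
        · rw [hφ0 _ h.le]; ring
        · rw [h.1]; ring
      · rw [hΨ, indicator_of_notMem hxU]
    have hΨS : Sm U Ψ := ((hζU.pow 2).mul hφw).congr fun x hx => by
      rw [hΨ, indicator_of_mem hx]
    obtain ⟨hΨc, hΨs, hΨt⟩ := cpt_smooth hU hKc hKU hΨS hΨ0
    have hpdΨ0 : ∀ v x, x ∉ Kε → pd v Ψ x = 0 := by
      intro v x hx
      have : fderiv ℝ Ψ x = 0 := by
        apply image_eq_zero_of_notMem_tsupport
        exact fun hh => hx (hΨt (tsupport_fderiv_subset ℝ hh))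
      simp [pd, this]
    have hpdΨ : ∀ v, ∀ x ∈ U, pd v Ψ x = 2 * ζ x * (ε * φ (w x / ε)) * pd v ζ x
        + ζ x ^ 2 * deriv φ (w x / ε) * pd v w x := by
      intro v x hx
      have e1 : pd v Ψ x = pd v (fun x => ζ x ^ 2 * (ε * φ (w x / ε))) x :=
        pd_congr hU (fun y hy => by rw [hΨ, indicator_of_mem hy]) v hx
      rw [e1]
      have d1 := ((hζU.diffAt hU hx).hasFDerivAt).pow 2
      have d2 : HasFDerivAt (fun x => φ (w x / ε)) (deriv φ (w x / ε) • (ε⁻¹ • fderiv ℝ w x)) x := by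
        have hh : HasFDerivAt (fun x => w x / ε) (ε⁻¹ • fderiv ℝ w x) x := by
          simpa [div_eq_mul_inv] using ((hw.diffAt hU hx).hasFDerivAt).mul_const ε⁻¹
        exact ((hφ.differentiable (by simp) (w x / ε)).hasDerivAt).comp_hasFDerivAt x hh
      have d3 := d1.mul (d2.const_mul ε)
      unfold pd
      have d4 := d3.fderiv
      simp only [Pi.mul_def, Pi.pow_apply] at d4
      rw [d4]
      simp
      field_simp
      ring
    -- integration by parts
    have hgreen : ∫ x, Ψ x * ∑ j, pd (b j) (pd (b j) w) x =
        - ∫ x, ∑ j, pd (b j) Ψ x * pd (b j) w x := by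
      have i1 : ∀ j, Integrable (fun x => Ψ x * pd (b j) (pd (b j) w) x) := fun j =>
        cpt_int hU hKc hKU (hΨS.continuousOn.mul ((hw.pd hU _).pd hU _).continuousOn)
          fun x hx => by rw [hΨ0 x hx, zero_mul]
      have i2 : ∀ j, Integrable (fun x => pd (b j) Ψ x * pd (b j) w x) := fun j =>
        cpt_int hU hKc hKU ((hΨS.pd hU _).continuousOn.mul (hw.pd hU _).continuousOn)
          fun x hx => by rw [hpdΨ0 _ x hx, zero_mul]
      have i3 : ∀ j, Integrable (fun x => Ψ x * pd (b j) w x) := fun j =>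
        cpt_int hU hKc hKU (hΨS.continuousOn.mul (hw.pd hU _).continuousOn)
          fun x hx => by rw [hΨ0 x hx, zero_mul]
      simp_rw [Finset.mul_sum]
      rw [integral_finsetSum _ fun j _ => i1 j, integral_finsetSum _ fun j _ => i2 j,
        ← Finset.sum_neg_distrib]
      refine Finset.sum_congr rfl fun j _ => ?_
      refine integral_mul_fderiv_eq_neg_fderiv_mul_of_integrable (i2 j) (i1 j) (i3 j) ?_ ?_
      · exact fun x _ => hΨc.differentiable (by simp) x
      · exact fun x hx => (hw.pd hU _).diffAt hU (hKU (hΨt hx))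
    set a : Eu n → ℝ := U.indicator (fun x => ζ x ^ 2 * deriv φ (w x / ε) * gs b w x) with ha
    have hdc : ContinuousOn (fun x => deriv φ (w x / ε)) U :=
      (hφ.continuous_deriv (by simp)).comp_continuousOn (hw.continuousOn.div_const ε)
    have haI : Integrable a := by
      refine cpt_int hU hKc hKU ?_ ?_
      · refine ((((hζU.continuousOn.pow 2).mul hdc).mul (gs_cont hU b hw))).congr ?_
        intro x hx; rw [ha, indicator_of_mem hx]; rfl
      · intro x hx
        by_cases hxU : x ∈ U
        · rw [ha, indicator_of_mem hxU]
          rcases offK x hxU hx with h | h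
          · rw [hφd0 _ h]; ring
          · rw [h.1]; ring
        · rw [ha, indicator_of_notMem hxU]
    have ha0 : ∀ x, 0 ≤ a x := fun x => indicator_nonneg
      (fun y _ => mul_nonneg (mul_nonneg (sq_nonneg _) (hφd _)) (gs_nonneg _ _ _)) x
    set b' : Eu n → ℝ := U.indicator (fun x => gs b ζ x * w x ^ 2) with hb'
    have hb'I : Integrable b' := hbI.integrable_indicator hU.measurableSet
    have hb'B : ∫ x, b' x = B := integral_indicator hU.measurableSet
    set A := ∫ x, a x with hA
    have hA0 : 0 ≤ A := integral_nonneg ha0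
    have φsq : ∀ x, (ε * φ (w x / ε)) ^ 2 ≤ w x ^ 2 * deriv φ (w x / ε) := by
      intro x
      have := mul_le_mul_of_nonneg_left (hφ2 (w x / ε)) (sq_nonneg ε)
      calc (ε * φ (w x / ε)) ^ 2 = ε ^ 2 * φ (w x / ε) ^ 2 := by ring
        _ ≤ ε ^ 2 * ((w x / ε) ^ 2 * deriv φ (w x / ε)) := this
        _ = _ := by field_simp
    have φsq' : ∀ x, (ε * φ (w x / ε)) ^ 2 ≤ w x ^ 2 := by
      intro x
      have := mul_le_mul_of_nonneg_left (hφ2' (w x / ε)) (sq_nonneg ε)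
      calc (ε * φ (w x / ε)) ^ 2 = ε ^ 2 * φ (w x / ε) ^ 2 := by ring
        _ ≤ ε ^ 2 * ((w x / ε) ^ 2) := this
        _ = _ := by field_simp
    have g1 : ∀ x, a x - (a x / 4 + 4 * b' x) ≤ ∑ j, pd (b j) Ψ x * pd (b j) w x := by
      intro x
      by_cases hx : x ∈ U
      · rw [ha, hb', indicator_of_mem hx, indicator_of_mem hx]
        have : ∀ j, ζ x ^ 2 * deriv φ (w x / ε) * pd (b j) w x ^ 2 -
            (ζ x ^ 2 * deriv φ (w x / ε) * pd (b j) w x ^ 2 / 4 + 4 * (pd (b j) ζ x ^ 2 * w x ^ 2))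
            ≤ pd (b j) Ψ x * pd (b j) w x := by
          intro j
          rw [hpdΨ _ x hx]
          have := pw1 (ζ x) (ε * φ (w x / ε)) (pd (b j) ζ x) (pd (b j) w x) (w x)
            (deriv φ (w x / ε)) (hφd _) (φsq x)
          nlinarith
        refine le_trans (le_of_eq ?_) (Finset.sum_le_sum fun j _ => this j)
        simp only [gs, Finset.sum_sub_distrib, Finset.sum_add_distrib, Finset.mul_sum,
          Finset.sum_mul, Finset.sum_div]
      · have e : ∀ j, pd (b j) Ψ x = 0 := fun j => hpdΨ0 _ x fun h => hx (hKU h)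
        simp [ha, hb', hx, e]
    have g2 : ∀ x, gs b Ψ x ≤ 8 * b' x + 2 * M * a x := by
      intro x
      by_cases hx : x ∈ U
      · rw [ha, hb', indicator_of_mem hx, indicator_of_mem hx]
        have : ∀ j, pd (b j) Ψ x ^ 2 ≤ 8 * (pd (b j) ζ x ^ 2 * w x ^ 2) +
            2 * M * (ζ x ^ 2 * deriv φ (w x / ε) * pd (b j) w x ^ 2) := by
          intro j
          rw [hpdΨ _ x hx]
          exact pw2 _ _ _ _ _ _ _ (pow_le_one₀ (hζ0 x) (hζ1 x)) (hφd _) (hφM _) (φsq' x)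
        refine le_trans (Finset.sum_le_sum fun j _ => this j) (le_of_eq ?_)
        simp only [gs, Finset.sum_add_distrib, Finset.mul_sum, Finset.sum_mul]
      · have e : ∀ j, pd (b j) Ψ x = 0 := fun j => hpdΨ0 _ x fun h => hx (hKU h)
        simp [ha, hb', hx, e, gs]
    have i4 : Integrable (fun x => ∑ j, pd (b j) Ψ x * pd (b j) w x) :=
      cpt_int hU hKc hKU (continuousOn_finsetSum _ fun j _ =>
        (hΨS.pd hU _).continuousOn.mul (hw.pd hU _).continuousOn)
        fun x hx => by simp [hpdΨ0 _ x hx]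
    have i5 : Integrable (gs b Ψ) := cpt_int hU hKc hKU (gs_cont hU b hΨS)
        fun x hx => by simp [gs, hpdΨ0 _ x hx]
    have g3 : A - (A / 4 + 4 * B) ≤ ∫ x, ∑ j, pd (b j) Ψ x * pd (b j) w x := by
      have := integral_mono (haI.sub ((haI.div_const 4).add (hb'I.const_mul 4))) i4 g1
      refine le_trans (le_of_eq ?_) this
      rw [integral_sub' haI ((haI.div_const 4).add (hb'I.const_mul 4)),
        integral_add' (haI.div_const 4) (hb'I.const_mul 4), integral_div, integral_const_mul, hb'B]
    have g4 : ∫ x, gs b Ψ x ≤ 8 * B + 2 * M * A := by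
      have := integral_mono i5 ((hb'I.const_mul 8).add (haI.const_mul (2 * M))) g2
      refine this.trans (le_of_eq ?_)
      rw [integral_add' (hb'I.const_mul 8) (haI.const_mul (2 * M)), integral_const_mul,
        integral_const_mul, hb'B]
    have g5 := hK Ψ hΨc hΨs (hΨt.trans hKU)
    rw [hgreen, abs_neg] at g5
    set X := ∫ x, gs b Ψ x with hX
    have hX0 : 0 ≤ X := integral_nonneg fun x => gs_nonneg _ _ _
    have g6 : K * √X ≤ 2 * M * K ^ 2 + X / (8 * M) := by
      have hs := Real.sq_sqrt hX0
      have hM8 : 0 < 8 * M := by linarith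
      have : X / (8 * M) = (√X) ^ 2 / (8 * M) := by rw [hs]
      rw [this, ← sub_nonneg]
      have : 2 * M * K ^ 2 + √X ^ 2 / (8 * M) - K * √X = (4 * M * K - √X) ^ 2 / (8 * M) := by
        field_simp; ring
      rw [this]; positivity
    have g7 : X / (8 * M) ≤ B + A / 4 := by
      rw [div_le_iff₀ (by linarith)]
      nlinarith
    have g8 := le_abs_self (∫ x, ∑ j, pd (b j) Ψ x * pd (b j) w x)
    have g9 : A ≤ 10 * B + 4 * M * K ^ 2 := by nlinarith
    calc ∫⁻ x in U, ENNReal.ofReal (ζ x ^ 2 * deriv φ (w x / ε) * gs b w x)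
        = ∫⁻ x, ENNReal.ofReal (a x) := by
          rw [← lintegral_indicator hU.measurableSet]
          congr 1; funext x
          by_cases hx : x ∈ U <;> simp [ha, hx]
      _ = ENNReal.ofReal A :=
        (ofReal_integral_eq_lintegral_ofReal haI (Filter.Eventually.of_forall ha0)).symm
      _ ≤ _ := ENNReal.ofReal_le_ofReal g9
  -- Fatou
  have hfin : ENNReal.ofReal (10 * B + 4 * M * K ^ 2) ≤ ENNReal.ofReal (10 + 4 * M) *
      ((∫⁻ x in U, ENNReal.ofReal (gs b ζ x * w x ^ 2)) + ENNReal.ofReal (K ^ 2)) := by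
    rw [hBl, ← ENNReal.ofReal_add hB0 (sq_nonneg _), ← ENNReal.ofReal_mul (by linarith)]
    apply ENNReal.ofReal_le_ofReal
    nlinarith [sq_nonneg K, mul_nonneg (by linarith : 0 ≤ M) hB0]
  refine le_trans ?_ hfin
  have hae : ∀ᵐ x ∂(volume.restrict U), ∀ j, w x = 0 → pd (b j) w x = 0 := by
    rw [ae_restrict_iff' hU.measurableSet]
    have := ae_all_iff.2 fun j => ae_pd_zero hU hw (b j)
    filter_upwards [this] with x hx hxU j
    exact hx j hxU
  have hlim : ∀ᵐ x ∂(volume.restrict U), ENNReal.ofReal (ζ x ^ 2 * gs b w x) ≤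
      Filter.liminf (fun m : ℕ => ENNReal.ofReal
        (ζ x ^ 2 * deriv φ (w x / (1 / ((m : ℝ) + 1))) * gs b w x)) Filter.atTop := by
    filter_upwards [hae] with x hx
    by_cases hw0 : w x = 0
    · have : gs b w x = 0 := by simp [gs, hx _ hw0]
      simp [this]
    · refine le_of_eq (Filter.Tendsto.liminf_eq ?_).symm
      refine tendsto_const_nhds.congr' ?_
      obtain ⟨N, hN⟩ := exists_nat_ge (2 / |w x|)
      filter_upwards [Filter.eventually_ge_atTop N] with m hm
      rw [hφ1, mul_one]
      have hp : 0 < |w x| := abs_pos.2 hw0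
      rw [div_div_eq_mul_div, div_one, abs_mul]
      have h1 : 2 ≤ (N : ℝ) * |w x| := (div_le_iff₀ hp).1 hN
      have h2 : (N : ℝ) ≤ m := by exact_mod_cast hm
      have h3 : |(m : ℝ) + 1| = m + 1 := abs_of_nonneg (by positivity)
      rw [h3]; nlinarith
  refine (lintegral_mono_ae hlim).trans ?_
  refine (lintegral_liminf_le' ?_).trans ?_
  · intro m
    refine AEMeasurable.ennreal_ofReal ?_
    have hdc : ContinuousOn (fun x => deriv φ (w x / (1 / ((m : ℝ) + 1)))) U :=
      (hφ.continuous_deriv (by simp)).comp_continuousOn (hw.continuousOn.div_const _)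
    exact (((hζU.continuousOn.pow 2).mul hdc).mul (gs_cont hU b hw)).aemeasurable hU.measurableSet
  · refine Filter.liminf_le_of_le (by isBoundedDefault) ?_
    intro c hc
    obtain ⟨m, hm⟩ := hc.exists
    exact hm.trans (main _ (by positivity))
end

lemma ofReal_sq_eq (x : ℝ) : ENNReal.ofReal (x ^ 2) = ‖x‖ₑ ^ 2 := by
  rw [Real.enorm_eq_ofReal_abs, ← ENNReal.ofReal_pow (abs_nonneg _), sq_abs]

lemma cs_sq {α : Type*} [MeasurableSpace α] (μ : Measure α) {F G : α → ℝ}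
    (hF : AEMeasurable F μ) (hG : AEMeasurable G μ) :
    ENNReal.ofReal ((∫ x, F x * G x ∂μ) ^ 2) ≤
      (∫⁻ x, ENNReal.ofReal (F x ^ 2) ∂μ) * ∫⁻ x, ENNReal.ofReal (G x ^ 2) ∂μ := by
  have h1 : ‖∫ x, F x * G x ∂μ‖ₑ ≤ (∫⁻ x, ENNReal.ofReal (F x ^ 2) ∂μ) ^ (1 / 2 : ℝ) *
      (∫⁻ x, ENNReal.ofReal (G x ^ 2) ∂μ) ^ (1 / 2 : ℝ) := by
    refine (enorm_integral_le_lintegral_enorm _).trans ?_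
    have := ENNReal.lintegral_mul_le_Lp_mul_Lq μ Real.HolderConjugate.two_two hF.enorm hG.enorm
    simp only [ofReal_sq_eq]
    simpa [enorm_mul] using this
  rw [ofReal_sq_eq]
  calc ‖∫ x, F x * G x ∂μ‖ₑ ^ 2 ≤ _ := pow_le_pow_left' h1 2
    _ = _ := by
      rw [mul_pow]
      simp only [← ENNReal.rpow_natCast, ← ENNReal.rpow_mul]
      simp

lemma abs_le_of_ofReal_sq {a A B : ℝ} (hA : 0 ≤ A) (hB : 0 ≤ B)
    (h : ENNReal.ofReal (a ^ 2) ≤ ENNReal.ofReal (A ^ 2) * ENNReal.ofReal (B ^ 2)) :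
    |a| ≤ A * B := by
  rw [← ENNReal.ofReal_mul (sq_nonneg _), ENNReal.ofReal_le_ofReal_iff (by positivity)] at h
  exact abs_le_of_sq_le_sq (by nlinarith) (by positivity)

section
variable {n : ℕ}

lemma meas_ind {T : Set (Eu n)} (hT : IsOpen T) {F : Eu n → ℝ} (hF : ContinuousOn F T) :
    Measurable (T.indicator fun x => ENNReal.ofReal (F x)) := by
  classical
  rw [← Set.piecewise_eq_indicator]
  exact ContinuousOn.measurable_piecewise (ENNReal.continuous_ofReal.comp_continuousOn hF)
    continuousOn_const hT.measurableSet

lemma hasDerivAt_line {T : Set (Eu n)} (hT : IsOpen T) {g : Eu n → ℝ} (hg : Sm T g) (v x : Eu n)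
    (t : ℝ) (h : x + t • v ∈ T) :
    HasDerivAt (fun t : ℝ => g (x + t • v)) (pd v g (x + t • v)) t := by
  have h5 := (hg.diffAt hT h).hasFDerivAt
  have h6 : HasDerivAt (fun t : ℝ => x + t • v) v t := by
    simpa using ((hasDerivAt_id t).smul_const v).const_add x
  exact h5.comp_hasDerivAt t h6

lemma dq_int {S T : Set (Eu n)} (hT : IsOpen T) (hS : MeasurableSet S) {g : Eu n → ℝ}
    (hg : Sm T g) {h : ℝ} (hh : 0 < h) (v : Eu n)
    (hST : ∀ x ∈ S, ∀ t ∈ Icc (0 : ℝ) h, x + t • v ∈ T) :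
    ∫⁻ x in S, ENNReal.ofReal (((g (x + h • v) - g x) / h) ^ 2) ≤
      ∫⁻ x in T, ENNReal.ofReal (pd v g x ^ 2) := by
  set Φ : Eu n → ℝ≥0∞ := T.indicator fun x => ENNReal.ofReal (pd v g x ^ 2) with hΦ
  have hΦm : Measurable Φ := meas_ind hT ((hg.pd hT v).continuousOn.pow 2)
  have hpt : ∀ x ∈ S, ENNReal.ofReal (((g (x + h • v) - g x) / h) ^ 2) ≤
      ENNReal.ofReal h⁻¹ * ∫⁻ t in Icc (0 : ℝ) h, Φ (x + t • v) := by
    intro x hx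
    have hc : ContinuousOn (fun t : ℝ => pd v g (x + t • v)) (Icc 0 h) := by
      refine (hg.pd hT v).continuousOn.comp (by fun_prop) fun t ht => hST x hx t ht
    have e1 : ∫ t in (0 : ℝ)..h, pd v g (x + t • v) = g (x + h • v) - g x := by
      have := intervalIntegral.integral_eq_sub_of_hasDerivAt (a := 0) (b := h)
        (f := fun t : ℝ => g (x + t • v)) (f' := fun t => pd v g (x + t • v)) ?_ ?_
      · simpa using this
      · intro t ht
        rw [uIcc_of_le hh.le] at ht
        exact hasDerivAt_line hT hg v x t (hST x hx t ht)
      · apply ContinuousOn.intervalIntegrable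
        rwa [uIcc_of_le hh.le]
    rw [intervalIntegral.integral_of_le hh.le, ← integral_Icc_eq_integral_Ioc] at e1
    have e2 := cs_sq (volume.restrict (Icc (0 : ℝ) h)) (F := fun _ => (1 : ℝ))
      (G := fun t => pd v g (x + t • v)) aemeasurable_const (hc.aemeasurable measurableSet_Icc)
    simp only [one_mul, one_pow, ENNReal.ofReal_one, lintegral_const, Measure.restrict_apply_univ,
      Real.volume_Icc, sub_zero, e1] at e2
    rw [div_pow, div_eq_inv_mul, ENNReal.ofReal_mul (by positivity)]
    refine (mul_le_mul_right e2 _).trans (le_of_eq ?_)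
    rw [← mul_assoc, ← ENNReal.ofReal_mul (by positivity)]
    congr 1
    · congr 1; field_simp
    · refine setLIntegral_congr_fun measurableSet_Icc fun t ht => ?_
      simp only [hΦ]
      rw [indicator_of_mem (hST x hx t ht)]
  calc ∫⁻ x in S, ENNReal.ofReal (((g (x + h • v) - g x) / h) ^ 2)
      ≤ ∫⁻ x in S, ENNReal.ofReal h⁻¹ * ∫⁻ t in Icc (0 : ℝ) h, Φ (x + t • v) :=
        setLIntegral_mono' hS hpt
    _ ≤ ∫⁻ x, ENNReal.ofReal h⁻¹ * ∫⁻ t in Icc (0 : ℝ) h, Φ (x + t • v) :=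
        setLIntegral_le_lintegral _ _
    _ = ENNReal.ofReal h⁻¹ * ∫⁻ x, ∫⁻ t in Icc (0 : ℝ) h, Φ (x + t • v) :=
        lintegral_const_mul' _ _ ENNReal.ofReal_ne_top
    _ = ENNReal.ofReal h⁻¹ * ∫⁻ t in Icc (0 : ℝ) h, ∫⁻ x, Φ (x + t • v) := by
        rw [lintegral_lintegral_swap]
        exact (hΦm.comp (by fun_prop : Measurable fun p : Eu n × ℝ => p.1 + p.2 • v)).aemeasurable
    _ = ENNReal.ofReal h⁻¹ * ∫⁻ t in Icc (0 : ℝ) h, ∫⁻ x, Φ x := by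
        congr 1
        refine lintegral_congr fun t => lintegral_add_right_eq_self _ _
    _ = ∫⁻ x, Φ x := by
        rw [lintegral_const, Measure.restrict_apply_univ, Real.volume_Icc, sub_zero,
          mul_comm (∫⁻ x, Φ x), ← mul_assoc, ← ENNReal.ofReal_mul (by positivity),
          inv_mul_cancel₀ hh.ne', ENNReal.ofReal_one, one_mul]
    _ = _ := lintegral_indicator hT.measurableSet _

/-- Half ball. -/
def HB (ν : Eu n) (c : ℝ) (y : Eu n) (ρ : ℝ) : Set (Eu n) := {x | c < ⟪ν, x⟫} ∩ ball y ρ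

lemma HB_open (ν : Eu n) (c : ℝ) (y : Eu n) (ρ : ℝ) : IsOpen (HB ν c y ρ) :=
  (isOpen_lt continuous_const (by fun_prop)).inter isOpen_ball

lemma HB_mono (ν : Eu n) (c : ℝ) (y : Eu n) {ρ ρ' : ℝ} (h : ρ ≤ ρ') : HB ν c y ρ ⊆ HB ν c y ρ' :=
  inter_subset_inter_right _ (ball_subset_ball h)

lemma ball_shift {v x y : Eu n} (hv : ‖v‖ ≤ 1) {ρ h t : ℝ} (ht : t ∈ Icc 0 h) (hx : x ∈ ball y ρ) :
    x + t • v ∈ ball y (ρ + h) := by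
  rw [mem_ball, dist_eq_norm] at *
  have : x + t • v - y = (x - y) + t • v := by abel
  rw [this]
  refine (norm_add_le _ _).trans_lt ?_
  rw [norm_smul, Real.norm_of_nonneg ht.1]
  nlinarith [ht.1, ht.2, norm_nonneg v]

/-- Tangential unit vector. -/
def Tan (ν v : Eu n) : Prop := ‖v‖ ≤ 1 ∧ ⟪ν, v⟫ = 0

lemma inner_shift {ν v : Eu n} (hv : Tan ν v) (x : Eu n) (t : ℝ) : ⟪ν, x + t • v⟫ = ⟪ν, x⟫ := by
  rw [inner_add_right, inner_smul_right, hv.2, mul_zero, add_zero]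

lemma HB_shift {ν : Eu n} {c : ℝ} {y v x : Eu n} (hv : Tan ν v) {ρ h t : ℝ} (ht : t ∈ Icc 0 h)
    (hx : x ∈ HB ν c y ρ) : x + t • v ∈ HB ν c y (ρ + h) :=
  ⟨by simpa only [mem_ofPred_eq, inner_shift hv] using hx.1, ball_shift hv.1 ht hx.2⟩

/-- Iterated difference quotient. -/
def Dq (h : ℝ) : List (Eu n) → (Eu n → ℝ) → Eu n → ℝ
  | [], g => g
  | v :: vs, g => fun x => (Dq h vs g (x + h • v) - Dq h vs g x) / h

/-- Iterated directional derivative. -/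
def ipd : List (Eu n) → (Eu n → ℝ) → Eu n → ℝ
  | [], g => g
  | v :: vs, g => ipd vs (pd v g)

variable {ν : Eu n} {c : ℝ} {y : Eu n} {h : ℝ}

lemma Dq_sm (hh : 0 ≤ h) (vs : List (Eu n)) (hvs : ∀ v ∈ vs, Tan ν v) {g : Eu n → ℝ} {ρ : ℝ}
    (hg : Sm (HB ν c y (ρ + vs.length * h)) g) : Sm (HB ν c y ρ) (Dq h vs g) := by
  induction vs generalizing ρ with
  | nil => simpa [Dq] using hg
  | cons v vs ih =>
    have h1 : Sm (HB ν c y (ρ + h)) (Dq h vs g) := by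
      apply ih (fun w hw => hvs w (List.mem_cons_of_mem _ hw))
      convert hg using 2; push_cast [List.length_cons]; ring
    have hv := hvs v List.mem_cons_self
    have h2 : Sm (HB ν c y ρ) (fun x => Dq h vs g (x + h • v)) :=
      h1.comp (by fun_prop) fun x hx => HB_shift hv ⟨hh, le_rfl⟩ hx
    exact (h2.sub (h1.mono (HB_mono _ _ _ (by linarith)))).div_const h

lemma pd_Dq (hh : 0 ≤ h) (vs : List (Eu n)) (hvs : ∀ v ∈ vs, Tan ν v) {g : Eu n → ℝ} {ρ : ℝ}
    (hg : Sm (HB ν c y (ρ + vs.length * h)) g) (w : Eu n) :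
    EqOn (pd w (Dq h vs g)) (Dq h vs (pd w g)) (HB ν c y ρ) := by
  induction vs generalizing ρ with
  | nil => intro x _; rfl
  | cons v vs ih =>
    intro x hx
    have hg' : Sm (HB ν c y (ρ + h + vs.length * h)) g := by
      convert hg using 2; push_cast [List.length_cons]; ring
    have hvs' := fun w hw => hvs w (List.mem_cons_of_mem _ hw)
    have h1 : Sm (HB ν c y (ρ + h)) (Dq h vs g) := Dq_sm hh vs hvs' hg'
    have hv := hvs v List.mem_cons_self
    have hx1 := HB_shift hv ⟨hh, le_rfl⟩ hx
    have hx0 : x ∈ HB ν c y (ρ + h) := HB_mono _ _ _ (by linarith) hx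
    have i1 := ih hvs' hg' hx1
    have i2 := ih hvs' hg' hx0
    have d1 := (h1.diffAt (HB_open _ _ _ _) hx1).hasFDerivAt
    have d2 := (h1.diffAt (HB_open _ _ _ _) hx0).hasFDerivAt
    have d3 : HasFDerivAt (fun x => Dq h vs g (x + h • v))
        (fderiv ℝ (Dq h vs g) (x + h • v)) x := by
      have e : HasFDerivAt (fun x : Eu n => x + h • v) (ContinuousLinearMap.id ℝ (Eu n)) x :=
        (hasFDerivAt_id x).add_const _
      have d5 := d1.comp x e
      rw [ContinuousLinearMap.comp_id] at d5
      exact d5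
    have d4 : HasFDerivAt (Dq h (v :: vs) g)
        (h⁻¹ • (fderiv ℝ (Dq h vs g) (x + h • v) - fderiv ℝ (Dq h vs g) x)) x := by
      have := (d3.sub d2).mul_const h⁻¹
      exact this
    have e6 : Dq h (v :: vs) (pd w g) x = (pd w (Dq h vs g) (x + h • v) - pd w (Dq h vs g) x) / h := by
      simp only [Dq, ← i1, ← i2]
    rw [e6, pd, d4.fderiv]
    simp [div_eq_inv_mul, pd]

lemma Dq_congr (hh : 0 ≤ h) (vs : List (Eu n)) (hvs : ∀ v ∈ vs, Tan ν v) {g g' : Eu n → ℝ} {ρ : ℝ}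
    (hg : EqOn g g' (HB ν c y (ρ + vs.length * h))) :
    EqOn (Dq h vs g) (Dq h vs g') (HB ν c y ρ) := by
  induction vs generalizing ρ with
  | nil => simpa [Dq] using hg
  | cons v vs ih =>
    have hvs' := fun w hw => hvs w (List.mem_cons_of_mem _ hw)
    have i : EqOn (Dq h vs g) (Dq h vs g') (HB ν c y (ρ + h)) := by
      apply ih hvs'
      convert hg using 2; push_cast [List.length_cons]; ring
    intro x hx
    have hv := hvs v List.mem_cons_self
    simp only [Dq, i (HB_shift hv ⟨hh, le_rfl⟩ hx), i (HB_mono _ _ _ (by linarith) hx)]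

lemma Dq_fsum {ι : Type*} (s : Finset ι) (vs : List (Eu n)) (g : ι → Eu n → ℝ) :
    Dq h vs (fun x => ∑ i ∈ s, g i x) = fun x => ∑ i ∈ s, Dq h vs (g i) x := by
  induction vs with
  | nil => rfl
  | cons v vs ih => funext x; simp only [Dq, ih]; rw [← Finset.sum_sub_distrib, Finset.sum_div]

lemma Dq_int (hh : 0 < h) (vs : List (Eu n)) (hvs : ∀ v ∈ vs, Tan ν v) {g : Eu n → ℝ} {ρ : ℝ}
    (hg : Sm (HB ν c y (ρ + vs.length * h)) g) :
    ∫⁻ x in HB ν c y ρ, ENNReal.ofReal (Dq h vs g x ^ 2) ≤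
      ∫⁻ x in HB ν c y (ρ + vs.length * h), ENNReal.ofReal (ipd vs g x ^ 2) := by
  induction vs generalizing ρ g with
  | nil => simp [Dq, ipd]
  | cons v vs ih =>
    have e : ρ + ((v :: vs).length : ℝ) * h = ρ + h + vs.length * h := by
      push_cast [List.length_cons]; ring
    rw [e] at hg ⊢
    have hvs' := fun w hw => hvs w (List.mem_cons_of_mem _ hw)
    have hv := hvs v List.mem_cons_self
    have h1 : Sm (HB ν c y (ρ + h)) (Dq h vs g) := Dq_sm hh.le vs hvs' hg
    refine (dq_int (HB_open ν c y (ρ + h)) (HB_open ν c y ρ).measurableSet h1 hh v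
      fun x hx t ht => HB_shift hv ht hx).trans ?_
    refine le_trans (le_of_eq ?_) (ih hvs' (hg.pd (HB_open _ _ _ _) v))
    refine setLIntegral_congr_fun (HB_open _ _ _ _).measurableSet fun x hx => ?_
    simp only [pd_Dq hh.le vs hvs' hg v hx]

lemma Dq_mvt (hh : 0 < h) (vs : List (Eu n)) (hvs : ∀ v ∈ vs, Tan ν v) {g : Eu n → ℝ} {ρ : ℝ}
    (hg : Sm (HB ν c y (ρ + vs.length * h)) g) {x : Eu n} (hx : x ∈ HB ν c y ρ) :
    ∃ x' ∈ HB ν c y (ρ + vs.length * h), dist x' x ≤ vs.length * h ∧ Dq h vs g x = ipd vs g x' := by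
  induction vs generalizing ρ g x with
  | nil => exact ⟨x, by simpa using hx, by simp, rfl⟩
  | cons v vs ih =>
    have e : ρ + ((v :: vs).length : ℝ) * h = ρ + h + vs.length * h := by
      push_cast [List.length_cons]; ring
    rw [e] at hg ⊢
    have hvs' := fun w hw => hvs w (List.mem_cons_of_mem _ hw)
    have hv := hvs v List.mem_cons_self
    have h1 : Sm (HB ν c y (ρ + h)) (Dq h vs g) := Dq_sm hh.le vs hvs' hg
    have hd : ∀ t ∈ Icc (0 : ℝ) h, HasDerivAt (fun t : ℝ => Dq h vs g (x + t • v))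
        (pd v (Dq h vs g) (x + t • v)) t := fun t ht =>
      hasDerivAt_line (HB_open _ _ _ _) h1 v x t (HB_shift hv ht hx)
    obtain ⟨t, ht, hte⟩ := exists_hasDerivAt_eq_slope (fun t : ℝ => Dq h vs g (x + t • v))
      (fun t => pd v (Dq h vs g) (x + t • v)) hh
      (fun t ht => (hd t ht).continuousAt.continuousWithinAt) (fun t ht => hd t ⟨ht.1.le, ht.2.le⟩)
    have htm : t ∈ Icc 0 h := ⟨ht.1.le, ht.2.le⟩
    have hxt := HB_shift hv htm hx
    obtain ⟨x', hx', hdist, he⟩ := ih hvs' (hg.pd (HB_open _ _ _ _) v) hxt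
    refine ⟨x', hx', ?_, ?_⟩
    · refine (dist_triangle x' (x + t • v) x).trans ?_
      have : dist (x + t • v) x ≤ h := by
        rw [dist_eq_norm, add_sub_cancel_left, norm_smul, Real.norm_of_nonneg ht.1.le]
        nlinarith [ht.1, ht.2, hv.1, norm_nonneg v]
      push_cast [List.length_cons]; linarith
    · rw [ipd, ← he, ← pd_Dq hh.le vs hvs' hg v hxt]
      simp only [Dq]
      rw [hte]; simp

/-- Continuity up to the flat boundary and vanishing on it for difference quotients. -/
lemma Dq_bdry (hh : 0 ≤ h) (vs : List (Eu n)) (hvs : ∀ v ∈ vs, Tan ν v) {g : Eu n → ℝ} {ρ : ℝ}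
    (hg : ContinuousOn g ({x | c ≤ ⟪ν, x⟫} ∩ ball y (ρ + vs.length * h)))
    (hg0 : ∀ x ∈ ball y (ρ + vs.length * h), ⟪ν, x⟫ = c → g x = 0) :
    ContinuousOn (Dq h vs g) ({x | c ≤ ⟪ν, x⟫} ∩ ball y ρ) ∧
    ∀ x ∈ ball y ρ, ⟪ν, x⟫ = c → Dq h vs g x = 0 := by
  induction vs generalizing ρ with
  | nil => simpa [Dq] using ⟨by simpa using hg, by simpa using hg0⟩
  | cons v vs ih =>
    have e : ρ + ((v :: vs).length : ℝ) * h = ρ + h + vs.length * h := by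
      push_cast [List.length_cons]; ring
    rw [e] at hg hg0
    have hvs' := fun w hw => hvs w (List.mem_cons_of_mem _ hw)
    have hv := hvs v List.mem_cons_self
    obtain ⟨i1, i2⟩ := ih hvs' hg hg0
    constructor
    · have h2 : ContinuousOn (fun x => Dq h vs g (x + h • v)) ({x | c ≤ ⟪ν, x⟫} ∩ ball y ρ) :=
        i1.comp (by fun_prop) fun x hx =>
          ⟨by simpa only [mem_ofPred_eq, inner_shift hv] using hx.1,
            ball_shift hv.1 ⟨hh, le_rfl⟩ hx.2⟩
      exact (h2.sub (i1.mono (inter_subset_inter_right _ (ball_subset_ball (by linarith))))).div_const h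
    · intro x hx hxc
      simp only [Dq]
      rw [i2 _ (ball_shift hv.1 ⟨hh, le_rfl⟩ hx) (by rw [inner_shift hv, hxc]),
        i2 x (ball_subset_ball (by linarith) hx) hxc]
      simp
end

section
variable {n : ℕ}

lemma exists_cutoff (n : ℕ) : ∃ C : ℝ, 0 < C ∧ ∀ (y : Eu n) (r : ℝ), 0 < r → ∃ ζ : Eu n → ℝ,
    ContDiff ℝ (⊤ : ℕ∞) ζ ∧ (∀ x, 0 ≤ ζ x) ∧ (∀ x, ζ x ≤ 1) ∧ (∀ x ∈ ball y r, ζ x = 1) ∧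
    tsupport ζ ⊆ closedBall y (5 * r / 4) ∧
    ∀ v : Eu n, ‖v‖ ≤ 1 → ∀ x, pd v ζ x ^ 2 ≤ C * r⁻¹ ^ 2 := by
  let f : ContDiffBump (0 : Eu n) := ⟨1, 5 / 4, by norm_num, by norm_num⟩
  have hfc : ContDiff ℝ (⊤ : ℕ∞) f := f.contDiff
  have hcd : Continuous (fderiv ℝ (f : Eu n → ℝ)) := hfc.continuous_fderiv (by simp)
  have hcs : HasCompactSupport (fderiv ℝ (f : Eu n → ℝ)) := f.hasCompactSupport.fderiv ℝ
  obtain ⟨B, hB⟩ := hcs.exists_bound_of_continuous hcd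
  have hB0 : 0 ≤ B := (norm_nonneg _).trans (hB 0)
  refine ⟨B ^ 2 + 1, by positivity, fun y r hr => ?_⟩
  have hr' : 0 < r⁻¹ := inv_pos.2 hr
  have hmap : ContDiff ℝ (⊤ : ℕ∞) (fun x : Eu n => r⁻¹ • (x - y)) := by fun_prop
  refine ⟨fun x => f (r⁻¹ • (x - y)), hfc.comp hmap, fun x => f.nonneg, fun x => f.le_one, ?_, ?_, ?_⟩
  · intro x hx
    apply f.one_of_mem_closedBall
    rw [mem_closedBall_zero_iff, norm_smul, Real.norm_of_nonneg hr'.le, inv_mul_le_iff₀ hr]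
    rw [mem_ball, dist_eq_norm] at hx
    show ‖x - y‖ ≤ r * 1
    linarith
  · refine closure_minimal ?_ isClosed_closedBall
    intro x hx
    by_contra hne
    apply hx
    apply f.zero_of_le_dist
    rw [dist_zero_right, norm_smul, Real.norm_of_nonneg hr'.le, le_inv_mul_iff₀ hr]
    rw [mem_closedBall, dist_eq_norm, not_le] at hne
    show r * (5 / 4) ≤ ‖x - y‖
    linarith
  · intro v hv x
    have d1 : HasFDerivAt (fun x : Eu n => r⁻¹ • (x - y)) (r⁻¹ • ContinuousLinearMap.id ℝ (Eu n)) x :=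
      ((hasFDerivAt_id x).sub_const y).const_smul r⁻¹
    have d2 := ((hfc.differentiable (by simp) (r⁻¹ • (x - y))).hasFDerivAt).comp x d1
    have d3 : pd v (fun x => f (r⁻¹ • (x - y))) x = r⁻¹ * fderiv ℝ f (r⁻¹ • (x - y)) v := by
      have : fderiv ℝ (fun x => f (r⁻¹ • (x - y))) x = _ := d2.fderiv
      rw [pd, this]; simp
    rw [d3]
    have : |fderiv ℝ f (r⁻¹ • (x - y)) v| ≤ B := by
      refine ((fderiv ℝ f (r⁻¹ • (x - y))).le_opNorm v).trans ?_
      nlinarith [hB (r⁻¹ • (x - y)), norm_nonneg v]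
    have h2 : (fderiv ℝ f (r⁻¹ • (x - y)) v) ^ 2 ≤ B ^ 2 := by
      rw [← sq_abs]; exact pow_le_pow_left₀ (abs_nonneg _) this 2
    rw [mul_pow]
    nlinarith [mul_le_mul_of_nonneg_left h2 (sq_nonneg r⁻¹), sq_nonneg r⁻¹]

variable {ν : Eu n} {c : ℝ} {y : Eu n} {h : ℝ}

lemma hneg {ρ : ℝ} (hh : 0 < h) {v : Eu n} (hv : Tan ν v) {G Ψ : Eu n → ℝ}
    (hG : Sm (HB ν c y (ρ + h)) G) (hΨ : ContDiff ℝ (⊤ : ℕ∞) Ψ) (hΨc : HasCompactSupport Ψ)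
    (hΨt : tsupport Ψ ⊆ HB ν c y ρ) {K : ℝ} (hK : 0 ≤ K)
    (hGK : ∫⁻ x in HB ν c y (ρ + h), ENNReal.ofReal (G x ^ 2) ≤ ENNReal.ofReal (K ^ 2)) :
    |∫ x, Ψ x * ((G (x + h • v) - G x) / h)| ≤ K * √(∫ x, pd v Ψ x ^ 2) := by
  set V := HB ν c y ρ with hV
  set W := HB ν c y (ρ + h) with hW
  have hVo : IsOpen V := HB_open _ _ _ _
  have hWo : IsOpen W := HB_open _ _ _ _
  have hVW : V ⊆ W := HB_mono _ _ _ (by linarith)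
  have sh : ∀ x ∈ V, x + h • v ∈ W := fun x hx => HB_shift hv ⟨hh.le, le_rfl⟩ hx
  have hΨ0 : ∀ x, x ∉ tsupport Ψ → Ψ x = 0 := fun x hx => image_eq_zero_of_notMem_tsupport hx
  have c1 : ContinuousOn (fun x => G (x + h • v)) V :=
    hG.continuousOn.comp (by fun_prop) sh
  have c2 : ContinuousOn G V := hG.continuousOn.mono hVW
  have i1 : Integrable (fun x => Ψ x * G (x + h • v)) :=
    cpt_int hVo hΨc hΨt (hΨ.continuous.continuousOn.mul c1) fun x hx => by rw [hΨ0 x hx, zero_mul]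
  have i2 : Integrable (fun x => Ψ x * G x) :=
    cpt_int hVo hΨc hΨt (hΨ.continuous.continuousOn.mul c2) fun x hx => by rw [hΨ0 x hx, zero_mul]
  have i3 : Integrable (fun x => Ψ (x + h • (-v)) * G x) := by
    have := i1.comp_add_right (h • (-v))
    simpa [smul_neg, add_assoc] using this
  have e1 : ∫ x, Ψ x * G (x + h • v) = ∫ x, Ψ (x + h • (-v)) * G x := by
    rw [← integral_add_right_eq_self (fun x => Ψ (x + h • (-v)) * G x) (h • v)]
    simp [add_assoc]
  have e2 : ∫ x, Ψ x * ((G (x + h • v) - G x) / h) =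
      ∫ x, ((Ψ (x + h • (-v)) - Ψ x) / h) * W.indicator G x := by
    have a1 : ∫ x, Ψ x * ((G (x + h • v) - G x) / h) =
        ((∫ x, Ψ x * G (x + h • v)) - ∫ x, Ψ x * G x) / h := by
      rw [← integral_sub i1 i2, ← integral_div]
      congr 1; funext x; ring
    have a2 : ∫ x, ((Ψ (x + h • (-v)) - Ψ x) / h) * W.indicator G x =
        ((∫ x, Ψ (x + h • (-v)) * G x) - ∫ x, Ψ x * G x) / h := by
      rw [← integral_sub i3 i2, ← integral_div]
      congr 1; funext x
      by_cases hx : x ∈ W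
      · rw [indicator_of_mem hx]; ring
      · rw [indicator_of_notMem hx, hΨ0 x fun hh => hx (hVW (hΨt hh)), hΨ0 (x + h • (-v))]
        · ring
        · intro hh
          apply hx
          have := sh _ (hΨt hh)
          simpa [add_assoc] using this
    rw [a1, a2, e1]
  rw [e2]
  have hGm : Measurable (W.indicator G) := by
    classical
    rw [← Set.piecewise_eq_indicator]
    exact ContinuousOn.measurable_piecewise hG.continuousOn continuousOn_const hWo.measurableSet
  have hF : Continuous fun x => (Ψ (x + h • (-v)) - Ψ x) / h := by
    have := hΨ.continuous
    fun_prop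
  have k1 := cs_sq volume hF.measurable.aemeasurable hGm.aemeasurable
  have k2 : ∫⁻ x, ENNReal.ofReal (((Ψ (x + h • (-v)) - Ψ x) / h) ^ 2) ≤
      ENNReal.ofReal (√(∫ x, pd v Ψ x ^ 2) ^ 2) := by
    have := dq_int (S := univ) (T := univ) isOpen_univ MeasurableSet.univ hΨ.contDiffOn hh (-v)
      (fun _ _ _ _ => mem_univ _)
    simp only [Measure.restrict_univ] at this
    refine this.trans (le_of_eq ?_)
    rw [Real.sq_sqrt (integral_nonneg fun x => sq_nonneg _)]
    have hpc : Continuous (pd v Ψ) := by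
      have := (Sm.pd isOpen_univ hΨ.contDiffOn v).continuousOn
      rwa [continuousOn_univ] at this
    have hi : Integrable fun x => pd v Ψ x ^ 2 := by
      apply Continuous.integrable_of_hasCompactSupport (by fun_prop)
      refine HasCompactSupport.intro hΨc fun x hx => ?_
      have : fderiv ℝ Ψ x = 0 := by
        apply image_eq_zero_of_notMem_tsupport
        exact fun hh => hx (tsupport_fderiv_subset ℝ hh)
      simp [pd, this]
    rw [ofReal_integral_eq_lintegral_ofReal hi (Filter.Eventually.of_forall fun x => sq_nonneg _)]
    simp [pd]
  have k3 : ∫⁻ x, ENNReal.ofReal ((W.indicator G x) ^ 2) ≤ ENNReal.ofReal (K ^ 2) := by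
    refine le_trans (le_of_eq ?_) hGK
    rw [← lintegral_indicator hWo.measurableSet]
    congr 1; funext x
    by_cases hx : x ∈ W <;> simp [hx]
  have := abs_le_of_ofReal_sq (Real.sqrt_nonneg _) hK (k1.trans (mul_le_mul' k2 k3))
  linarith

variable {U : Set (Eu n)}

lemma ipd_sm (hU : IsOpen U) (vs : List (Eu n)) {g : Eu n → ℝ} (hg : Sm U g) : Sm U (ipd vs g) := by
  induction vs generalizing g with
  | nil => exact hg
  | cons v vs ih => exact ih (hg.pd hU v)

lemma ipd_congr (hU : IsOpen U) (vs : List (Eu n)) {g g' : Eu n → ℝ} (hg : EqOn g g' U) :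
    EqOn (ipd vs g) (ipd vs g') U := by
  induction vs generalizing g g' with
  | nil => exact hg
  | cons v vs ih => exact ih (pd_congr hU hg v)

lemma ipd_pd (hU : IsOpen U) (vs : List (Eu n)) {g : Eu n → ℝ} (hg : Sm U g) (w : Eu n) :
    EqOn (ipd vs (pd w g)) (pd w (ipd vs g)) U := by
  induction vs generalizing g with
  | nil => intro x _; rfl
  | cons v vs ih =>
    exact (ipd_congr hU vs (pd_comm hU hg v w)).trans (ih (hg.pd hU v))

lemma ipd_le_MM (b : Fin n → Eu n) (js : List (Fin n)) (g : Eu n → ℝ) (x : Eu n) :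
    |ipd (js.map b) g x| ≤ MM b js.length g x := by
  induction js generalizing g with
  | nil => simp [ipd, MM]
  | cons j js ih =>
    refine (ih (pd (b j) g)).trans ?_
    exact Finset.single_le_sum (f := fun j => MM b js.length (pd (b j) g) x)
      (fun i _ => MM_nonneg _ _ _) (Finset.mem_univ j)

lemma lap_Dq (b : Fin n → Eu n) {ρ : ℝ} (hh : 0 ≤ h) (vs : List (Eu n)) (hvs : ∀ v ∈ vs, Tan ν v)
    {u f : Eu n → ℝ} (hu : Sm (HB ν c y (ρ + vs.length * h)) u)
    (hf : EqOn (fun x => ∑ j, pd (b j) (pd (b j) u) x) f (HB ν c y (ρ + vs.length * h))) :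
    EqOn (fun x => ∑ j, pd (b j) (pd (b j) (Dq h vs u)) x) (Dq h vs f) (HB ν c y ρ) := by
  intro x hx
  rw [← Dq_congr hh vs hvs hf hx, Dq_fsum]
  refine Finset.sum_congr rfl fun j _ => ?_
  rw [pd_congr (HB_open _ _ _ _) (pd_Dq hh vs hvs hu (b j)) (b j) hx]
  exact pd_Dq hh vs hvs (hu.pd (HB_open _ _ _ _) (b j)) (b j) hx
end

lemma stage_h (n : ℕ) : ∃ C : ℝ, 0 < C ∧ ∀ (b : Fin n → Eu n) (_ : ∀ j, ‖b j‖ ≤ 1) (ν : Eu n) (c : ℝ)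
    (y : Eu n) (r : ℝ) (_ : 0 < r) (u f : Eu n → ℝ) (_ : Sm (HB ν c y (2 * r)) u)
    (_ : Sm (HB ν c y (2 * r)) f)
    (_ : ContinuousOn u ({x | c ≤ ⟪ν, x⟫} ∩ ball y (2 * r)))
    (_ : ∀ x ∈ ball y (2 * r), ⟪ν, x⟫ = c → u x = 0)
    (_ : EqOn (fun x => ∑ j, pd (b j) (pd (b j) u) x) f (HB ν c y (2 * r)))
    (i : Fin n) (vs : List (Eu n)) (_ : ∀ w ∈ b i :: vs, Tan ν w) (h : ℝ) (_ : 0 < h)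
    (_ : (vs.length + 1) * h ≤ r / 2),
    ∫⁻ x in HB ν c y r, ENNReal.ofReal (gs b (Dq h (b i :: vs) u) x) ≤
      ENNReal.ofReal C * (ENNReal.ofReal (r⁻¹ ^ 2) *
        (∫⁻ x in HB ν c y (2 * r), ENNReal.ofReal (ipd (b i :: vs) u x ^ 2)) +
        ∫⁻ x in HB ν c y (2 * r), ENNReal.ofReal (ipd vs f x ^ 2)) := by
  obtain ⟨Ce, hCe, henergy⟩ := energy
  obtain ⟨Cz, hCz, hcut⟩ := exists_cutoff n
  refine ⟨Ce * (n * Cz + 1), by positivity, ?_⟩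
  intro b hb ν c y r hr u f hu hfs huc hu0 hf i vs hvs h hh hhr
  by_cases hJ : ∫⁻ x in HB ν c y (2 * r), ENNReal.ofReal (ipd vs f x ^ 2) = ⊤
  · rw [hJ, add_top, ENNReal.mul_top]
    · exact le_top
    · simp only [ne_eq, ENNReal.ofReal_eq_zero, not_le]; positivity
  set J := ∫⁻ x in HB ν c y (2 * r), ENNReal.ofReal (ipd vs f x ^ 2) with hJdef
  set K := √J.toReal with hKdef
  have hK2 : ENNReal.ofReal (K ^ 2) = J := by
    rw [hKdef, Real.sq_sqrt ENNReal.toReal_nonneg, ENNReal.ofReal_toReal hJ]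
  obtain ⟨ζ, hζ, hζ0, hζ1, hζb, hζt, hζd⟩ := hcut y r hr
  set ws := b i :: vs with hws
  have hlen : (ws.length : ℝ) * h ≤ r / 2 := by
    rw [hws]; push_cast [List.length_cons]; exact hhr
  have hsub : HB ν c y (3 * r / 2 + ws.length * h) ⊆ HB ν c y (2 * r) :=
    HB_mono _ _ _ (by linarith)
  set V := HB ν c y (3 * r / 2) with hV
  have hVo : IsOpen V := HB_open _ _ _ _
  set w := Dq h ws u with hw
  have hwS : Sm V w := Dq_sm hh.le ws hvs (hu.mono hsub)
  have hbsub : ball y (3 * r / 2 + ws.length * h) ⊆ ball y (2 * r) := ball_subset_ball (by linarith)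
  obtain ⟨hwc, hw0⟩ := Dq_bdry (ν := ν) (c := c) (y := y) (ρ := 3 * r / 2) hh.le ws hvs (g := u)
    (huc.mono (inter_subset_inter_right _ hbsub)) fun x hx => hu0 x (hbsub hx)
  have hcomp : ∀ ε > 0, IsCompact {x | x ∈ V ∧ ε ≤ |w x| ∧ x ∈ tsupport ζ} := by
    intro ε hε
    have hk : IsCompact ({x | c ≤ ⟪ν, x⟫} ∩ tsupport ζ) := by
      refine IsCompact.of_isClosed_subset (isCompact_closedBall y (5 * r / 4)) ?_ ?_
      · exact (isClosed_le continuous_const (by fun_prop)).inter (isClosed_tsupport ζ)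
      · exact inter_subset_right.trans hζt
    have hc' : ContinuousOn w ({x | c ≤ ⟪ν, x⟫} ∩ tsupport ζ) := by
      refine hwc.mono (inter_subset_inter_right _ (hζt.trans ?_))
      exact closedBall_subset_ball (by linarith)
    have hcl := hc'.abs.preimage_isClosed_of_isClosed hk.isClosed (isClosed_Ici (a := ε))
    refine IsCompact.of_isClosed_subset hk (t := {x | x ∈ V ∧ ε ≤ |w x| ∧ x ∈ tsupport ζ}) ?_ ?_
    · convert hcl using 1
      ext x
      constructor
      · rintro ⟨h1, h2, h3⟩
        exact ⟨⟨show c ≤ ⟪ν, x⟫ from le_of_lt (show c < ⟪ν, x⟫ from h1.1), h3⟩, h2⟩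
      · rintro ⟨⟨h1, h2⟩, h3⟩
        have hxb : x ∈ ball y (3 * r / 2) := closedBall_subset_ball (by linarith) (hζt h2)
        refine ⟨⟨?_, hxb⟩, h3, h2⟩
        refine lt_of_le_of_ne (show c ≤ ⟪ν, x⟫ from h1) fun he => ?_
        have := hw0 x hxb he.symm
        have h3' : ε ≤ |w x| := h3
        rw [hw, this, abs_zero] at h3'
        linarith
    · rintro x ⟨h1, h2, h3⟩
      exact ⟨show c ≤ ⟪ν, x⟫ from le_of_lt (show c < ⟪ν, x⟫ from h1.1), h3⟩
  have hHneg : ∀ Ψ : Eu n → ℝ, ContDiff ℝ (⊤ : ℕ∞) Ψ → HasCompactSupport Ψ → tsupport Ψ ⊆ V →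
      |∫ x, Ψ x * ∑ j, pd (b j) (pd (b j) w) x| ≤ K * √(∫ x, gs b Ψ x) := by
    intro Ψ hΨ hΨc hΨt
    have hl := lap_Dq b (ρ := 3 * r / 2) hh.le ws hvs (hu.mono hsub) (hf.mono hsub)
    have e1 : ∫ x, Ψ x * ∑ j, pd (b j) (pd (b j) w) x =
        ∫ x, Ψ x * ((Dq h vs f (x + h • b i) - Dq h vs f x) / h) := by
      congr 1; funext x
      by_cases hx : x ∈ V
      · have := hl hx
        simp only at this
        rw [this]; rfl
      · rw [image_eq_zero_of_notMem_tsupport (fun hh => hx (hΨt hh)), zero_mul, zero_mul]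
    rw [e1]
    have hvs' : ∀ w ∈ vs, Tan ν w := fun w hw => hvs w (List.mem_cons_of_mem _ hw)
    have e3 : 3 * r / 2 + h + vs.length * h = 3 * r / 2 + ws.length * h := by
      rw [hws]; push_cast [List.length_cons]; ring
    have hfs' : Sm (HB ν c y (3 * r / 2 + h + vs.length * h)) f := by
      rw [e3]; exact hfs.mono hsub
    refine (hneg hh (hvs (b i) List.mem_cons_self) (Dq_sm hh.le vs hvs' hfs') hΨ hΨc hΨt
      (K := K) (Real.sqrt_nonneg _) ?_).trans ?_
    · rw [hK2]
      refine (Dq_int hh vs hvs' hfs').trans ?_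
      rw [e3]
      exact lintegral_mono_set hsub
    · refine mul_le_mul_of_nonneg_left (Real.sqrt_le_sqrt ?_) (Real.sqrt_nonneg _)
      have hΨu : Sm univ Ψ := hΨ.contDiffOn
      have hz : ∀ x, x ∉ tsupport Ψ → ∀ v, pd v Ψ x = 0 := by
        intro x hx v
        have : fderiv ℝ Ψ x = 0 := by
          apply image_eq_zero_of_notMem_tsupport
          exact fun hh => hx (tsupport_fderiv_subset ℝ hh)
        simp [pd, this]
      refine integral_mono ?_ ?_ ?_
      · exact cpt_int isOpen_univ hΨc (subset_univ _)
          ((hΨu.pd isOpen_univ (b i)).continuousOn.pow 2) fun x hx => by simp [hz x hx]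
      · exact cpt_int isOpen_univ hΨc (subset_univ _) (gs_cont isOpen_univ b hΨu)
          fun x hx => by simp [gs, hz x hx]
      · intro x
        exact Finset.single_le_sum (f := fun j => pd (b j) Ψ x ^ 2) (fun i _ => sq_nonneg _)
          (Finset.mem_univ i)
  have main := henergy hVo b hwS hζ hζ0 hζ1 hcomp K (Real.sqrt_nonneg _) hHneg
  have step1 : ∫⁻ x in HB ν c y r, ENNReal.ofReal (gs b w x) ≤
      ∫⁻ x in V, ENNReal.ofReal (ζ x ^ 2 * gs b w x) := by
    refine le_trans (le_of_eq ?_) (lintegral_mono_set (HB_mono ν c y (by linarith : r ≤ 3 * r / 2)))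
    refine setLIntegral_congr_fun (HB_open _ _ _ _).measurableSet fun x hx => ?_
    simp only [hζb x hx.2]; simp
  have step2 : ∫⁻ x in V, ENNReal.ofReal (gs b ζ x * w x ^ 2) ≤ ENNReal.ofReal (n * Cz) *
      (ENNReal.ofReal (r⁻¹ ^ 2) *
        (∫⁻ x in HB ν c y (2 * r), ENNReal.ofReal (ipd ws u x ^ 2))) := by
    calc ∫⁻ x in V, ENNReal.ofReal (gs b ζ x * w x ^ 2)
        ≤ ∫⁻ x in V, ENNReal.ofReal (n * Cz) * (ENNReal.ofReal (r⁻¹ ^ 2) *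
            ENNReal.ofReal (w x ^ 2)) := by
          refine lintegral_mono fun x => ?_
          rw [← ENNReal.ofReal_mul (by positivity), ← ENNReal.ofReal_mul (by positivity)]
          apply ENNReal.ofReal_le_ofReal
          have : gs b ζ x ≤ n * (Cz * r⁻¹ ^ 2) := by
            refine (Finset.sum_le_sum fun j _ => hζd (b j) (hb j) x).trans ?_
            simp
          nlinarith [mul_le_mul_of_nonneg_right this (sq_nonneg (w x))]
      _ = ENNReal.ofReal (n * Cz) * (ENNReal.ofReal (r⁻¹ ^ 2) *
            ∫⁻ x in V, ENNReal.ofReal (w x ^ 2)) := by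
          rw [lintegral_const_mul' _ _ ENNReal.ofReal_ne_top,
            lintegral_const_mul' _ _ ENNReal.ofReal_ne_top]
      _ ≤ _ := by
          gcongr _ * (_ * ?_)
          exact (Dq_int hh ws hvs (hu.mono hsub)).trans (lintegral_mono_set hsub)
  refine (step1.trans main).trans ?_
  rw [hK2, ENNReal.ofReal_mul hCe.le, mul_assoc]
  gcongr _ * ?_
  rw [mul_add]
  refine add_le_add (step2.trans ?_) ?_
  · gcongr
    linarith
  · refine le_mul_of_one_le_left (zero_le) ?_
    rw [← ENNReal.ofReal_one]
    exact ENNReal.ofReal_le_ofReal (by nlinarith [mul_nonneg (Nat.cast_nonneg (α := ℝ) n) hCz.le])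

lemma stage_list (n : ℕ) : ∃ C : ℝ, 0 < C ∧ ∀ (b : Fin n → Eu n) (_ : ∀ j, ‖b j‖ ≤ 1) (ν : Eu n) (c : ℝ)
    (y : Eu n) (r : ℝ) (_ : 0 < r) (u f : Eu n → ℝ) (_ : Sm (HB ν c y (2 * r)) u)
    (_ : Sm (HB ν c y (2 * r)) f)
    (_ : ContinuousOn u ({x | c ≤ ⟪ν, x⟫} ∩ ball y (2 * r)))
    (_ : ∀ x ∈ ball y (2 * r), ⟪ν, x⟫ = c → u x = 0)
    (_ : EqOn (fun x => ∑ j, pd (b j) (pd (b j) u) x) f (HB ν c y (2 * r)))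
    (i : Fin n) (vs : List (Eu n)) (_ : ∀ w ∈ b i :: vs, Tan ν w) (j : Fin n),
    ∫⁻ x in HB ν c y r, ENNReal.ofReal (pd (b j) (ipd (b i :: vs) u) x ^ 2) ≤
      ENNReal.ofReal C * (ENNReal.ofReal (r⁻¹ ^ 2) *
        (∫⁻ x in HB ν c y (2 * r), ENNReal.ofReal (ipd (b i :: vs) u x ^ 2)) +
        ∫⁻ x in HB ν c y (2 * r), ENNReal.ofReal (ipd vs f x ^ 2)) := by
  obtain ⟨C, hC, H⟩ := stage_h n
  refine ⟨C, hC, ?_⟩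
  intro b hb ν c y r hr u f hu hfs huc hu0 hf i vs hvs j
  set ws := b i :: vs with hws
  set h : ℕ → ℝ := fun m => (r / (2 * (vs.length + 1))) * (1 / ((m : ℝ) + 1)) with hh
  have hpos : ∀ m, 0 < h m := fun m => by positivity
  have hle : ∀ m, (vs.length + 1) * h m ≤ r / 2 := by
    intro m
    have : (vs.length + 1) * h m = r / 2 * (1 / ((m : ℝ) + 1)) := by
      simp only [hh]; field_simp
    rw [this]
    have h1 : 1 / ((m : ℝ) + 1) ≤ 1 := by
      rw [div_le_one (by positivity)]; linarith [Nat.cast_nonneg (α := ℝ) m]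
    nlinarith
  have hle' : ∀ m, (ws.length : ℝ) * h m ≤ r / 2 := by
    intro m; rw [hws]; push_cast [List.length_cons]; exact hle m
  have hlim0 : Filter.Tendsto (fun m => (ws.length : ℝ) * h m) Filter.atTop (nhds 0) := by
    have := (tendsto_one_div_add_atTop_nhds_zero_nat (𝕜 := ℝ)).const_mul
      ((ws.length : ℝ) * (r / (2 * (vs.length + 1))))
    simpa [hh, mul_assoc] using this
  have hsub : ∀ m, HB ν c y (r + ws.length * h m) ⊆ HB ν c y (2 * r) := fun m =>
    HB_mono _ _ _ (by linarith [hle' m])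
  have hlim : ∀ x ∈ HB ν c y r, Filter.Tendsto (fun m => pd (b j) (Dq (h m) ws u) x) Filter.atTop
      (nhds (pd (b j) (ipd ws u) x)) := by
    intro x hx
    have hx2 : x ∈ HB ν c y (2 * r) := HB_mono _ _ _ (by linarith) hx
    have hpu := hu.pd (HB_open _ _ _ _) (b j)
    rw [← ipd_pd (HB_open _ _ _ _) ws hu (b j) hx2]
    have ex : ∀ m, ∃ x', dist x' x ≤ ws.length * h m ∧
        pd (b j) (Dq (h m) ws u) x = ipd ws (pd (b j) u) x' := by
      intro m
      obtain ⟨x', -, h1, h2⟩ := Dq_mvt (hpos m) ws hvs (hpu.mono (hsub m)) hx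
      exact ⟨x', h1, by rw [← h2, pd_Dq (hpos m).le ws hvs (hu.mono (hsub m)) (b j) hx]⟩
    choose x' h1 h2 using ex
    have ht : Filter.Tendsto x' Filter.atTop (nhds x) := by
      rw [tendsto_iff_dist_tendsto_zero]
      exact squeeze_zero (fun _ => dist_nonneg) h1 hlim0
    have hca : ContinuousAt (ipd ws (pd (b j) u)) x :=
      (ipd_sm (HB_open _ _ _ _) ws hpu).continuousOn.continuousAt ((HB_open _ _ _ _).mem_nhds hx2)
    simp only [h2]
    exact hca.tendsto.comp ht
  have hfat : ∫⁻ x in HB ν c y r, ENNReal.ofReal (pd (b j) (ipd ws u) x ^ 2) ≤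
      ∫⁻ x in HB ν c y r, Filter.liminf
        (fun m => ENNReal.ofReal (pd (b j) (Dq (h m) ws u) x ^ 2)) Filter.atTop := by
    refine setLIntegral_mono' (HB_open _ _ _ _).measurableSet fun x hx => ?_
    refine le_of_eq (Filter.Tendsto.liminf_eq ?_).symm
    exact (ENNReal.continuous_ofReal.tendsto _).comp ((hlim x hx).pow 2)
  refine hfat.trans ((lintegral_liminf_le' ?_).trans ?_)
  · intro m
    have : Sm (HB ν c y r) (Dq (h m) ws u) := Dq_sm (hpos m).le ws hvs (hu.mono (hsub m))
    exact (((this.pd (HB_open _ _ _ _) (b j)).continuousOn.pow 2).aemeasurable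
      (HB_open _ _ _ _).measurableSet).ennreal_ofReal
  · refine Filter.liminf_le_of_le (by isBoundedDefault) ?_
    intro a ha
    obtain ⟨m, hm⟩ := ha.exists
    refine hm.trans (le_trans ?_ (H b hb ν c y r hr u f hu hfs huc hu0 hf i vs hvs (h m) (hpos m) (hle m)))
    refine lintegral_mono fun x => ENNReal.ofReal_le_ofReal ?_
    exact Finset.single_le_sum (f := fun j => pd (b j) (Dq (h m) ws u) x ^ 2) (fun i _ => sq_nonneg _)
          (Finset.mem_univ j)

/-- standard basis -/
def se (n : ℕ) : Fin n → Eu n := fun i => EuclideanSpace.single i 1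

section
variable {n : ℕ} {U : Set (Eu n)}

lemma laplaceOp_eq (u : Eu n → ℝ) (x : Eu n) :
    laplaceOp u x = ∑ j, pd (se n j) (pd (se n j) u) x := rfl

lemma laplaceOp_sm (hU : IsOpen U) {u : Eu n → ℝ} (hu : Sm U u) : Sm U (laplaceOp u) :=
  ContDiffOn.sum fun j _ => (hu.pd hU (se n j)).pd hU (se n j)

lemma expand_se (v : Eu n) : v = ∑ j, v j • se n j := by
  ext i
  simp [se, Finset.sum_apply, EuclideanSpace.single_apply, Pi.single_apply]

lemma lap_basis (hU : IsOpen U) {u : Eu n → ℝ} (hu : Sm U u) (b : OrthonormalBasis (Fin n) ℝ (Eu n)) :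
    EqOn (fun x => ∑ j, pd (b j) (pd (b j) u) x) (laplaceOp u) U := by
  intro x hx
  have key : ∀ v : Eu n, pd v (pd v u) x =
      ∑ i, ∑ k, (v i * v k) * pd (se n i) (pd (se n k) u) x := by
    intro v
    have e1 : pd v u = fun x => ∑ k, v k * pd (se n k) u x := by
      conv_lhs => rw [expand_se v]
      exact pd_vsum _ _ _ _
    have e2 : ∀ g : Eu n → ℝ, pd v g x = ∑ i, v i * pd (se n i) g x := by
      intro g
      conv_lhs => rw [expand_se v]
      rw [pd_vsum]
    rw [e2]
    refine Finset.sum_congr rfl fun i _ => ?_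
    rw [e1, pd_fsum hU _ _ _ (fun k _ => hu.pd hU _) _ hx, Finset.mul_sum]
    exact Finset.sum_congr rfl fun k _ => by ring
  have lhs : (∑ j, pd (b j) (pd (b j) u) x) = ∑ j, ∑ i, ∑ k, (b j i * b j k) *
      pd (se n i) (pd (se n k) u) x := Finset.sum_congr rfl fun j _ => key _
  show (∑ j, pd (b j) (pd (b j) u) x) = laplaceOp u x
  rw [lhs, laplaceOp_eq, Finset.sum_comm]
  refine Finset.sum_congr rfl fun i _ => ?_
  rw [Finset.sum_comm]
  have orth : ∀ k, ∑ j, b j i * b j k = if i = k then 1 else 0 := by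
    intro k
    have := b.sum_inner_mul_inner (se n i) (se n k)
    simp only [se] at this
    simpa [EuclideanSpace.inner_single_left, EuclideanSpace.inner_single_right,
      EuclideanSpace.single_apply, eq_comm] using this
  calc ∑ k, ∑ j, (b j i * b j k) * pd (se n i) (pd (se n k) u) x
      = ∑ k, (if i = k then 1 else 0) * pd (se n i) (pd (se n k) u) x := by
        refine Finset.sum_congr rfl fun k _ => ?_
        rw [← Finset.sum_mul, orth]
    _ = _ := by simp

lemma sum_sq_int {α ι : Type*} [MeasurableSpace α] (μ : Measure α) (s : Finset ι) (F : ι → α → ℝ)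
    (hF : ∀ i ∈ s, AEMeasurable (F i) μ) (M : ℝ≥0∞)
    (hM : ∀ i ∈ s, ∫⁻ x, ENNReal.ofReal (F i x ^ 2) ∂μ ≤ M) :
    ∫⁻ x, ENNReal.ofReal ((∑ i ∈ s, F i x) ^ 2) ∂μ ≤ (s.card : ℝ≥0∞) ^ 2 * M := by
  calc ∫⁻ x, ENNReal.ofReal ((∑ i ∈ s, F i x) ^ 2) ∂μ
      ≤ ∫⁻ x, (s.card : ℝ≥0∞) * ∑ i ∈ s, ENNReal.ofReal (F i x ^ 2) ∂μ := by
        refine lintegral_mono fun x => ?_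
        rw [← ENNReal.ofReal_sum_of_nonneg fun i _ => sq_nonneg _, ← ENNReal.ofReal_natCast,
          ← ENNReal.ofReal_mul (Nat.cast_nonneg _)]
        exact ENNReal.ofReal_le_ofReal sq_sum_le_card_mul_sum_sq
    _ = (s.card : ℝ≥0∞) * ∑ i ∈ s, ∫⁻ x, ENNReal.ofReal (F i x ^ 2) ∂μ := by
        rw [lintegral_const_mul' _ _ (ENNReal.natCast_ne_top _), lintegral_finsetSum']
        exact fun i hi => ((hF i hi).pow_const 2).ennreal_ofReal
    _ ≤ (s.card : ℝ≥0∞) * ∑ i ∈ s, M := by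
        gcongr with i hi
        exact hM i hi
    _ = _ := by rw [Finset.sum_const, nsmul_eq_mul, ← mul_assoc, sq]

lemma TT_int (hU : IsOpen U) (b : Fin n → Eu n) (i0 : Fin n) (k : ℕ) {u : Eu n → ℝ} (hu : Sm U u)
    (M : ℝ≥0∞) (hM : ∀ js : List (Fin n), js.length = k → (∀ j ∈ js, j ≠ i0) → ∀ j,
      ∫⁻ x in U, ENNReal.ofReal (pd (b j) (ipd (js.map b) u) x ^ 2) ≤ M) :
    ∫⁻ x in U, ENNReal.ofReal (TT b i0 k u x ^ 2) ≤ ((n : ℝ≥0∞) ^ 2) ^ (k + 1) * M := by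
  induction k generalizing u with
  | zero =>
    have := sum_sq_int (volume.restrict U) Finset.univ (fun j x => |pd (b j) u x|)
      (fun j _ => ((hu.pd hU (b j)).continuousOn.abs).aemeasurable hU.measurableSet) M
      (fun j _ => by simp only [sq_abs]; exact hM [] rfl (by simp) j)
    simpa [TT] using this
  | succ k ih =>
    have := sum_sq_int (volume.restrict U) (Finset.univ.erase i0)
      (fun j x => TT b i0 k (pd (b j) u) x)
      (fun j _ => (TT_cont hU i0 k (hu.pd hU (b j))).aemeasurable hU.measurableSet)
      (((n : ℝ≥0∞) ^ 2) ^ (k + 1) * M) ?_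
    · refine this.trans ?_
      rw [pow_succ _ (k + 1), mul_comm _ ((n : ℝ≥0∞) ^ 2), mul_assoc]
      gcongr
      exact (Finset.card_le_univ _).trans (by simp)
    · intro j hj
      refine ih (hu.pd hU (b j)) fun js hjs hne j' => ?_
      refine hM (j :: js) (by simp [hjs]) ?_ j'
      intro i hi
      rcases List.mem_cons.1 hi with rfl | hi
      · exact Finset.ne_of_mem_erase hj
      · exact hne i hi

lemma lint_scale {μ : Measure (Eu n)} {F G : Eu n → ℝ} {a : ℝ} (ha : 0 ≤ a)
    (h : ∀ᵐ x ∂μ, 0 ≤ F x ∧ F x ≤ a * G x) :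
    ∫⁻ x, ENNReal.ofReal (F x ^ 2) ∂μ ≤
      ENNReal.ofReal (a ^ 2) * ∫⁻ x, ENNReal.ofReal (G x ^ 2) ∂μ := by
  rw [← lintegral_const_mul' _ _ ENNReal.ofReal_ne_top]
  refine lintegral_mono_ae ?_
  filter_upwards [h] with x hx
  rw [← ENNReal.ofReal_mul (sq_nonneg _), ← mul_pow]
  exact ENNReal.ofReal_le_ofReal (pow_le_pow_left₀ hx.1 hx.2 2)

end

lemma stage (n k : ℕ) : ∃ C : ℝ, 0 < C ∧ ∀ (ν : Eu n) (_ : ‖ν‖ = 1) (c : ℝ)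
    (y : Eu n) (r : ℝ) (_ : 0 < r) (u : Eu n → ℝ) (_ : Sm (HB ν c y (2 * r)) u)
    (_ : ContinuousOn u ({x | c ≤ ⟪ν, x⟫} ∩ ball y (2 * r)))
    (_ : ∀ x ∈ ball y (2 * r), ⟪ν, x⟫ = c → u x = 0),
    ∫⁻ x in HB ν c y r, ENNReal.ofReal (MM (se n) (k + 2) u x ^ 2) ≤
      ENNReal.ofReal C * (ENNReal.ofReal (r⁻¹ ^ 2) *
        (∫⁻ x in HB ν c y (2 * r), ENNReal.ofReal (MM (se n) (k + 1) u x ^ 2)) +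
        ∫⁻ x in HB ν c y (2 * r), ENNReal.ofReal (MM (se n) k (laplaceOp u) x ^ 2)) := by
  obtain ⟨C0, hC0, H⟩ := stage_list n
  set B : ℝ := ((n : ℝ) ^ (k + 1)) ^ 2 with hB
  set B' : ℝ := ((n : ℝ) ^ k) ^ 2 with hB'
  set A : ℝ := (n : ℝ) ^ (k + 2) * 3 ^ (k + 1) with hA
  set D : ℝ := ((n : ℝ) ^ 2) ^ (k + 2) with hD
  refine ⟨2 * A ^ 2 * (D * C0 * (B + B') + B') + 1, by positivity, ?_⟩
  intro ν hν c y r hr u hu huc hu0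
  have hn : 0 < n := by
    rcases Nat.eq_zero_or_pos n with rfl | h
    · have : ν = 0 := Subsingleton.elim _ _
      simp [this] at hν
    · exact h
  let i0 : Fin n := ⟨0, hn⟩
  obtain ⟨b, hb⟩ := Orthonormal.exists_orthonormalBasis_extension_of_card_eq (𝕜 := ℝ) (E := Eu n)
    (ι := Fin n) (by simp) (v := fun _ => ν) (s := {i0}) (by
      rw [orthonormal_iff_ite]
      rintro ⟨i, hi⟩ ⟨j, hj⟩
      have hij : i = j := by rw [mem_singleton_iff.1 hi, mem_singleton_iff.1 hj]
      subst hij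
      simp [real_inner_self_eq_norm_sq, hν])
  have hbi0 : b i0 = ν := hb i0 (mem_singleton _)
  have hb1 : ∀ j, ‖b j‖ ≤ 1 := fun j => (b.orthonormal.1 j).le
  have htan : ∀ j, j ≠ i0 → Tan ν (b j) := fun j hj =>
    ⟨hb1 j, by rw [← hbi0]; exact b.orthonormal.2 hj.symm⟩
  set W := HB ν c y (2 * r) with hW
  set V := HB ν c y r with hV
  have hWo : IsOpen W := HB_open _ _ _ _
  have hVo : IsOpen V := HB_open _ _ _ _
  have hVW : V ⊆ W := HB_mono _ _ _ (by linarith)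
  set f := laplaceOp u with hf
  have hfs : Sm W f := laplaceOp_sm hWo hu
  have hlap := lap_basis hWo hu b
  -- change of frames
  have hse1 : ∀ i, ‖se n i‖ = 1 := fun i => by simp [se]
  have ch1 : ∀ (m : ℕ) {g : Eu n → ℝ}, Sm W g → ∀ x ∈ W, MM (se n) m g x ≤ (n : ℝ) ^ m * MM b m g x := by
    intro m g hg x hx
    refine MM_change hWo (se n) (fun i j => ⟪b j, se n i⟫) (fun i => (b.sum_repr' (se n i)).symm) ?_ m hg hx
    intro i j
    refine (abs_real_inner_le_norm _ _).trans ?_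
    rw [hse1, mul_one]; exact hb1 j
  have ch2 : ∀ (m : ℕ) {g : Eu n → ℝ}, Sm W g → ∀ x ∈ W, MM b m g x ≤ (n : ℝ) ^ m * MM (se n) m g x := by
    intro m g hg x hx
    refine MM_change hWo b (fun i j => b i j) (fun i => expand_se (b i)) ?_ m hg hx
    intro i j
    exact (PiLp.norm_apply_le (b i) j).trans (hb1 i)
  set N := ∫⁻ x in W, ENNReal.ofReal (MM (se n) (k + 1) u x ^ 2) with hN
  set L := ∫⁻ x in W, ENNReal.ofReal (MM (se n) k f x ^ 2) with hL
  set X := ENNReal.ofReal (r⁻¹ ^ 2) * N with hX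
  have hNb : ∫⁻ x in W, ENNReal.ofReal (MM b (k + 1) u x ^ 2) ≤ ENNReal.ofReal B * N :=
    lint_scale (by positivity) ((ae_restrict_iff' hWo.measurableSet).2
      (Filter.Eventually.of_forall fun x hx => ⟨MM_nonneg _ _ _, ch2 _ hu x hx⟩))
  have hLb : ∫⁻ x in W, ENNReal.ofReal (MM b k f x ^ 2) ≤ ENNReal.ofReal B' * L :=
    lint_scale (by positivity) ((ae_restrict_iff' hWo.measurableSet).2
      (Filter.Eventually.of_forall fun x hx => ⟨MM_nonneg _ _ _, ch2 _ hfs x hx⟩))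
  have hTT : ∫⁻ x in V, ENNReal.ofReal (TT b i0 (k + 1) u x ^ 2) ≤ ((n : ℝ≥0∞) ^ 2) ^ (k + 2) *
      (ENNReal.ofReal C0 * (ENNReal.ofReal B * X + ENNReal.ofReal B' * L)) := by
    refine TT_int hVo b i0 (k + 1) (hu.mono hVW) _ ?_
    intro js hjs hne j
    match js, hjs with
    | i :: js, hjs =>
      have hjs' : js.length = k := by simpa using hjs
      refine (H b hb1 ν c y r hr u f hu hfs huc hu0 hlap i (js.map b) ?_ j).trans ?_
      · intro w hw
        have hw' : w ∈ (i :: js).map b := hw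
        obtain ⟨a, ha, rfl⟩ := List.mem_map.1 hw'
        exact htan a (hne a ha)
      · gcongr _ * (?_ + ?_)
        · rw [hX, mul_left_comm]
          gcongr _ * ?_
          refine le_trans (lintegral_mono fun x => ENNReal.ofReal_le_ofReal ?_) hNb
          rw [← sq_abs]
          have := ipd_le_MM b (i :: js) u x
          rw [hjs] at this
          exact pow_le_pow_left₀ (abs_nonneg _) this 2
        · refine le_trans (lintegral_mono fun x => ENNReal.ofReal_le_ofReal ?_) hLb
          rw [← sq_abs]
          have := ipd_le_MM b js f x
          rw [hjs'] at this
          exact pow_le_pow_left₀ (abs_nonneg _) this 2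
  have hpt : ∀ x ∈ V, ENNReal.ofReal (MM (se n) (k + 2) u x ^ 2) ≤ ENNReal.ofReal (2 * A ^ 2) *
      (ENNReal.ofReal (TT b i0 (k + 1) u x ^ 2) + ENNReal.ofReal (MM b k f x ^ 2)) := by
    intro x hx
    have h1 := ch1 (k + 2) hu x (hVW hx)
    have h2 := MM_le_TT hWo i0 k hu hlap (hVW hx)
    have h3 : MM (se n) (k + 2) u x ≤ A * (TT b i0 (k + 1) u x + MM b k f x) := by
      refine h1.trans ?_
      rw [hA, mul_assoc]
      exact mul_le_mul_of_nonneg_left h2 (by positivity)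
    rw [← ENNReal.ofReal_add (sq_nonneg _) (sq_nonneg _), ← ENNReal.ofReal_mul (by positivity)]
    apply ENNReal.ofReal_le_ofReal
    have h4 := pow_le_pow_left₀ (MM_nonneg _ _ _) h3 2
    refine h4.trans ?_
    rw [mul_pow, mul_comm 2, mul_assoc]
    refine mul_le_mul_of_nonneg_left ?_ (sq_nonneg _)
    nlinarith [sq_nonneg (TT b i0 (k + 1) u x - MM b k f x)]
  have hfin : ∫⁻ x in V, ENNReal.ofReal (MM (se n) (k + 2) u x ^ 2) ≤ ENNReal.ofReal (2 * A ^ 2) *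
      (((n : ℝ≥0∞) ^ 2) ^ (k + 2) *
      (ENNReal.ofReal C0 * (ENNReal.ofReal B * X + ENNReal.ofReal B' * L)) + ENNReal.ofReal B' * L) := by
    refine (setLIntegral_mono' hVo.measurableSet hpt).trans ?_
    rw [lintegral_const_mul' _ _ ENNReal.ofReal_ne_top, lintegral_add_left']
    · exact mul_le_mul' le_rfl (add_le_add hTT ((lintegral_mono_set hVW).trans hLb))
    · exact ((TT_cont hVo i0 (k + 1) (hu.mono hVW)).aemeasurable hVo.measurableSet).pow_const 2
        |>.ennreal_ofReal
  refine hfin.trans ?_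
  have hDn : ((n : ℝ≥0∞) ^ 2) ^ (k + 2) = ENNReal.ofReal D := by
    rw [hD, ENNReal.ofReal_pow (by positivity), ENNReal.ofReal_pow (by positivity), ENNReal.ofReal_natCast]
  rw [hDn]
  have hBX : ENNReal.ofReal B * X + ENNReal.ofReal B' * L ≤ ENNReal.ofReal (B + B') * (X + L) := by
    rw [ENNReal.ofReal_add (by positivity) (by positivity), mul_add, add_mul, add_mul]
    exact add_le_add le_self_add le_add_self
  calc ENNReal.ofReal (2 * A ^ 2) * (ENNReal.ofReal D *
      (ENNReal.ofReal C0 * (ENNReal.ofReal B * X + ENNReal.ofReal B' * L)) + ENNReal.ofReal B' * L)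
      ≤ ENNReal.ofReal (2 * A ^ 2) * (ENNReal.ofReal D *
      (ENNReal.ofReal C0 * (ENNReal.ofReal (B + B') * (X + L))) + ENNReal.ofReal B' * (X + L)) := by
        gcongr
        exact le_add_self
    _ = ENNReal.ofReal (2 * A ^ 2 * (D * C0 * (B + B') + B')) * (X + L) := by
        have e1 : ENNReal.ofReal (2 * A ^ 2 * (D * C0 * (B + B') + B')) = ENNReal.ofReal (2 * A ^ 2) *
            (ENNReal.ofReal D * ENNReal.ofReal C0 * ENNReal.ofReal (B + B') + ENNReal.ofReal B') := by
          rw [← ENNReal.ofReal_mul (p := D) (by positivity),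
            ← ENNReal.ofReal_mul (p := D * C0) (by positivity),
            ← ENNReal.ofReal_add (by positivity) (by positivity),
            ← ENNReal.ofReal_mul (by positivity)]
        rw [e1]
        ring
    _ ≤ _ := by
        gcongr
        linarith

section
variable {n : ℕ}

lemma mem_closure_half {ν : Eu n} {c : ℝ} {y : Eu n} {R : ℝ} (hν : ‖ν‖ = 1) {x : Eu n}
    (hx : x ∈ ball y R) (hxc : ⟪ν, x⟫ = c) : x ∈ closure (HB ν c y R) := by
  have hnb : Filter.NeBot (nhdsWithin (0:ℝ) (Ioi 0)) := inferInstance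
  have ht : Filter.Tendsto (fun t : ℝ => x + t • ν) (nhdsWithin 0 (Ioi 0)) (nhds x) := by
    have : Continuous (fun t : ℝ => x + t • ν) := by fun_prop
    have h := this.tendsto 0
    simp only [zero_smul, add_zero] at h
    exact h.mono_left nhdsWithin_le_nhds
  refine mem_closure_of_tendsto ht ?_
  filter_upwards [ht (isOpen_ball.mem_nhds hx), self_mem_nhdsWithin] with t h1 h2
  refine ⟨?_, h1⟩
  show c < ⟪ν, x + t • ν⟫
  rw [inner_add_right, inner_smul_right, real_inner_self_eq_norm_sq, hν, hxc]
  have : (0:ℝ) < t := h2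
  linarith

lemma HB_convex (ν : Eu n) (c : ℝ) (y : Eu n) (R : ℝ) : Convex ℝ (HB ν c y R) := by
  refine Convex.inter ?_ (convex_ball y R)
  have : IsLinearMap ℝ (fun x : Eu n => ⟪ν, x⟫) :=
    ⟨fun x y => inner_add_right _ _ _, fun c x => inner_smul_right _ _ _⟩
  exact convex_halfSpace_gt this c

lemma sub_or_disj {A Ω : Set (Eu n)} (hO : IsOpen Ω) (hA : Convex ℝ A)
    (h : ∀ x ∈ A, x ∉ frontier Ω) : A ⊆ Ω ∨ A ∩ Ω = ∅ := by
  by_cases h2 : (A ∩ Ω).Nonempty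
  · refine Or.inl (hA.isPreconnected.subset_of_closure_inter_subset hO h2 ?_)
    rintro x ⟨hx, hxA⟩
    by_contra hxO
    refine h x hxA ?_
    rw [hO.frontier_eq]
    exact ⟨hx, hxO⟩
  · exact Or.inr (not_nonempty_iff_eq_empty.1 h2)

/-- one-hyperplane local lemma -/
lemma one_plane {Ω : Set (Eu n)} (hO : IsOpen Ω) (hfc : frontier Ω = frontier (closure Ω))
    {ν : Eu n} (hν : ‖ν‖ = 1) {c : ℝ} {y : Eu n} {R : ℝ}
    (hsub : ∀ x ∈ ball y R, x ∈ frontier Ω → ⟪ν, x⟫ = c)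
    (hne : (frontier Ω ∩ ball y R).Nonempty) :
    (∃ ν' c', ‖ν'‖ = 1 ∧ Ω ∩ ball y R = HB ν' c' y R ∧
      ∀ x ∈ ball y R, ⟪ν', x⟫ = c' → x ∈ frontier Ω) ∧
      ∀ x ∈ ball y R, ⟪ν, x⟫ = c → x ∈ frontier Ω := by
  -- the case of one good half
  have key : ∀ (ν : Eu n) (c : ℝ), ‖ν‖ = 1 → HB ν c y R ⊆ Ω → HB (-ν) (-c) y R ∩ Ω = ∅ →
      (Ω ∩ ball y R = HB ν c y R ∧ ∀ x ∈ ball y R, ⟪ν, x⟫ = c → x ∈ frontier Ω) := by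
    intro ν c hν h1 h2
    have hfr : ∀ x ∈ ball y R, ⟪ν, x⟫ = c → x ∈ frontier Ω := by
      intro x hx hxc
      rw [hO.frontier_eq]
      refine ⟨closure_mono h1 (mem_closure_half hν hx hxc), fun hxO => ?_⟩
      have h3 : x ∈ closure (HB (-ν) (-c) y R) :=
        mem_closure_half (by rw [norm_neg, hν]) hx (by rw [inner_neg_left, hxc])
      obtain ⟨z, hz, hz'⟩ := mem_closure_iff.1 h3 Ω hO hxO
      have : z ∈ HB (-ν) (-c) y R ∩ Ω := ⟨hz', hz⟩
      rw [h2] at this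
      exact this
    refine ⟨?_, hfr⟩
    ext x
    constructor
    · rintro ⟨hxO, hx⟩
      refine ⟨?_, hx⟩
      show c < ⟪ν, x⟫
      rcases lt_trichotomy c ⟪ν, x⟫ with h | h | h
      · exact h
      · have := hfr x hx h.symm
        rw [hO.frontier_eq] at this
        exact absurd hxO this.2
      · have : x ∈ HB (-ν) (-c) y R ∩ Ω := ⟨⟨by
          show -c < ⟪-ν, x⟫
          rw [inner_neg_left]; linarith, hx⟩, hxO⟩
        rw [h2] at this
        exact absurd this (notMem_empty x)
    · intro hx
      exact ⟨h1 hx, hx.2⟩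
  have hnν : ‖-ν‖ = 1 := by rw [norm_neg, hν]
  have hp : HB ν c y R ⊆ Ω ∨ HB ν c y R ∩ Ω = ∅ :=
    sub_or_disj hO (HB_convex _ _ _ _) fun x hx hf => by
      have h1 : c < ⟪ν, x⟫ := hx.1
      exact absurd (hsub x hx.2 hf) h1.ne'
  have hm : HB (-ν) (-c) y R ⊆ Ω ∨ HB (-ν) (-c) y R ∩ Ω = ∅ :=
    sub_or_disj hO (HB_convex _ _ _ _) fun x hx hf => by
      have h1 : -c < ⟪-ν, x⟫ := hx.1
      rw [inner_neg_left, hsub x hx.2 hf] at h1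
      exact lt_irrefl _ h1
  have cover : ∀ x ∈ ball y R, x ∈ HB ν c y R ∨ x ∈ HB (-ν) (-c) y R ∨ ⟪ν, x⟫ = c := by
    intro x hx
    rcases lt_trichotomy c ⟪ν, x⟫ with h | h | h
    · exact Or.inl ⟨h, hx⟩
    · exact Or.inr (Or.inr h.symm)
    · refine Or.inr (Or.inl ⟨?_, hx⟩)
      show -c < ⟪-ν, x⟫
      rw [inner_neg_left]; linarith
  obtain ⟨w, hwf, hwb⟩ := hne
  rcases hp with hp | hp <;> rcases hm with hm | hm
  · exfalso
    have hsubc : ball y R ⊆ closure Ω := by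
      intro x hx
      rcases cover x hx with h | h | h
      · exact subset_closure (hp h)
      · exact subset_closure (hm h)
      · exact closure_mono hp (mem_closure_half hν hx h)
    have : w ∈ interior (closure Ω) := interior_maximal hsubc isOpen_ball hwb
    rw [hfc] at hwf
    exact hwf.2 this
  · obtain ⟨k1, k2⟩ := key ν c hν hp hm
    exact ⟨⟨ν, c, hν, k1, k2⟩, k2⟩
  · obtain ⟨k1, k2⟩ := key (-ν) (-c) hnν hm (by simpa using hp)
    refine ⟨⟨-ν, -c, hnν, k1, k2⟩, fun x hx hxc => k2 x hx ?_⟩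
    rw [inner_neg_left, hxc]
  · exfalso
    have hw : w ∈ closure Ω := frontier_subset_closure hwf
    obtain ⟨z, hzb, hzO⟩ := mem_closure_iff.1 hw _ isOpen_ball hwb
    rcases cover z hzb with h | h | h
    · have : z ∈ HB ν c y R ∩ Ω := ⟨h, hzO⟩
      rw [hp] at this; exact this
    · have : z ∈ HB (-ν) (-c) y R ∩ Ω := ⟨h, hzO⟩
      rw [hm] at this; exact this
    · obtain ⟨q, hqO, hq⟩ := mem_closure_iff.1 (mem_closure_half hν hzb h) Ω hO hzO
      have : q ∈ HB ν c y R ∩ Ω := ⟨hq, hqO⟩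
      rw [hp] at this; exact this

lemma hyp_unit {H : Set (Eu n)} (h : IsAffineHyperplane H) :
    ∃ ν : Eu n, ∃ c : ℝ, ‖ν‖ = 1 ∧ H = {x | ⟪ν, x⟫ = c} := by
  obtain ⟨v, c, hv, rfl⟩ := h
  have hv' : ‖v‖ ≠ 0 := norm_ne_zero_iff.2 hv
  refine ⟨‖v‖⁻¹ • v, ‖v‖⁻¹ * c, ?_, ?_⟩
  · rw [norm_smul, norm_inv, norm_norm, inv_mul_cancel₀ hv']
  · ext x
    simp only [mem_ofPred_eq, real_inner_smul_left]
    exact ⟨fun h => by rw [h], fun h => mul_left_cancel₀ (inv_ne_zero hv') h⟩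

lemma hyp_closed {H : Set (Eu n)} (h : IsAffineHyperplane H) : IsClosed H := by
  obtain ⟨ν, c, -, rfl⟩ := hyp_unit h
  exact isClosed_eq (by fun_prop) continuous_const

variable {Ω : Set (Eu n)} {𝓗 : Finset (Set (Eu n))}

lemma S_closed (hΩ : IsPolyhedralDomain Ω 𝓗) : IsClosed (polySingularSet Ω 𝓗) := by
  have : polySingularSet Ω 𝓗 = frontier Ω ∩ ⋃ H₁ ∈ 𝓗, ⋃ H₂ ∈ 𝓗, {x | H₁ ≠ H₂ ∧ x ∈ H₁ ∧ x ∈ H₂} := by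
    ext x
    simp only [polySingularSet, mem_ofPred_eq, mem_inter_iff, mem_iUnion, exists_prop]
  rw [this]
  refine isClosed_frontier.inter (isClosed_biUnion_finset fun H₁ h₁ =>
    isClosed_biUnion_finset fun H₂ h₂ => ?_)
  by_cases h : H₁ = H₂
  · simp [h]
  · simp only [ne_eq, h, not_false_eq_true, true_and]
    exact (hyp_closed (hΩ.hyperplane _ h₁)).inter (hyp_closed (hΩ.hyperplane _ h₂))

lemma S_sub : polySingularSet Ω 𝓗 ⊆ frontier Ω := fun _ h => h.1

lemma eta_pos (hΩ : IsPolyhedralDomain Ω 𝓗) (hS : (polySingularSet Ω 𝓗).Nonempty) {x : Eu n}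
    (hx : x ∉ polySingularSet Ω 𝓗) : 0 < infDist x (polySingularSet Ω 𝓗) :=
  ((S_closed hΩ).notMem_iff_infDist_pos hS).1 hx

lemma eta_pos_in (hΩ : IsPolyhedralDomain Ω 𝓗) (hS : (polySingularSet Ω 𝓗).Nonempty) {x : Eu n}
    (hx : x ∈ Ω) : 0 < infDist x (polySingularSet Ω 𝓗) :=
  eta_pos hΩ hS fun h => by
    have := S_sub h
    rw [hΩ.isOpen.frontier_eq] at this
    exact this.2 hx

lemma eta_seg (hΩ : IsPolyhedralDomain Ω 𝓗) {H H' : Set (Eu n)} (hH : H ∈ 𝓗) (hH' : H' ∈ 𝓗)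
    (hne : H ≠ H') {y z : Eu n} (hy : y ∈ frontier Ω) (hyH : y ∈ H) (hz : z ∈ H) (hz' : z ∈ H') :
    infDist y (polySingularSet Ω 𝓗) ≤ dist y z := by
  classical
  by_contra hcon
  push Not at hcon
  obtain ⟨ν, c, hν, hHeq⟩ := hyp_unit (hΩ.hyperplane H hH)
  let f : ℝ → Eu n := fun t => AffineMap.lineMap y z t
  have hf : Continuous f := AffineMap.lineMap_continuous
  have hfH : ∀ t, f t ∈ H := by
    intro t
    rw [hHeq] at hyH hz ⊢
    have h1 : ⟪ν, y⟫ = c := hyH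
    have h2 : ⟪ν, z⟫ = c := hz
    show ⟪ν, AffineMap.lineMap y z t⟫ = c
    rw [AffineMap.lineMap_apply_module, inner_add_right, inner_smul_right, inner_smul_right, h1, h2]
    ring
  have hfS : ∀ t ∈ Icc (0:ℝ) 1, f t ∉ polySingularSet Ω 𝓗 := by
    intro t ht hS
    have h1 := infDist_le_dist_of_mem (x := y) hS
    have h2 : dist y (f t) = t * dist y z := by
      show dist y (AffineMap.lineMap y z t) = _
      rw [dist_left_lineMap, Real.norm_of_nonneg ht.1]
    have : t * dist y z ≤ dist y z := mul_le_of_le_one_left dist_nonneg ht.2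
    linarith
  have hI : Icc (0:ℝ) 1 ⊆ {t | f t ∈ frontier Ω} := by
    refine IsClosed.Icc_subset_of_forall_mem_nhdsWithin ?_ ?_ ?_
    · exact (isClosed_frontier.preimage hf).inter isClosed_Icc
    · show f 0 ∈ frontier Ω
      simpa [f] using hy
    · rintro t ⟨ht, ht'⟩
      have htf : f t ∈ frontier Ω := ht
      -- ball avoiding other hyperplanes
      have hcl : IsClosed (⋃ K ∈ 𝓗.erase H, K) :=
        isClosed_biUnion_finset fun K hK => hyp_closed (hΩ.hyperplane K (Finset.mem_of_mem_erase hK))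
      have hnot : f t ∈ (⋃ K ∈ 𝓗.erase H, K)ᶜ := by
        intro hmem
        simp only [mem_iUnion] at hmem
        obtain ⟨K, hK, hK'⟩ := hmem
        exact hfS t ⟨ht'.1, ht'.2.le⟩ ⟨htf, H, hH, K, Finset.mem_of_mem_erase hK,
          (Finset.ne_of_mem_erase hK).symm, hfH t, hK'⟩
      obtain ⟨R, hR, hball⟩ := Metric.isOpen_iff.1 hcl.isOpen_compl _ hnot
      have h1 := (one_plane hΩ.isOpen hΩ.frontier_closure hν (c := c) (y := f t) (R := R) ?_
        ⟨f t, htf, mem_ball_self hR⟩).2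
      · have h2 : f ⁻¹' ball (f t) R ∈ nhds t := hf.continuousAt (ball_mem_nhds _ hR)
        refine mem_nhdsWithin_of_mem_nhds (Filter.mem_of_superset h2 ?_)
        intro s hs
        refine h1 _ hs ?_
        have := hfH s
        rw [hHeq] at this
        exact this
      · intro x hx hxf
        have := hΩ.subset_union hxf
        simp only [mem_iUnion] at this
        obtain ⟨K, hK, hK'⟩ := this
        by_cases hKH : K = H
        · rw [hKH, hHeq] at hK'
          exact hK'
        · exact absurd (mem_biUnion (Finset.mem_coe.2 (Finset.mem_erase.2 ⟨hKH, hK⟩)) hK') (hball hx)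
  have h1 : f 1 ∈ frontier Ω := hI ⟨zero_le_one, le_rfl⟩
  have h2 : f 1 = z := by simp [f]
  rw [h2] at h1
  refine hfS 1 ⟨zero_le_one, le_rfl⟩ ?_
  rw [h2]
  exact ⟨h1, H, hH, H', hH', hne, hz, hz'⟩

end

section
variable {n : ℕ} {Ω : Set (Eu n)} {𝓗 : Finset (Set (Eu n))}

lemma eta_bdd (hΩ : IsPolyhedralDomain Ω 𝓗) (hS : (polySingularSet Ω 𝓗).Nonempty) :
    ∃ D : ℝ, 0 < D ∧ ∀ y ∈ closure Ω, infDist y (polySingularSet Ω 𝓗) ≤ D := by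
  obtain ⟨s, hs⟩ := hS
  obtain ⟨D, hD⟩ := (hΩ.isBounded.closure).subset_closedBall s
  refine ⟨max D 1, by positivity, fun y hy => ?_⟩
  exact (infDist_le_dist_of_mem hs).trans ((mem_closedBall.1 (hD hy)).trans (le_max_left _ _))

lemma pair_const (hΩ : IsPolyhedralDomain Ω 𝓗) (hS : (polySingularSet Ω 𝓗).Nonempty)
    {H H' : Set (Eu n)} (hH : H ∈ 𝓗) (hH' : H' ∈ 𝓗) (hne : H ≠ H') :
    ∃ c : ℝ, 0 < c ∧ ∀ y ∈ frontier Ω, y ∈ H → ∀ z ∈ H',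
      c * infDist y (polySingularSet Ω 𝓗) ≤ dist z y := by
  obtain ⟨a, α, ha, hHe⟩ := hyp_unit (hΩ.hyperplane H hH)
  obtain ⟨b, β, hb, hHe'⟩ := hyp_unit (hΩ.hyperplane H' hH')
  set p := b - ⟪a, b⟫ • a with hp
  have hap : ⟪a, p⟫ = 0 := by
    rw [hp, inner_sub_right, inner_smul_right, real_inner_self_eq_norm_sq, ha]; ring
  by_cases hp0 : p = 0
  · have hb' : b = ⟪a, b⟫ • a := by rw [hp, sub_eq_zero] at hp0; exact hp0
    set s := ⟪a, b⟫ with hs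
    have hs0 : s ≠ 0 := by
      intro h
      rw [h, zero_smul] at hb'
      rw [hb', norm_zero] at hb
      exact zero_ne_one hb
    have hd : β - s * α ≠ 0 := by
      intro h
      apply hne
      rw [hHe, hHe']
      ext x
      simp only [mem_ofPred_eq]
      rw [hb', real_inner_smul_left, sub_eq_zero.1 h]
      exact ⟨fun h => by rw [h], fun h => mul_left_cancel₀ hs0 h⟩
    obtain ⟨D, hD, hDη⟩ := eta_bdd hΩ hS
    refine ⟨|β - s * α| / D, by positivity, fun y hy hyH z hz => ?_⟩
    rw [hHe] at hyH
    rw [hHe'] at hz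
    have h1 : ⟪a, y⟫ = α := hyH
    have h2 : ⟪b, z⟫ = β := hz
    have h3 : ⟪b, z - y⟫ = β - s * α := by
      rw [inner_sub_right, h2]
      congr 1
      rw [hb', real_inner_smul_left, h1]
    have h4 : |β - s * α| ≤ dist z y := by
      rw [← h3, dist_eq_norm]
      refine (abs_real_inner_le_norm _ _).trans ?_
      rw [hb, one_mul]
    refine le_trans ?_ h4
    rw [div_mul_eq_mul_div, div_le_iff₀ hD]
    exact mul_le_mul_of_nonneg_left (hDη y (frontier_subset_closure hy)) (abs_nonneg _)
  · have hpn : 0 < ‖p‖ := norm_pos_iff.2 hp0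
    have hbp : ⟪b, p⟫ = ‖p‖ ^ 2 := by
      have : b = p + ⟪a, b⟫ • a := by rw [hp]; abel
      conv_lhs => rw [this]
      rw [inner_add_left, real_inner_smul_left, hap, real_inner_self_eq_norm_sq]; ring
    refine ⟨‖p‖, hpn, fun y hy hyH z hz => ?_⟩
    set w := y + ((β - ⟪b, y⟫) / ‖p‖ ^ 2) • p with hw
    have hwH : w ∈ H := by
      rw [hHe] at hyH ⊢
      have h1 : ⟪a, y⟫ = α := hyH
      show ⟪a, w⟫ = α
      rw [hw, inner_add_right, inner_smul_right, hap, h1]; ring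
    have hwH' : w ∈ H' := by
      rw [hHe']
      show ⟪b, w⟫ = β
      rw [hw, inner_add_right, inner_smul_right, hbp]
      field_simp
      ring
    have h1 := eta_seg hΩ hH hH' hne hy hyH hwH hwH'
    rw [hHe'] at hz
    have h2 : ⟪b, z⟫ = β := hz
    have h3 : dist y w * ‖p‖ = |⟪b, z - y⟫| := by
      rw [inner_sub_right, h2, hw, dist_eq_norm, sub_add_cancel_left, norm_neg, norm_smul,
        Real.norm_eq_abs, abs_div, abs_of_nonneg (sq_nonneg ‖p‖)]
      field_simp
    have h4 : |⟪b, z - y⟫| ≤ dist z y := by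
      rw [dist_eq_norm]
      refine (abs_real_inner_le_norm _ _).trans ?_
      rw [hb, one_mul]
    calc ‖p‖ * infDist y _ ≤ ‖p‖ * dist y w := mul_le_mul_of_nonneg_left h1 hpn.le
      _ = |⟪b, z - y⟫| := by rw [mul_comm, h3]
      _ ≤ _ := h4

lemma finset_min {ι : Type*} (s : Finset ι) (P : ι → ℝ → Prop)
    (hmono : ∀ i c c', 0 < c' → c' ≤ c → P i c → P i c') (h : ∀ i ∈ s, ∃ c, 0 < c ∧ P i c) :
    ∃ c, 0 < c ∧ ∀ i ∈ s, P i c := by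
  classical
  induction s using Finset.induction_on with
  | empty => exact ⟨1, one_pos, by simp⟩
  | insert a s ha ih =>
    obtain ⟨c, hc, hcs⟩ := ih fun i hi => h i (Finset.mem_insert_of_mem hi)
    obtain ⟨c', hc', hca⟩ := h a (Finset.mem_insert_self _ _)
    refine ⟨min c c', lt_min hc hc', fun i hi => ?_⟩
    rcases Finset.mem_insert.1 hi with rfl | hi
    · exact hmono _ _ _ (lt_min hc hc') (min_le_right _ _) hca
    · exact hmono _ _ _ (lt_min hc hc') (min_le_left _ _) (hcs i hi)

lemma all_const (hΩ : IsPolyhedralDomain Ω 𝓗) (hS : (polySingularSet Ω 𝓗).Nonempty) :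
    ∃ c : ℝ, 0 < c ∧ ∀ H ∈ 𝓗, ∀ H' ∈ 𝓗, H ≠ H' → ∀ y ∈ frontier Ω, y ∈ H → ∀ z ∈ H',
      c * infDist y (polySingularSet Ω 𝓗) ≤ dist z y := by
  classical
  obtain ⟨c, hc, h⟩ := finset_min (𝓗 ×ˢ 𝓗) (fun p c => p.1 ≠ p.2 → ∀ y ∈ frontier Ω, y ∈ p.1 →
      ∀ z ∈ p.2, c * infDist y (polySingularSet Ω 𝓗) ≤ dist z y)
    (fun p c c' _ hcc hP hne y hy hy1 z hz =>
      (mul_le_mul_of_nonneg_right hcc infDist_nonneg).trans (hP hne y hy hy1 z hz))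
    (fun p hp => by
      rw [Finset.mem_product] at hp
      by_cases hne : p.1 = p.2
      · exact ⟨1, one_pos, fun h => absurd hne h⟩
      · obtain ⟨c, hc, h⟩ := pair_const hΩ hS hp.1 hp.2 hne
        exact ⟨c, hc, fun _ => h⟩)
  exact ⟨c, hc, fun H hH H' hH' hne => h (H, H') (Finset.mem_product.2 ⟨hH, hH'⟩) hne⟩

/-- local structure of the domain at scale `c η(y)` -/
lemma local_structure (hn : 0 < n) (hΩ : IsPolyhedralDomain Ω 𝓗)
    (hS : (polySingularSet Ω 𝓗).Nonempty) :
    ∃ c : ℝ, 0 < c ∧ c ≤ 1 / 4 ∧ ∀ y : Eu n, 0 < infDist y (polySingularSet Ω 𝓗) →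
      Ω ∩ ball y (c * infDist y (polySingularSet Ω 𝓗)) = ∅ ∨
      ∃ (ν : Eu n) (c' : ℝ), ‖ν‖ = 1 ∧ Ω ∩ ball y (c * infDist y (polySingularSet Ω 𝓗)) =
          HB ν c' y (c * infDist y (polySingularSet Ω 𝓗)) ∧
        ∀ x ∈ ball y (c * infDist y (polySingularSet Ω 𝓗)), ⟪ν, x⟫ = c' → x ∈ frontier Ω := by
  obtain ⟨c1, hc1, hall⟩ := all_const hΩ hS
  set S := polySingularSet Ω 𝓗 with hSdef
  set c := min (c1 / 4) (1 / 4) with hc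
  have hc0 : 0 < c := by positivity
  have hc4 : c ≤ 1 / 4 := min_le_right _ _
  have hcc1 : 4 * c ≤ c1 := by have := min_le_left (c1 / 4) (1 / 4 : ℝ); rw [← hc] at this; linarith
  refine ⟨c, hc0, hc4, fun y hy => ?_⟩
  set R := c * infDist y S with hR
  have hRp : 0 < R := by positivity
  by_cases hne : (frontier Ω ∩ ball y R).Nonempty
  · right
    obtain ⟨w, hwf, hwb⟩ := hne
    have hU := hΩ.subset_union hwf
    simp only [mem_iUnion] at hU
    obtain ⟨H, hH, hwH⟩ := hU
    obtain ⟨ν, c', hν, hHe⟩ := hyp_unit (hΩ.hyperplane H hH)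
    refine (one_plane hΩ.isOpen hΩ.frontier_closure hν (c := c') ?_ ⟨w, hwf, hwb⟩).1
    intro x hx hxf
    have hU := hΩ.subset_union hxf
    simp only [mem_iUnion] at hU
    obtain ⟨K, hK, hxK⟩ := hU
    by_cases hKH : K = H
    · rw [hKH, hHe] at hxK
      exact hxK
    · exfalso
      have h1 := hall H hH K hK (Ne.symm hKH) w hwf hwH x hxK
      have h2 : infDist y S ≤ infDist w S + dist y w := infDist_le_infDist_add_dist
      have h3 : dist y w < R := by rw [dist_comm]; exact hwb
      have h4 : dist x w < 2 * R := by
        have := dist_triangle x y w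
        have h5 : dist x y < R := hx
        linarith
      have h6 : infDist y S ≤ 2 * infDist w S := by
        have : R ≤ 1 / 4 * infDist y S := mul_le_mul_of_nonneg_right hc4 hy.le
        linarith
      have h7 : 4 * c * infDist w S ≤ c1 * infDist w S :=
        mul_le_mul_of_nonneg_right hcc1 infDist_nonneg
      have h8 : 2 * R ≤ 4 * c * infDist w S := by
        rw [hR]; nlinarith
      linarith
  · rcases sub_or_disj hΩ.isOpen (convex_ball y R) (fun x hx hf => hne ⟨x, hf, hx⟩) with h | h
    · right
      refine ⟨se n ⟨0, hn⟩, ⟪se n ⟨0, hn⟩, y⟫ - R - 1, by simp [se], ?_, ?_⟩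
      · ext x
        constructor
        · rintro ⟨-, hx⟩
          refine ⟨?_, hx⟩
          show ⟪se n ⟨0, hn⟩, y⟫ - R - 1 < ⟪se n ⟨0, hn⟩, x⟫
          have h1 := abs_real_inner_le_norm (se n ⟨0, hn⟩) (x - y)
          have h2 : ‖se n ⟨0, hn⟩‖ = 1 := by simp [se]
          have h3 : ‖x - y‖ < R := by rw [← dist_eq_norm]; exact hx
          rw [h2, one_mul, inner_sub_right] at h1
          have := neg_le_of_abs_le h1
          linarith
        · intro hx
          exact ⟨h hx.2, hx.2⟩
      · intro x hx hxe
        exfalso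
        have h1 := abs_real_inner_le_norm (se n ⟨0, hn⟩) (x - y)
        have h2 : ‖se n ⟨0, hn⟩‖ = 1 := by simp [se]
        have h3 : ‖x - y‖ < R := by rw [← dist_eq_norm]; exact hx
        rw [h2, one_mul, inner_sub_right] at h1
        have := neg_le_of_abs_le h1
        linarith
    · left
      rw [inter_comm]; exact h

end

section
variable {n : ℕ} {Ω : Set (Eu n)} {𝓗 : Finset (Set (Eu n))}

lemma dense_compl (F : Finset (Set (Eu n))) (hF : ∀ H ∈ F, IsAffineHyperplane H) :
    Dense (⋃ H ∈ F, H)ᶜ := by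
  classical
  induction F using Finset.induction_on with
  | empty => simp
  | insert H F hH ih =>
    have h1 : Dense Hᶜ := by
      intro x
      by_cases hx : x ∈ H
      · obtain ⟨ν, c, hν, hHe⟩ := hyp_unit (hF H (Finset.mem_insert_self _ _))
        have hx' : ⟪ν, x⟫ = c := by rw [hHe] at hx; exact hx
        refine closure_mono ?_ (mem_closure_half (y := x) (R := 1) hν (mem_ball_self one_pos) hx')
        intro z hz hzH
        rw [hHe] at hzH
        have h1 : ⟪ν, z⟫ = c := hzH
        have h2 : c < ⟪ν, z⟫ := hz.1
        exact h2.ne' h1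
      · exact subset_closure hx
    have h2 := h1.inter_of_isOpen_left (ih fun K hK => hF K (Finset.mem_insert_of_mem hK))
      (hyp_closed (hF H (Finset.mem_insert_self _ _))).isOpen_compl
    rw [Finset.set_biUnion_insert, compl_union]
    exact h2

lemma cell_balls (hΩ : IsPolyhedralDomain Ω 𝓗) {Q : Set (Eu n)} (hQ : IsOpen Q) (hQc : Convex ℝ Q) :
    ∃ κ : ℝ, 0 < κ ∧ (Q ∩ Ω = ∅ → ∀ y ∈ frontier Ω, y ∈ closure Q → ∀ r, 0 < r → r ≤ 1 →
      ∃ z, dist z y ≤ r ∧ ball z (κ * r) ∩ Ω = ∅) := by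
  by_cases hne : Q.Nonempty
  · obtain ⟨x0, hx0⟩ := hne
    obtain ⟨ρ, hρ, hball⟩ := Metric.isOpen_iff.1 hQ x0 hx0
    obtain ⟨D, hD⟩ := (hΩ.isBounded.closure).subset_closedBall x0
    set D0 := max D 1 with hD0
    have hD1 : 1 ≤ D0 := le_max_right _ _
    have hDp : 0 < D0 := by linarith
    refine ⟨ρ / D0, by positivity, fun hQO y hy hyQ r hr hr1 => ?_⟩
    have hyD : dist y x0 ≤ D0 :=
      (mem_closedBall.1 (hD (frontier_subset_closure hy))).trans (le_max_left _ _)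
    set t := r / D0 with ht
    have ht0 : 0 < t := by positivity
    have ht1 : t ≤ 1 := by rw [ht, div_le_one hDp]; linarith
    refine ⟨y + t • (x0 - y), ?_, ?_⟩
    · rw [dist_eq_norm, add_sub_cancel_left, norm_smul, Real.norm_of_nonneg ht0.le, ← dist_eq_norm,
        dist_comm]
      calc t * dist y x0 ≤ t * D0 := mul_le_mul_of_nonneg_left hyD ht0.le
        _ = r := by rw [ht]; field_simp
    · rw [eq_empty_iff_forall_notMem]
      rintro w ⟨hw, hwO⟩
      have hq : x0 + t⁻¹ • (w - (y + t • (x0 - y))) ∈ interior Q := by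
        rw [hQ.interior_eq]
        apply hball
        rw [mem_ball, dist_eq_norm, add_sub_cancel_left, norm_smul, norm_inv,
          Real.norm_of_nonneg ht0.le, inv_mul_lt_iff₀ ht0, ← dist_eq_norm]
        have h1 : dist w (y + t • (x0 - y)) < ρ / D0 * r := hw
        have h2 : ρ / D0 * r = t * ρ := by rw [ht]; ring
        linarith
      have := hQc.combo_closure_interior_mem_interior hyQ hq (a := 1 - t) (b := t) (by linarith) ht0
        (by ring)
      have he : (1 - t) • y + t • (x0 + t⁻¹ • (w - (y + t • (x0 - y)))) = w := by
        rw [smul_add, smul_smul, mul_inv_cancel₀ ht0.ne', one_smul, sub_smul, one_smul, smul_sub]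
        abel
      rw [he] at this
      have h3 : w ∈ Q ∩ Ω := ⟨interior_subset this, hwO⟩
      rw [hQO] at h3
      exact h3
  · refine ⟨1, one_pos, fun _ y _ hyQ => ?_⟩
    rw [not_nonempty_iff_eq_empty.1 hne, closure_empty] at hyQ
    exact absurd hyQ (notMem_empty y)

lemma ext_balls (hΩ : IsPolyhedralDomain Ω 𝓗) :
    ∃ κ : ℝ, 0 < κ ∧ ∀ y ∈ frontier Ω, ∀ r, 0 < r → r ≤ 1 →
      ∃ z, dist z y ≤ r ∧ ball z (κ * r) ∩ Ω = ∅ := by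
  classical
  have hch : ∀ H : Set (Eu n), ∃ p : Eu n × ℝ, H ∈ 𝓗 → H = {x | ⟪p.1, x⟫ = p.2} := by
    intro H
    by_cases hH : H ∈ 𝓗
    · obtain ⟨ν, c, -, h⟩ := hyp_unit (hΩ.hyperplane H hH)
      exact ⟨(ν, c), fun _ => h⟩
    · exact ⟨0, fun h => absurd h hH⟩
  choose p hp using hch
  let half : Finset (Set (Eu n)) → Set (Eu n) → Set (Eu n) := fun σ H =>
    if H ∈ σ then {x | (p H).2 < ⟪(p H).1, x⟫} else {x | ⟪(p H).1, x⟫ < (p H).2}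
  let Q : Finset (Set (Eu n)) → Set (Eu n) := fun σ => ⋂ H ∈ 𝓗, half σ H
  have hlin : ∀ v : Eu n, IsLinearMap ℝ (fun x : Eu n => ⟪v, x⟫) := fun v =>
    ⟨fun x y => inner_add_right _ _ _, fun c x => inner_smul_right _ _ _⟩
  have hQo : ∀ σ, IsOpen (Q σ) := by
    intro σ
    refine isOpen_biInter_finset fun H _ => ?_
    simp only [half]
    split_ifs
    · exact isOpen_lt continuous_const (by fun_prop)
    · exact isOpen_lt (by fun_prop) continuous_const
  have hQc : ∀ σ, Convex ℝ (Q σ) := by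
    intro σ
    refine convex_iInter₂ fun H _ => ?_
    simp only [half]
    split_ifs
    · exact convex_halfSpace_gt (hlin _) _
    · exact convex_halfSpace_lt (hlin _) _
  have hQd : ∀ σ, ∀ x ∈ Q σ, x ∉ frontier Ω := by
    intro σ x hx hxf
    have hU := hΩ.subset_union hxf
    simp only [mem_iUnion] at hU
    obtain ⟨H, hH, hxH⟩ := hU
    have h1 : x ∈ half σ H := mem_iInter₂.1 hx H hH
    rw [hp H hH] at hxH
    have h2 : ⟪(p H).1, x⟫ = (p H).2 := hxH
    simp only [half] at h1
    split_ifs at h1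
    · have h3 : (p H).2 < ⟪(p H).1, x⟫ := h1
      exact h3.ne' h2
    · have h3 : ⟪(p H).1, x⟫ < (p H).2 := h1
      exact h3.ne h2
  have hQcov : ∀ x, x ∉ (⋃ H ∈ 𝓗, H) → ∃ σ ∈ 𝓗.powerset, x ∈ Q σ := by
    intro x hx
    refine ⟨𝓗.filter fun H => (p H).2 < ⟪(p H).1, x⟫, Finset.mem_powerset.2 (Finset.filter_subset _ _), ?_⟩
    refine mem_iInter₂.2 fun H hH => ?_
    simp only [half, Finset.mem_filter, hH, true_and]
    split_ifs with h
    · exact h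
    · show ⟪(p H).1, x⟫ < (p H).2
      refine lt_of_le_of_ne (not_lt.1 h) fun he => hx ?_
      refine mem_biUnion (Finset.mem_coe.2 hH) ?_
      rw [hp H hH]
      exact he
  obtain ⟨κ, hκ, hall⟩ := finset_min 𝓗.powerset (fun σ κ => Q σ ∩ Ω = ∅ → ∀ y ∈ frontier Ω,
      y ∈ closure (Q σ) → ∀ r, 0 < r → r ≤ 1 → ∃ z, dist z y ≤ r ∧ ball z (κ * r) ∩ Ω = ∅)
    (fun σ c c' hc' hcc h h1 y hy hyQ r hr hr1 => by
      obtain ⟨z, hz, hz'⟩ := h h1 y hy hyQ r hr hr1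
      refine ⟨z, hz, subset_empty_iff.1 ?_⟩
      rw [← hz']
      exact inter_subset_inter_left _ (ball_subset_ball (mul_le_mul_of_nonneg_right hcc hr.le)))
    (fun σ _ => cell_balls hΩ (hQo σ) (hQc σ))
  refine ⟨κ, hκ, fun y hy r hr hr1 => ?_⟩
  have hy1 : y ∈ closure ((closure Ω)ᶜ ∩ (⋃ H ∈ 𝓗, H)ᶜ) := by
    have hd := dense_compl 𝓗 hΩ.hyperplane
    have h1 : y ∈ closure (closure Ω)ᶜ := by
      rw [hΩ.frontier_closure] at hy
      rw [closure_compl]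
      exact hy.2
    have h2 := hd.open_subset_closure_inter (isClosed_closure (s := Ω)).isOpen_compl
    exact closure_minimal h2 isClosed_closure h1
  have hy2 : y ∈ closure (⋃ σ ∈ 𝓗.powerset.filter (fun σ => Q σ ∩ Ω = ∅), Q σ) := by
    refine closure_mono ?_ hy1
    rintro x ⟨hx1, hx2⟩
    obtain ⟨σ, hσ, hxσ⟩ := hQcov x hx2
    refine mem_biUnion (Finset.mem_coe.2 (Finset.mem_filter.2 ⟨hσ, ?_⟩)) hxσ
    rcases sub_or_disj hΩ.isOpen (hQc σ) (hQd σ) with h | h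
    · exact absurd (subset_closure (h hxσ)) hx1
    · exact h
  rw [Finset.closure_biUnion] at hy2
  simp only [mem_iUnion, Finset.mem_filter] at hy2
  obtain ⟨σ, ⟨hσ, hσO⟩, hyσ⟩ := hy2
  exact hall σ hσ hσO y hy hyσ r hr hr1

/-- finitely many directions reach the complement at distance comparable to `η` -/
lemma directions (hΩ : IsPolyhedralDomain Ω 𝓗) (hS : (polySingularSet Ω 𝓗).Nonempty) :
    ∃ E : Finset (Eu n), (∀ e ∈ E, ‖e‖ = 1) ∧ ∀ x ∈ Ω, ∃ e ∈ E, ∃ t : ℝ, 0 < t ∧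
      t ≤ 2 * infDist x (polySingularSet Ω 𝓗) ∧ x + t • e ∉ Ω := by
  obtain ⟨κ, hκ, hext⟩ := ext_balls hΩ
  obtain ⟨D, hD, hDη⟩ := eta_bdd hΩ hS
  set S := polySingularSet Ω 𝓗 with hSdef
  set D1 := max D 1 with hD1
  have hD11 : 1 ≤ D1 := le_max_right _ _
  have hDD : D ≤ D1 := le_max_left _ _
  have hDp : 0 < D1 := by linarith
  set δ := κ / (2 * D1) with hδ
  have hδ0 : 0 < δ := by positivity
  obtain ⟨E, hEs, hEf, hEc⟩ := (isCompact_sphere (0 : Eu n) 1).finite_cover_balls hδ0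
  refine ⟨hEf.toFinset, fun e he => by simpa using hEs (hEf.mem_toFinset.1 he), fun x hx => ?_⟩
  have hη : 0 < infDist x S := eta_pos_in hΩ hS hx
  obtain ⟨s, hs, hxs⟩ := (S_closed hΩ).exists_infDist_eq_dist hS x
  set r := infDist x S / D1 with hr
  have hr0 : 0 < r := by positivity
  have hxD : infDist x S ≤ D1 := (hDη x (subset_closure hx)).trans hDD
  have hr1 : r ≤ 1 := by rw [hr, div_le_one hDp]; exact hxD
  have hrη : r ≤ infDist x S := by rw [hr]; exact div_le_self hη.le hD11
  obtain ⟨z, hz, hzO⟩ := hext s (S_sub hs) r hr0 hr1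
  have hzx : z ≠ x := by
    rintro rfl
    have : z ∈ ball z (κ * r) ∩ Ω := ⟨mem_ball_self (by positivity), hx⟩
    rw [hzO] at this
    exact this
  have hl0 : 0 < ‖z - x‖ := norm_pos_iff.2 (sub_ne_zero.2 hzx)
  have hl2 : ‖z - x‖ ≤ 2 * infDist x S := by
    rw [← dist_eq_norm]
    have := dist_triangle z s x
    rw [dist_comm s x, ← hxs] at this
    linarith
  set e0 := ‖z - x‖⁻¹ • (z - x) with he0
  have he0s : e0 ∈ sphere (0 : Eu n) 1 := by
    rw [mem_sphere_zero_iff_norm, he0, norm_smul, norm_inv, norm_norm, inv_mul_cancel₀ hl0.ne']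
  obtain ⟨e, heE, hee⟩ := mem_iUnion₂.1 (hEc he0s)
  refine ⟨e, hEf.mem_toFinset.2 heE, ‖z - x‖, hl0, hl2, fun hmem => ?_⟩
  have : x + ‖z - x‖ • e ∈ ball z (κ * r) ∩ Ω := by
    refine ⟨?_, hmem⟩
    have hz' : z = x + ‖z - x‖ • e0 := by
      rw [he0, smul_smul, mul_inv_cancel₀ hl0.ne', one_smul]; abel
    have h1 : x + ‖z - x‖ • e - z = ‖z - x‖ • (e - e0) := by
      have h2 : x + ‖z - x‖ • e - z = x + ‖z - x‖ • e - (x + ‖z - x‖ • e0) :=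
        congrArg (fun w => x + ‖z - x‖ • e - w) hz'
      rw [h2, smul_sub]; abel
    have h3 : ‖e - e0‖ < δ := by rw [← dist_eq_norm, dist_comm]; exact hee
    rw [mem_ball, dist_eq_norm, h1, norm_smul, norm_norm]
    calc ‖z - x‖ * ‖e - e0‖ < ‖z - x‖ * δ := mul_lt_mul_of_pos_left h3 hl0
      _ ≤ 2 * infDist x S * δ := mul_le_mul_of_nonneg_right hl2 hδ0.le
      _ = κ * r := by rw [hδ, hr]; field_simp
  rw [hzO] at this
  exact this

end

section
variable {n : ℕ}

/-- exit time in direction `e` -/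
def tau (Ω : Set (Eu n)) (e x : Eu n) : ℝ := sInf {t : ℝ | 0 ≤ t ∧ x + t • e ∉ Ω}

variable {Ω : Set (Eu n)} {e : Eu n}

lemma tau_bdd (x : Eu n) : BddBelow {t : ℝ | 0 ≤ t ∧ x + t • e ∉ Ω} := ⟨0, fun _ h => h.1⟩

lemma tau_mem (hO : IsOpen Ω) (hB : Bornology.IsBounded Ω) (he : ‖e‖ = 1) (x : Eu n) :
    0 ≤ tau Ω e x ∧ x + tau Ω e x • e ∉ Ω := by
  have hne : {t : ℝ | 0 ≤ t ∧ x + t • e ∉ Ω}.Nonempty := by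
    obtain ⟨D, hD⟩ := hB.subset_closedBall x
    refine ⟨|D| + 1, by positivity, fun h => ?_⟩
    have := mem_closedBall.1 (hD h)
    rw [dist_eq_norm, add_sub_cancel_left, norm_smul, he, mul_one, Real.norm_of_nonneg (by positivity)] at this
    linarith [le_abs_self D]
  have hcl : IsClosed {t : ℝ | 0 ≤ t ∧ x + t • e ∉ Ω} := by
    refine (isClosed_Ici (a := (0:ℝ))).inter ?_
    exact hO.isClosed_compl.preimage (f := fun t : ℝ => x + t • e) (by fun_prop)
  exact hcl.csInf_mem hne (tau_bdd x)

lemma tau_le {x : Eu n} {t : ℝ} (ht : 0 ≤ t) (h : x + t • e ∉ Ω) : tau Ω e x ≤ t :=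
  csInf_le (tau_bdd x) ⟨ht, h⟩

lemma tau_in {x : Eu n} {t : ℝ} (ht : 0 ≤ t) (h : t < tau Ω e x) : x + t • e ∈ Ω := by
  by_contra hc
  exact absurd (tau_le ht hc) (not_le.2 h)

lemma tau_pos (hO : IsOpen Ω) (hB : Bornology.IsBounded Ω) (he : ‖e‖ = 1) {x : Eu n} (hx : x ∈ Ω) :
    0 < tau Ω e x := by
  have h := tau_mem hO hB he x
  refine lt_of_le_of_ne h.1 fun h0 => h.2 ?_
  rw [← h0]; simpa using hx

lemma tau_shift (hO : IsOpen Ω) (hB : Bornology.IsBounded Ω) (he : ‖e‖ = 1) {x : Eu n} {s : ℝ}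
    (hs : 0 ≤ s) (hst : s ≤ tau Ω e x) : tau Ω e (x + s • e) = tau Ω e x - s := by
  have h1 := tau_mem hO hB he x
  have h2 := tau_mem hO hB he (x + s • e)
  apply le_antisymm
  · refine tau_le (by linarith) ?_
    rw [add_assoc, ← add_smul, add_sub_cancel]
    exact h1.2
  · have : tau Ω e x ≤ s + tau Ω e (x + s • e) := by
      refine tau_le (by linarith) ?_
      rw [add_smul, ← add_assoc]
      exact h2.2
    linarith

open scoped Pointwise in
lemma tau_meas (hO : IsOpen Ω) (hB : Bornology.IsBounded Ω) (he : ‖e‖ = 1) :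
    Measurable (tau Ω e) := by
  refine measurable_of_Iic fun a => ?_
  by_cases ha : 0 ≤ a
  · have : tau Ω e ⁻¹' Iic a = Ωᶜ + (fun t : ℝ => -(t • e)) '' Icc 0 a := by
      ext x
      constructor
      · intro hx
        have h := tau_mem hO hB he x
        refine ⟨x + tau Ω e x • e, h.2, -(tau Ω e x • e), ⟨_, ⟨h.1, hx⟩, rfl⟩, by simp⟩
      · rintro ⟨z, hz, w, ⟨t, ht, rfl⟩, rfl⟩
        refine (tau_le ht.1 ?_).trans ht.2
        simpa using hz
    rw [this]
    refine IsClosed.measurableSet ?_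
    refine IsClosed.add_right_of_isCompact hO.isClosed_compl ?_
    exact isCompact_Icc.image (by fun_prop)
  · have : tau Ω e ⁻¹' Iic a = ∅ := by
      rw [eq_empty_iff_forall_notMem]
      intro x hx
      have h : tau Ω e x ≤ a := hx
      exact ha ((tau_mem hO hB he x).1.trans h)
    rw [this]; exact MeasurableSet.empty

lemma tau_frontier (hO : IsOpen Ω) (hB : Bornology.IsBounded Ω) (he : ‖e‖ = 1) {x : Eu n} (hx : x ∈ Ω) :
    x + tau Ω e x • e ∈ frontier Ω := by
  rw [hO.frontier_eq]
  refine ⟨?_, (tau_mem hO hB he x).2⟩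
  have hpos := tau_pos hO hB he hx
  have hc : Filter.Tendsto (fun t : ℝ => x + t • e) (nhdsWithin (tau Ω e x) (Iio (tau Ω e x)))
      (nhds (x + tau Ω e x • e)) := by
    have : Continuous (fun t : ℝ => x + t • e) := by fun_prop
    exact (this.tendsto _).mono_left nhdsWithin_le_nhds
  refine mem_closure_of_tendsto hc ?_
  filter_upwards [Ioo_mem_nhdsLT hpos] with t ht
  exact tau_in ht.1.le ht.2

lemma int_inv_sqrt {τ s : ℝ} (hs : 0 ≤ s) (hst : s < τ) :
    ∫⁻ σ in Ioc 0 s, ENNReal.ofReal ((1 / √√(τ - σ)) ^ 2) ≤ ENNReal.ofReal (2 * √τ) := by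
  have hpos : ∀ σ ∈ Icc 0 s, 0 < √(τ - σ) := fun σ hσ => Real.sqrt_pos.2 (by linarith [hσ.2])
  have he : ∀ σ, (1 / √√(τ - σ)) ^ 2 = 1 / √(τ - σ) := by
    intro σ
    rw [div_pow, one_pow, Real.sq_sqrt (Real.sqrt_nonneg _)]
  simp only [he]
  have hcont : ContinuousOn (fun σ => 1 / √(τ - σ)) (Icc 0 s) :=
    continuousOn_const.div (by fun_prop) fun σ hσ => (hpos σ hσ).ne'
  have hintg : IntegrableOn (fun σ => 1 / √(τ - σ)) (Ioc 0 s) :=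
    (hcont.integrableOn_Icc).mono_set Ioc_subset_Icc_self
  rw [← ofReal_integral_eq_lintegral_ofReal hintg
    (Filter.Eventually.of_forall fun σ => by positivity)]
  apply ENNReal.ofReal_le_ofReal
  rw [← intervalIntegral.integral_of_le hs]
  have := intervalIntegral.integral_eq_sub_of_hasDerivAt (a := 0) (b := s)
    (f := fun σ => -2 * √(τ - σ)) (f' := fun σ => 1 / √(τ - σ)) ?_ ?_
  · rw [this]
    have := Real.sqrt_nonneg (τ - s)
    simp only [sub_zero]
    linarith
  · intro σ hσ
    rw [uIcc_of_le hs] at hσ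
    have h1 : HasDerivAt (fun σ => τ - σ) (-1) σ := by
      simpa using (hasDerivAt_id σ).const_sub τ
    have h2 := (h1.sqrt (ne_of_gt (by linarith [hσ.2]))).const_mul (-2)
    have h3 : -2 * (-1 / (2 * √(τ - σ))) = 1 / √(τ - σ) := by ring
    rw [h3] at h2
    exact h2
  · rw [intervalIntegrable_iff_integrableOn_Ioc_of_le hs]
    exact hintg

lemma hardy_pt (hO : IsOpen Ω) (hB : Bornology.IsBounded Ω) (he : ‖e‖ = 1) {g : Eu n → ℝ}
    (hg : Sm Ω g) (hgc : ContinuousOn g (closure Ω)) (hg0 : ∀ x ∈ frontier Ω, g x = 0)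
    {x : Eu n} (hx : x ∈ Ω) :
    ENNReal.ofReal (g x ^ 2) ≤ ENNReal.ofReal (2 * √(tau Ω e x)) *
      ∫⁻ s in Ioo 0 (tau Ω e x), ENNReal.ofReal (√(tau Ω e x - s) * pd e g (x + s • e) ^ 2) := by
  set τ := tau Ω e x with hτ
  have hτ0 : 0 < τ := tau_pos hO hB he hx
  have hin : ∀ s, 0 ≤ s → s < τ → x + s • e ∈ Ω := fun s h1 h2 => tau_in h1 h2
  have hline : Continuous (fun s : ℝ => x + s • e) := by fun_prop
  have hfin : x + τ • e ∈ frontier Ω := tau_frontier hO hB he hx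
  set R := ENNReal.ofReal (2 * √τ) *
      ∫⁻ s in Ioo 0 τ, ENNReal.ofReal (√(τ - s) * pd e g (x + s • e) ^ 2) with hR
  have step : ∀ s ∈ Ioo 0 τ, ENNReal.ofReal ((g x - g (x + s • e)) ^ 2) ≤ R := by
    intro s hs
    have hpc : ContinuousOn (fun σ : ℝ => pd e g (x + σ • e)) (Icc 0 s) :=
      (hg.pd hO e).continuousOn.comp hline.continuousOn
        fun σ hσ => hin σ hσ.1 (hσ.2.trans_lt hs.2)
    have h1 : ∫ σ in (0:ℝ)..s, pd e g (x + σ • e) = g (x + s • e) - g x := by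
      have := intervalIntegral.integral_eq_sub_of_hasDerivAt (a := 0) (b := s)
        (f := fun σ : ℝ => g (x + σ • e)) (f' := fun σ => pd e g (x + σ • e)) ?_ ?_
      · simpa using this
      · intro σ hσ
        rw [uIcc_of_le hs.1.le] at hσ
        exact hasDerivAt_line hO hg e x σ (hin σ hσ.1 (hσ.2.trans_lt hs.2))
      · rw [← uIcc_of_le hs.1.le] at hpc
        exact hpc.intervalIntegrable
    have hpos : ∀ σ ∈ Ioc 0 s, 0 < √√(τ - σ) := fun σ hσ =>
      Real.sqrt_pos.2 (Real.sqrt_pos.2 (by linarith [hσ.2, hs.2]))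
    have h2 : (g x - g (x + s • e)) ^ 2 = (∫ σ in Ioc 0 s, (1 / √√(τ - σ)) *
        (√√(τ - σ) * pd e g (x + σ • e))) ^ 2 := by
      rw [← neg_sub, neg_sq, ← h1, intervalIntegral.integral_of_le hs.1.le]
      congr 1
      refine setIntegral_congr_fun measurableSet_Ioc fun σ hσ => ?_
      have := (hpos σ hσ).ne'
      show pd e g (x + σ • e) = _
      field_simp
    rw [h2]
    refine (cs_sq (volume.restrict (Ioc 0 s)) ?_ ?_).trans ?_
    · exact (Measurable.aemeasurable (by fun_prop))
    · refine AEMeasurable.mul (Measurable.aemeasurable (by fun_prop)) ?_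
      exact (hpc.mono Ioc_subset_Icc_self).aemeasurable measurableSet_Ioc
    · rw [hR]
      refine mul_le_mul' (int_inv_sqrt hs.1.le hs.2) ?_
      refine le_trans (le_of_eq ?_) (lintegral_mono_set (s := Ioc 0 s) fun σ hσ => ⟨hσ.1, hσ.2.trans_lt hs.2⟩)
      refine lintegral_congr fun σ => ?_
      rw [mul_pow, Real.sq_sqrt (Real.sqrt_nonneg _)]
  have hcont : ContinuousWithinAt (fun s : ℝ => g (x + s • e)) (Icc 0 τ) τ := by
    have h1 : ContinuousWithinAt g (closure Ω) (x + τ • e) := hgc _ (frontier_subset_closure hfin)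
    refine ContinuousWithinAt.comp (t := closure Ω) h1 hline.continuousWithinAt ?_
    intro s hs
    rcases hs.2.lt_or_eq with h | h
    · exact subset_closure (hin s hs.1 h)
    · rw [h]; exact frontier_subset_closure hfin
  have ht : Filter.Tendsto (fun s : ℝ => g (x + s • e)) (nhdsWithin τ (Iio τ)) (nhds 0) := by
    have h1 : Filter.Tendsto (fun s : ℝ => g (x + s • e)) (nhdsWithin τ (Ioo 0 τ)) (nhds (g (x + τ • e))) :=
      hcont.tendsto.mono_left (nhdsWithin_mono _ Ioo_subset_Icc_self)
    rw [hg0 _ hfin, nhdsWithin_Ioo_eq_nhdsLT hτ0] at h1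
    exact h1
  have ht2 : Filter.Tendsto (fun s : ℝ => ENNReal.ofReal ((g x - g (x + s • e)) ^ 2))
      (nhdsWithin τ (Iio τ)) (nhds (ENNReal.ofReal (g x ^ 2))) := by
    have := ENNReal.tendsto_ofReal ((ht.const_sub (g x)).pow 2)
    simpa using this
  refine le_of_tendsto ht2 ?_
  filter_upwards [Ioo_mem_nhdsLT hτ0] with s hs
  exact step s hs

lemma tail_int {τ : ℝ} (hτ : 0 < τ) :
    ∫⁻ s in Ioi (0:ℝ), ENNReal.ofReal ((s + τ) ^ (-3 / 2 : ℝ)) = ENNReal.ofReal (2 * τ ^ (-1 / 2 : ℝ)) := by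
  have h1 : ∫⁻ s in Ioi (0:ℝ), ENNReal.ofReal ((s + τ) ^ (-3 / 2 : ℝ)) =
      ∫⁻ s in Ioi τ, ENNReal.ofReal (s ^ (-3 / 2 : ℝ)) := by
    rw [← lintegral_indicator measurableSet_Ioi, ← lintegral_indicator measurableSet_Ioi,
      ← lintegral_add_right_eq_self ((Ioi τ).indicator _) τ]
    refine lintegral_congr fun s => ?_
    by_cases hs : 0 < s
    · rw [indicator_of_mem (show s ∈ Ioi (0:ℝ) from hs),
        indicator_of_mem (show s + τ ∈ Ioi τ from by simp [hs])]
    · rw [indicator_of_notMem (show s ∉ Ioi (0:ℝ) from hs),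
        indicator_of_notMem (show s + τ ∉ Ioi τ from by simpa using hs)]
  rw [h1, ← ofReal_integral_eq_lintegral_ofReal (integrableOn_Ioi_rpow_of_lt (by norm_num) hτ)
    ((ae_restrict_iff' measurableSet_Ioi).2 (Filter.Eventually.of_forall fun s hs =>
      Real.rpow_nonneg (hτ.le.trans (le_of_lt hs)) _)), integral_Ioi_rpow_of_lt (by norm_num) hτ]
  congr 1
  norm_num
  ring

lemma hardy_dir (hO : IsOpen Ω) (hB : Bornology.IsBounded Ω) (he : ‖e‖ = 1) {g : Eu n → ℝ}
    (hg : Sm Ω g) (hgc : ContinuousOn g (closure Ω)) (hg0 : ∀ x ∈ frontier Ω, g x = 0) :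
    ∫⁻ x in Ω, ENNReal.ofReal (g x ^ 2 / tau Ω e x ^ 2) ≤
      4 * ∫⁻ x in Ω, ENNReal.ofReal (pd e g x ^ 2) := by
  set τ := tau Ω e with hτ
  have hτm : Measurable τ := tau_meas hO hB he
  have hτp : ∀ x ∈ Ω, 0 < τ x := fun x hx => tau_pos hO hB he hx
  let Hf : Eu n → ℝ≥0∞ := Ω.indicator fun x => ENNReal.ofReal (pd e g x ^ 2)
  have hHm : Measurable Hf := meas_ind hO ((hg.pd hO e).continuousOn.pow 2)
  let K : Eu n × ℝ → ℝ≥0∞ := fun p => (Ioi (0:ℝ)).indicator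
    (fun s => ENNReal.ofReal ((s + τ p.1) ^ (-3 / 2 : ℝ))) p.2 * (ENNReal.ofReal (2 * √(τ p.1)) * Hf p.1)
  have hKm : Measurable K := by
    have h1 : Measurable (fun p : Eu n × ℝ => (Ioi (0:ℝ)).indicator
        (fun s => ENNReal.ofReal ((s + τ p.1) ^ (-3 / 2 : ℝ))) p.2) := by
      have : (fun p : Eu n × ℝ => (Ioi (0:ℝ)).indicator
        (fun s => ENNReal.ofReal ((s + τ p.1) ^ (-3 / 2 : ℝ))) p.2) =
        (Prod.snd ⁻¹' Ioi (0:ℝ)).indicator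
          (fun p : Eu n × ℝ => ENNReal.ofReal ((p.2 + τ p.1) ^ (-3 / 2 : ℝ))) := rfl
      rw [this]
      exact Measurable.indicator (by fun_prop) (measurable_snd measurableSet_Ioi)
    refine h1.mul (Measurable.mul (by fun_prop) (hHm.comp measurable_fst))
  calc ∫⁻ x in Ω, ENNReal.ofReal (g x ^ 2 / τ x ^ 2)
      ≤ ∫⁻ x in Ω, ∫⁻ s, K (x + s • e, s) := by
        refine setLIntegral_mono' hO.measurableSet fun x hx => ?_
        have h1 := hardy_pt hO hB he hg hgc hg0 hx
        rw [← hτ] at h1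
        have hp := hτp x hx
        rw [div_eq_inv_mul, ENNReal.ofReal_mul (by positivity)]
        refine (mul_le_mul' le_rfl h1).trans ?_
        rw [← lintegral_const_mul' _ _ ENNReal.ofReal_ne_top,
          ← lintegral_const_mul' _ _ ENNReal.ofReal_ne_top,
          ← lintegral_indicator measurableSet_Ioo]
        refine lintegral_mono fun s => ?_
        by_cases hs : s ∈ Ioo 0 (τ x)
        · rw [indicator_of_mem hs]
          have hz : x + s • e ∈ Ω := tau_in hs.1.le hs.2
          have hsh : τ (x + s • e) = τ x - s := tau_shift hO hB he hs.1.le hs.2.le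
          simp only [K, Hf]
          rw [indicator_of_mem (show s ∈ Ioi (0:ℝ) from hs.1), indicator_of_mem hz, hsh,
            ← ENNReal.ofReal_mul (by positivity), ← ENNReal.ofReal_mul (by positivity),
            ← ENNReal.ofReal_mul (by positivity), ← ENNReal.ofReal_mul (by
              rw [add_sub_cancel]; positivity), add_sub_cancel]
          apply ENNReal.ofReal_le_ofReal
          have : (τ x ^ 2)⁻¹ * √(τ x) = τ x ^ (-3 / 2 : ℝ) := by
            rw [Real.sqrt_eq_rpow, ← Real.rpow_natCast, ← Real.rpow_neg hp.le, ← Real.rpow_add hp]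
            norm_num
          rw [← this]
          apply le_of_eq
          ring
        · rw [indicator_of_notMem hs]; exact zero_le
    _ ≤ ∫⁻ x, ∫⁻ s, K (x + s • e, s) := setLIntegral_le_lintegral _ _
    _ = ∫⁻ s, ∫⁻ x, K (x + s • e, s) := by
        refine lintegral_lintegral_swap (Measurable.aemeasurable ?_)
        exact hKm.comp (by fun_prop)
    _ = ∫⁻ s, ∫⁻ x, K (x, s) := by
        refine lintegral_congr fun s => ?_
        exact lintegral_add_right_eq_self (fun x => K (x, s)) (s • e)
    _ = ∫⁻ x, ∫⁻ s, K (x, s) := (lintegral_lintegral_swap hKm.aemeasurable).symm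
    _ = ∫⁻ x, 4 * Hf x := by
        refine lintegral_congr fun x => ?_
        simp only [K]
        by_cases hx : x ∈ Ω
        · have hp := hτp x hx
          rw [lintegral_mul_const' _ _ (by
            simp only [Hf]; rw [indicator_of_mem hx]
            exact ENNReal.mul_ne_top ENNReal.ofReal_ne_top ENNReal.ofReal_ne_top),
            lintegral_indicator measurableSet_Ioi, tail_int hp, ← mul_assoc,
            ← ENNReal.ofReal_mul (by positivity)]
          congr 1
          rw [show (4 : ℝ≥0∞) = ENNReal.ofReal 4 by simp]
          congr 1
          have : τ x ^ (-1 / 2 : ℝ) * √(τ x) = 1 := by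
            rw [Real.sqrt_eq_rpow, ← Real.rpow_add hp]; norm_num
          linear_combination 4 * this
        · have : Hf x = 0 := indicator_of_notMem hx _
          simp [this]
    _ = 4 * ∫⁻ x in Ω, ENNReal.ofReal (pd e g x ^ 2) := by
        rw [lintegral_const_mul' _ _ (by simp), lintegral_indicator hO.measurableSet]

end

section
variable {n : ℕ} {Ω : Set (Eu n)} {𝓗 : Finset (Set (Eu n))}

lemma pd_sq_le_gs {e : Eu n} (he : ‖e‖ = 1) (g : Eu n → ℝ) (x : Eu n) :
    pd e g x ^ 2 ≤ gs (se n) g x := by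
  have h1 : pd e g x = ∑ i, e i * pd (se n i) g x := by
    conv_lhs => rw [expand_se e]
    rw [pd_vsum]
  have h2 : ∑ i, e i ^ 2 = 1 := by
    have := EuclideanSpace.real_norm_sq_eq e
    rw [← this, he]; norm_num
  rw [h1]
  have := Finset.sum_mul_sq_le_sq_mul_sq Finset.univ (fun i => e i) (fun i => pd (se n i) g x)
  rw [h2, one_mul] at this
  exact this

/-- Hardy inequality -/
lemma hardy (hΩ : IsPolyhedralDomain Ω 𝓗) (hS : (polySingularSet Ω 𝓗).Nonempty) :
    ∃ C : ℝ, 0 < C ∧ ∀ g : Eu n → ℝ, Sm Ω g → ContinuousOn g (closure Ω) →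
      (∀ x ∈ frontier Ω, g x = 0) →
      ∫⁻ x in Ω, ENNReal.ofReal (g x ^ 2 / infDist x (polySingularSet Ω 𝓗) ^ 2) ≤
        ENNReal.ofReal C * ∫⁻ x in Ω, ENNReal.ofReal (gs (se n) g x) := by
  obtain ⟨E, hE1, hE⟩ := directions hΩ hS
  set S := polySingularSet Ω 𝓗 with hSd
  refine ⟨16 * E.card + 1, by positivity, fun g hg hgc hg0 => ?_⟩
  have hO := hΩ.isOpen
  have hB := hΩ.isBounded
  have hae : ∀ e ∈ E, AEMeasurable (fun x => ENNReal.ofReal (4 * (g x ^ 2 / tau Ω e x ^ 2)))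
      (volume.restrict Ω) := by
    intro e he
    refine AEMeasurable.ennreal_ofReal (AEMeasurable.const_mul (AEMeasurable.div ?_ ?_) _)
    · exact (hg.continuousOn.pow 2).aemeasurable hO.measurableSet
    · exact ((tau_meas hO hB (hE1 e he)).pow_const 2).aemeasurable
  calc ∫⁻ x in Ω, ENNReal.ofReal (g x ^ 2 / infDist x S ^ 2)
      ≤ ∫⁻ x in Ω, ∑ e ∈ E, ENNReal.ofReal (4 * (g x ^ 2 / tau Ω e x ^ 2)) := by
        refine setLIntegral_mono' hO.measurableSet fun x hx => ?_
        obtain ⟨e, he, t, ht, htη, hte⟩ := hE x hx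
        have h1 : tau Ω e x ≤ t := tau_le ht.le hte
        have h2 := tau_pos hO hB (hE1 e he) hx
        have h3 := eta_pos_in hΩ hS hx
        rw [← hSd] at h3
        refine le_trans ?_ (Finset.single_le_sum (f := fun e => ENNReal.ofReal (4 * (g x ^ 2 / tau Ω e x ^ 2)))
          (fun _ _ => zero_le) he)
        apply ENNReal.ofReal_le_ofReal
        rw [← mul_div_assoc, div_le_div_iff₀ (by positivity) (by positivity)]
        have h4 : tau Ω e x ^ 2 ≤ 4 * infDist x S ^ 2 := by
          have := pow_le_pow_left₀ h2.le (h1.trans htη) 2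
          linarith [this, mul_pow 2 (infDist x S) 2]
        nlinarith [sq_nonneg (g x)]
    _ = ∑ e ∈ E, ∫⁻ x in Ω, ENNReal.ofReal (4 * (g x ^ 2 / tau Ω e x ^ 2)) :=
        lintegral_finsetSum' _ hae
    _ ≤ ∑ e ∈ E, 16 * ∫⁻ x in Ω, ENNReal.ofReal (gs (se n) g x) := by
        refine Finset.sum_le_sum fun e he => ?_
        have h1 : ∀ x, ENNReal.ofReal (4 * (g x ^ 2 / tau Ω e x ^ 2)) =
            4 * ENNReal.ofReal (g x ^ 2 / tau Ω e x ^ 2) := fun x => by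
          rw [ENNReal.ofReal_mul (by norm_num)]; simp
        simp only [h1]
        rw [lintegral_const_mul' _ _ (by simp)]
        refine (mul_le_mul' le_rfl (hardy_dir hO hB (hE1 e he) hg hgc hg0)).trans ?_
        rw [← mul_assoc, show (4 : ℝ≥0∞) * 4 = 16 by norm_num]
        refine mul_le_mul' le_rfl (lintegral_mono fun x => ENNReal.ofReal_le_ofReal ?_)
        exact pd_sq_le_gs (hE1 e he) g x
    _ = ENNReal.ofReal (16 * E.card) * ∫⁻ x in Ω, ENNReal.ofReal (gs (se n) g x) := by
        rw [Finset.sum_const, nsmul_eq_mul, ENNReal.ofReal_mul (by norm_num), ENNReal.ofReal_natCast,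
          ← mul_assoc, mul_comm (E.card : ℝ≥0∞)]
        simp
    _ ≤ _ := by
        gcongr
        linarith

lemma eta_cont (S : Set (Eu n)) : Continuous (fun x => infDist x S) := continuous_infDist_pt S

/-- base estimate -/
lemma base_est (hΩ : IsPolyhedralDomain Ω 𝓗) (hS : (polySingularSet Ω 𝓗).Nonempty) :
    ∃ C : ℝ, 0 < C ∧ ∀ u : Eu n → ℝ, Sm Ω u → ContinuousOn u (closure Ω) →
      (∀ x ∈ frontier Ω, u x = 0) →
      ∫⁻ x in Ω, ENNReal.ofReal (gs (se n) u x) ≤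
        ENNReal.ofReal C * ∫⁻ x in Ω, ENNReal.ofReal
          ((infDist x (polySingularSet Ω 𝓗) * laplaceOp u x) ^ 2) := by
  obtain ⟨C1, hC1, hen⟩ := energy
  obtain ⟨C2, hC2, hha⟩ := hardy hΩ hS
  set S := polySingularSet Ω 𝓗 with hSd
  refine ⟨C1 * C2, by positivity, fun u hu huc hu0 => ?_⟩
  have hO := hΩ.isOpen
  set J := ∫⁻ x in Ω, ENNReal.ofReal ((infDist x S * laplaceOp u x) ^ 2) with hJ
  by_cases hJt : J = ⊤
  · rw [hJt, ENNReal.mul_top (by simp; positivity)]; exact le_top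
  have hJr : ENNReal.ofReal J.toReal = J := ENNReal.ofReal_toReal hJt
  have hfc : ContinuousOn (laplaceOp u) Ω := (laplaceOp_sm hO hu).continuousOn
  have hmain := hen hO (se n) (w := u) (ζ := fun _ => 1) hu contDiff_const (fun _ => zero_le_one)
    (fun _ => le_rfl) ?_ (√(C2 * J.toReal)) (Real.sqrt_nonneg _) ?_
  · rw [Real.sq_sqrt (by positivity)] at hmain
    have h0 : ∀ x, gs (se n) (fun _ => (1:ℝ)) x = 0 := by
      intro x
      simp [gs, pd]
    simp only [h0, one_pow, one_mul, zero_mul, ENNReal.ofReal_zero, lintegral_zero, zero_add] at hmain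
    rw [ENNReal.ofReal_mul hC2.le, hJr, ← mul_assoc, ← ENNReal.ofReal_mul hC1.le] at hmain
    exact hmain
  · intro ε hε
    have hcl : IsCompact (closure Ω) := hΩ.isBounded.isCompact_closure
    have heq : {x | x ∈ Ω ∧ ε ≤ |u x| ∧ x ∈ tsupport (fun _ : Eu n => (1:ℝ))} =
        closure Ω ∩ (fun x => |u x|) ⁻¹' Ici ε := by
      ext x
      constructor
      · rintro ⟨h1, h2, -⟩
        exact ⟨subset_closure h1, h2⟩
      · rintro ⟨h1, h2⟩
        have h3 : ε ≤ |u x| := h2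
        refine ⟨?_, h3, ?_⟩
        · by_contra hx
          have : x ∈ frontier Ω := by rw [hO.frontier_eq]; exact ⟨h1, hx⟩
          rw [hu0 x this, abs_zero] at h3
          linarith
        · apply subset_closure
          simp
    rw [heq]
    exact hcl.of_isClosed_subset (huc.abs.preimage_isClosed_of_isClosed isClosed_closure isClosed_Ici)
      inter_subset_left
  · intro Ψ hΨ hΨc hΨt
    have hΨ0 : ∀ x, x ∉ tsupport Ψ → Ψ x = 0 := fun x hx => image_eq_zero_of_notMem_tsupport hx
    have hpd0 : ∀ x, x ∉ tsupport Ψ → ∀ v, pd v Ψ x = 0 := by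
      intro x hx v
      have : fderiv ℝ Ψ x = 0 := by
        apply image_eq_zero_of_notMem_tsupport
        exact fun hh => hx (tsupport_fderiv_subset ℝ hh)
      simp [pd, this]
    have hgi : Integrable (gs (se n) Ψ) :=
      cpt_int hO hΨc hΨt (gs_cont hO _ hΨ.contDiffOn) fun x hx => by simp [gs, hpd0 x hx]
    have hH := hha Ψ hΨ.contDiffOn hΨ.continuous.continuousOn (fun x hx => hΨ0 x fun h => by
      rw [hO.frontier_eq] at hx
      exact hx.2 (hΨt h))
    have hη : ∀ x ∈ Ω, 0 < infDist x S := fun x hx => eta_pos_in hΩ hS hx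
    have e1 : ∫ x, Ψ x * ∑ j, pd (se n j) (pd (se n j) u) x =
        ∫ x in Ω, (Ψ x / infDist x S) * (infDist x S * laplaceOp u x) := by
      rw [← integral_indicator hO.measurableSet]
      refine integral_congr_ae (Filter.Eventually.of_forall fun x => ?_)
      show Ψ x * laplaceOp u x = _
      by_cases hx : x ∈ Ω
      · rw [indicator_of_mem hx]
        have := (hη x hx).ne'
        field_simp
      · rw [indicator_of_notMem hx, hΨ0 x (fun h => hx (hΨt h)), zero_mul]
    rw [e1]
    refine abs_le_of_ofReal_sq (Real.sqrt_nonneg _) (Real.sqrt_nonneg _) ?_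
    rw [Real.sq_sqrt (by positivity), Real.sq_sqrt (integral_nonneg fun x => gs_nonneg _ _ _),
      ofReal_integral_eq_lintegral_ofReal hgi (Filter.Eventually.of_forall fun x => gs_nonneg _ _ _),
      ENNReal.ofReal_mul hC2.le, hJr]
    refine (cs_sq (volume.restrict Ω) ?_ ?_).trans ?_
    · refine ContinuousOn.aemeasurable ?_ hO.measurableSet
      exact hΨ.continuous.continuousOn.div (eta_cont S).continuousOn fun x hx => (hη x hx).ne'
    · exact ((eta_cont S).continuousOn.mul hfc).aemeasurable hO.measurableSet
    · rw [← hJ, mul_right_comm]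
      refine mul_le_mul' ?_ le_rfl
      simp only [div_pow]
      exact hH.trans (mul_le_mul' le_rfl (setLIntegral_le_lintegral _ _))

end

section
variable {n : ℕ}

/-- averaging kernel -/
def Ka (S : Set (Eu n)) (a : ℝ) (x y : Eu n) : ℝ≥0∞ :=
  {p : Eu n × Eu n | 0 < infDist p.2 S ∧ dist p.1 p.2 < a * infDist p.2 S}.indicator
    (fun p => ENNReal.ofReal ((infDist p.2 S ^ n)⁻¹)) (x, y)

lemma Ka_meas (S : Set (Eu n)) (a : ℝ) : Measurable (fun p : Eu n × Eu n => Ka S a p.1 p.2) := by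
  have hc : Continuous (fun p : Eu n × Eu n => infDist p.2 S) := (eta_cont S).comp continuous_snd
  have hm : Measurable (fun p : Eu n × Eu n => infDist p.2 S) := hc.measurable
  refine Measurable.indicator (f := fun p : Eu n × Eu n => ENNReal.ofReal ((infDist p.2 S ^ n)⁻¹)) ?_ ?_
  · exact ((hm.pow_const n).inv).ennreal_ofReal
  · refine IsOpen.measurableSet ?_
    exact (isOpen_lt continuous_const hc).inter (isOpen_lt (by fun_prop) (hc.const_mul a))

lemma eta_lip (S : Set (Eu n)) (x y : Eu n) : infDist x S ≤ infDist y S + dist x y :=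
  infDist_le_infDist_add_dist

lemma Ka_lower (S : Set (Eu n)) {l : ℝ} (hl : 0 < l) (hl4 : l ≤ 1 / 4) {x : Eu n} (hx : 0 < infDist x S) :
    ENNReal.ofReal ((l / 8) ^ n) * volume (ball (0 : Eu n) 1) ≤ ∫⁻ y, Ka S (l / 2) x y := by
  set d := infDist x S with hd
  have hr : 0 < l * d / 4 := by positivity
  calc ENNReal.ofReal ((l / 8) ^ n) * volume (ball (0 : Eu n) 1)
      = ENNReal.ofReal (((2 * d) ^ n)⁻¹) * volume (ball x (l * d / 4)) := by
        rw [Measure.addHaar_ball_of_pos _ _ hr, ← mul_assoc, ← ENNReal.ofReal_mul (by positivity)]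
        congr 2
        rw [finrank_euclideanSpace_fin, ← inv_pow, ← mul_pow]
        congr 1
        field_simp
        norm_num
    _ = ∫⁻ y in ball x (l * d / 4), ENNReal.ofReal (((2 * d) ^ n)⁻¹) := by
        rw [setLIntegral_const]
    _ ≤ ∫⁻ y in ball x (l * d / 4), Ka S (l / 2) x y := by
        refine setLIntegral_mono' measurableSet_ball fun y hy => ?_
        have h1 : dist y x < l * d / 4 := hy
        have h2 := eta_lip S x y
        have h3 := eta_lip S y x
        rw [dist_comm x y] at h2
        rw [← hd] at h2 h3
        have h4 : l * d ≤ 1 / 4 * d := mul_le_mul_of_nonneg_right hl4 hx.le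
        have h5 : d / 2 ≤ infDist y S := by linarith
        have h6 : infDist y S ≤ 2 * d := by linarith
        have h7 : 0 < infDist y S := by linarith
        have hmem : (x, y) ∈ {p : Eu n × Eu n | 0 < infDist p.2 S ∧ dist p.1 p.2 < l / 2 * infDist p.2 S} := by
          refine ⟨h7, ?_⟩
          show dist x y < l / 2 * infDist y S
          rw [dist_comm]
          have : l / 2 * (d / 2) ≤ l / 2 * infDist y S := mul_le_mul_of_nonneg_left h5 (by positivity)
          linarith
        rw [Ka, indicator_of_mem hmem]
        apply ENNReal.ofReal_le_ofReal
        show ((2 * d) ^ n)⁻¹ ≤ (infDist y S ^ n)⁻¹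
        gcongr
    _ ≤ _ := setLIntegral_le_lintegral _ _

lemma Ka_zero (S : Set (Eu n)) {l : ℝ} (hl4 : l ≤ 1 / 4) {x : Eu n}
    (hx : ¬ 0 < infDist x S) (y : Eu n) : Ka S l x y = 0 := by
  refine indicator_of_notMem ?_ _
  rintro ⟨h1, h2⟩
  have h1' : 0 < infDist y S := h1
  have h2' : dist x y < l * infDist y S := h2
  have := eta_lip S y x
  rw [dist_comm] at this
  nlinarith

lemma Ka_upper (S : Set (Eu n)) {l : ℝ} (hl : 0 < l) (hl4 : l ≤ 1 / 4) {x : Eu n} (hx : 0 < infDist x S) :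
    ∫⁻ y, Ka S l x y ≤ ENNReal.ofReal ((4 * l) ^ n) * volume (ball (0 : Eu n) 1) := by
  set d := infDist x S with hd
  have hr : 0 < 2 * l * d := by positivity
  calc ∫⁻ y, Ka S l x y ≤ ∫⁻ y in ball x (2 * l * d), ENNReal.ofReal (((d / 2) ^ n)⁻¹) := by
        rw [← lintegral_indicator measurableSet_ball]
        refine lintegral_mono fun y => ?_
        by_cases hmem : (x, y) ∈ {p : Eu n × Eu n | 0 < infDist p.2 S ∧ dist p.1 p.2 < l * infDist p.2 S}
        · rw [Ka, indicator_of_mem hmem]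
          have h1 : 0 < infDist y S := hmem.1
          have h2 : dist x y < l * infDist y S := hmem.2
          have h3 := eta_lip S x y
          have h4 := eta_lip S y x
          rw [dist_comm y x] at h4
          rw [← hd] at h3 h4
          have h5 : l * infDist y S ≤ 1 / 4 * infDist y S := mul_le_mul_of_nonneg_right hl4 h1.le
          have h6 : d / 2 ≤ infDist y S := by linarith
          have h7 : infDist y S ≤ 2 * d := by linarith
          have hyb : y ∈ ball x (2 * l * d) := by
            rw [mem_ball, dist_comm]
            have : l * infDist y S ≤ l * (2 * d) := mul_le_mul_of_nonneg_left h7 hl.le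
            linarith
          rw [indicator_of_mem hyb]
          apply ENNReal.ofReal_le_ofReal
          show (infDist y S ^ n)⁻¹ ≤ ((d / 2) ^ n)⁻¹
          gcongr
        · rw [Ka, indicator_of_notMem hmem]; exact zero_le
    _ = ENNReal.ofReal (((d / 2) ^ n)⁻¹) * volume (ball x (2 * l * d)) := by
        rw [setLIntegral_const]
    _ = _ := by
        rw [Measure.addHaar_ball_of_pos _ _ hr, ← mul_assoc, ← ENNReal.ofReal_mul (by positivity)]
        congr 2
        rw [finrank_euclideanSpace_fin, ← inv_pow, ← mul_pow]
        congr 1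
        field_simp
        norm_num

lemma Ka_int (S : Set (Eu n)) (a : ℝ) {F : Eu n → ℝ≥0∞} (y : Eu n) (hy : 0 < infDist y S) :
    ∫⁻ x, F x * Ka S a x y = ENNReal.ofReal ((infDist y S ^ n)⁻¹) * ∫⁻ x in ball y (a * infDist y S), F x := by
  rw [← lintegral_const_mul' _ _ ENNReal.ofReal_ne_top, ← lintegral_indicator measurableSet_ball]
  refine lintegral_congr fun x => ?_
  by_cases hx : x ∈ ball y (a * infDist y S)
  · rw [indicator_of_mem hx, Ka, indicator_of_mem (show (x, y) ∈ {p : Eu n × Eu n | 0 < infDist p.2 S ∧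
      dist p.1 p.2 < a * infDist p.2 S} from ⟨hy, hx⟩), mul_comm]
  · rw [indicator_of_notMem hx, Ka, indicator_of_notMem, mul_zero]
    exact fun h => hx h.2

lemma avg_alg (l : ℝ) (hl : 0 < l) (n : ℕ) (C v G : ℝ≥0∞) :
    C * (G * (ENNReal.ofReal ((4 * l) ^ n) * v)) =
      ENNReal.ofReal ((l / 8) ^ n) * v * (ENNReal.ofReal (32 ^ n) * C * G) := by
  have : ENNReal.ofReal ((4 * l) ^ n) = ENNReal.ofReal ((l / 8) ^ n) * ENNReal.ofReal (32 ^ n) := by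
    rw [← ENNReal.ofReal_mul (by positivity), ← mul_pow]
    congr 2
    ring
  rw [this]
  ring

lemma abs_swap {K : Eu n → Eu n → ℝ≥0∞} (hK : Measurable (fun p : Eu n × Eu n => K p.1 p.2))
    {F : Eu n → ℝ≥0∞} (hF : Measurable F) :
    ∫⁻ x, F x * ∫⁻ y, K x y = ∫⁻ y, ∫⁻ x, F x * K x y := by
  have hFm : Measurable (fun p : Eu n × Eu n => F p.1 * K p.1 p.2) :=
    Measurable.mul (hF.comp measurable_fst) hK
  have hKm : ∀ x, Measurable (fun y => K x y) := fun x =>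
    hK.comp (measurable_prodMk_left (x := x))
  have h1 : ∫⁻ x, F x * ∫⁻ y, K x y = ∫⁻ x, ∫⁻ y, F x * K x y := by
    refine lintegral_congr fun x => ?_
    rw [lintegral_const_mul _ (hKm _)]
  rw [h1]
  exact lintegral_lintegral_swap (f := fun x y => F x * K x y) hFm.aemeasurable

lemma avg_swap (S : Set (Eu n)) (a : ℝ) {F : Eu n → ℝ≥0∞} (hF : Measurable F) :
    ∫⁻ x, F x * ∫⁻ y, Ka S a x y = ∫⁻ y, ∫⁻ x, F x * Ka S a x y :=
  abs_swap (Ka_meas S a) hF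

lemma avg_mid (S : Set (Eu n)) {l : ℝ} {F G : Eu n → ℝ≥0∞} {C : ℝ≥0∞} (hC : C ≠ ⊤)
    (h : ∀ y, 0 < infDist y S → ∫⁻ x in ball y (l / 2 * infDist y S), F x ≤
      C * ∫⁻ x in ball y (l * infDist y S), G x) :
    (∫⁻ y, ∫⁻ x, F x * Ka S (l / 2) x y) ≤ C * ∫⁻ y, ∫⁻ x, G x * Ka S l x y := by
  rw [← lintegral_const_mul' _ _ hC]
  refine lintegral_mono fun y => ?_
  by_cases hy : 0 < infDist y S
  · rw [Ka_int S _ y hy, Ka_int S _ y hy, mul_left_comm]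
    exact mul_le_mul' le_rfl (h y hy)
  · have : ∀ x, F x * Ka S (l / 2) x y = 0 := fun x => by
      rw [Ka, indicator_of_notMem, mul_zero]
      exact fun h => hy h.1
    simp only [this, lintegral_zero]
    exact zero_le

lemma etapos_meas (S : Set (Eu n)) : MeasurableSet {x : Eu n | 0 < infDist x S} :=
  (isOpen_lt continuous_const (eta_cont S)).measurableSet

lemma avg_lower (S : Set (Eu n)) {l : ℝ} (hl : 0 < l) (hl4 : l ≤ 1 / 4) (F : Eu n → ℝ≥0∞) :
    (ENNReal.ofReal ((l / 8) ^ n) * volume (ball (0 : Eu n) 1)) * ∫⁻ x in {x | 0 < infDist x S}, F x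
      ≤ ∫⁻ x, F x * ∫⁻ y, Ka S (l / 2) x y := by
  rw [← lintegral_const_mul' _ _ (ENNReal.mul_ne_top ENNReal.ofReal_ne_top measure_ball_lt_top.ne)]
  refine le_trans ?_ (setLIntegral_le_lintegral {x | 0 < infDist x S} _)
  refine setLIntegral_mono' (etapos_meas S) fun x hx => ?_
  rw [mul_comm]
  exact mul_le_mul' le_rfl (Ka_lower S hl hl4 hx)

lemma avg_upper (S : Set (Eu n)) {l : ℝ} (hl : 0 < l) (hl4 : l ≤ 1 / 4) (G : Eu n → ℝ≥0∞) :
    (∫⁻ x, G x * ∫⁻ y, Ka S l x y) ≤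
    (∫⁻ x in {x | 0 < infDist x S}, G x) * (ENNReal.ofReal ((4 * l) ^ n) * volume (ball (0 : Eu n) 1)) := by
  rw [← lintegral_mul_const' _ _ (ENNReal.mul_ne_top ENNReal.ofReal_ne_top measure_ball_lt_top.ne),
    ← lintegral_indicator (etapos_meas S)]
  refine lintegral_mono fun x => ?_
  by_cases hx : 0 < infDist x S
  · rw [indicator_of_mem (show x ∈ {x | 0 < infDist x S} from hx)]
    exact mul_le_mul' le_rfl (Ka_upper S hl hl4 hx)
  · rw [indicator_of_notMem (show x ∉ {x | 0 < infDist x S} from hx)]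
    simp only [Ka_zero S hl4 hx, lintegral_zero, mul_zero, le_refl]

lemma avg_cancel (l : ℝ) (hl : 0 < l) (n : ℕ) (C v G F : ℝ≥0∞) (hv0 : v ≠ 0) (hvt : v ≠ ⊤)
    (h : ENNReal.ofReal ((l / 8) ^ n) * v * F ≤ C * (G * (ENNReal.ofReal ((4 * l) ^ n) * v))) :
    F ≤ ENNReal.ofReal (32 ^ n) * C * G := by
  have hp : 0 < (l / 8) ^ n := by positivity
  have hc0 : ENNReal.ofReal ((l / 8) ^ n) * v ≠ 0 :=
    mul_ne_zero (ENNReal.ofReal_pos.2 hp).ne' hv0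
  have hct : ENNReal.ofReal ((l / 8) ^ n) * v ≠ ⊤ := ENNReal.mul_ne_top ENNReal.ofReal_ne_top hvt
  rw [avg_alg l hl] at h
  exact (ENNReal.mul_le_mul_iff_right hc0 hct).1 h

lemma averaging (S : Set (Eu n)) {l : ℝ} (hl : 0 < l) (hl4 : l ≤ 1 / 4) {F G : Eu n → ℝ≥0∞}
    (hF : Measurable F) (hG : Measurable G) {C : ℝ≥0∞} (hC : C ≠ ⊤)
    (h : ∀ y, 0 < infDist y S → ∫⁻ x in ball y (l / 2 * infDist y S), F x ≤
      C * ∫⁻ x in ball y (l * infDist y S), G x) :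
    ∫⁻ x in {x | 0 < infDist x S}, F x ≤
      ENNReal.ofReal (32 ^ n) * C * ∫⁻ x in {x | 0 < infDist x S}, G x := by
  refine avg_cancel l hl n C (volume (ball (0 : Eu n) 1)) _ _
    (measure_ball_pos volume 0 one_pos).ne' measure_ball_lt_top.ne ?_
  refine (avg_lower S hl hl4 F).trans ?_
  rw [avg_swap S _ hF]
  refine (avg_mid S hC h).trans ?_
  rw [← avg_swap S _ hG]
  exact mul_le_mul' le_rfl (avg_upper S hl hl4 G)

end

section
variable {n : ℕ} {Ω : Set (Eu n)} {𝓗 : Finset (Set (Eu n))}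

lemma eta_ball (S : Set (Eu n)) {l : ℝ} (hl4 : l ≤ 1 / 4) {x y : Eu n}
    (hy : 0 < infDist y S) (hx : x ∈ ball y (l * infDist y S)) :
    infDist y S / 2 ≤ infDist x S ∧ infDist x S ≤ 2 * infDist y S := by
  have h1 : dist x y < l * infDist y S := hx
  have h2 := eta_lip S x y
  have h3 := eta_lip S y x
  rw [dist_comm] at h3
  have h4 : l * infDist y S ≤ 1 / 4 * infDist y S := mul_le_mul_of_nonneg_right hl4 hy.le
  constructor <;> linarith

lemma weight_up {A : Set (Eu n)} (hA : MeasurableSet A) (η g : Eu n → ℝ) {d : ℝ} (m : ℕ)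
    (h : ∀ x ∈ A, 0 ≤ η x ∧ η x ≤ 2 * d) (hd : 0 ≤ d) :
    ∫⁻ x in A, ENNReal.ofReal (η x ^ m * g x ^ 2) ≤
      ENNReal.ofReal ((2 * d) ^ m) * ∫⁻ x in A, ENNReal.ofReal (g x ^ 2) := by
  rw [← lintegral_const_mul' _ _ ENNReal.ofReal_ne_top]
  refine setLIntegral_mono' hA fun x hx => ?_
  rw [← ENNReal.ofReal_mul (by positivity)]
  obtain ⟨h1, h2⟩ := h x hx
  exact ENNReal.ofReal_le_ofReal (by gcongr)

lemma weight_dn {A : Set (Eu n)} (hA : MeasurableSet A) (η g : Eu n → ℝ) {d : ℝ} (m : ℕ)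
    (h : ∀ x ∈ A, d / 2 ≤ η x) (hd : 0 < d) :
    ∫⁻ x in A, ENNReal.ofReal (g x ^ 2) ≤
      ENNReal.ofReal ((2 / d) ^ m) * ∫⁻ x in A, ENNReal.ofReal (η x ^ m * g x ^ 2) := by
  rw [← lintegral_const_mul' _ _ ENNReal.ofReal_ne_top]
  refine setLIntegral_mono' hA fun x hx => ?_
  rw [← ENNReal.ofReal_mul (by positivity)]
  apply ENNReal.ofReal_le_ofReal
  have h1 := h x hx
  rw [← mul_assoc, ← mul_pow]
  have h2 : 1 ≤ 2 / d * η x := by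
    calc (1 : ℝ) = 2 / d * (d / 2) := by field_simp
      _ ≤ _ := by gcongr
  exact le_mul_of_one_le_left (sq_nonneg _) (one_le_pow₀ h2)

lemma alg_step (d l C : ℝ) (k : ℕ) (hd : 0 < d) (hl : 0 < l) (hl4 : l ≤ 1 / 4) (hC : 0 < C) (P Q X Y Z : ℝ≥0∞)
    (hX : Z ≤ ENNReal.ofReal C * (ENNReal.ofReal ((l * d / 2)⁻¹ ^ 2) * X + Y))
    (hP : X ≤ ENNReal.ofReal ((2 / d) ^ (2 * k)) * P)
    (hQ : Y ≤ ENNReal.ofReal ((2 / d) ^ (2 * k + 2)) * Q) :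
    ENNReal.ofReal ((2 * d) ^ (2 * k + 2)) * Z ≤
      ENNReal.ofReal (C * 4 ^ (2 * k + 2) / l ^ 2) * (P + Q) := by
  have e1 : (2 * d) ^ (2 * k + 2) * (C * ((l * d / 2)⁻¹ ^ 2 * (2 / d) ^ (2 * k))) =
      C * 4 ^ (2 * k + 2) / l ^ 2 := by
    have : (2 * d) ^ (2 * k) * (2 / d) ^ (2 * k) = 4 ^ (2 * k) := by
      rw [← mul_pow]; congr 1; field_simp; norm_num
    rw [pow_add, pow_add, ← this]
    field_simp
    norm_num
  have e2 : (2 * d) ^ (2 * k + 2) * (C * (2 / d) ^ (2 * k + 2)) = C * 4 ^ (2 * k + 2) := by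
    have : (2 * d) ^ (2 * k + 2) * (2 / d) ^ (2 * k + 2) = 4 ^ (2 * k + 2) := by
      rw [← mul_pow]; congr 1; field_simp; norm_num
    rw [← this]; ring
  have e3 : C * 4 ^ (2 * k + 2) ≤ C * 4 ^ (2 * k + 2) / l ^ 2 := by
    rw [le_div_iff₀ (by positivity)]
    have : l ^ 2 ≤ 1 := by nlinarith
    exact mul_le_of_le_one_right (by positivity) this
  calc ENNReal.ofReal ((2 * d) ^ (2 * k + 2)) * Z
      ≤ ENNReal.ofReal ((2 * d) ^ (2 * k + 2)) * (ENNReal.ofReal C * (ENNReal.ofReal ((l * d / 2)⁻¹ ^ 2) *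
        (ENNReal.ofReal ((2 / d) ^ (2 * k)) * P) + ENNReal.ofReal ((2 / d) ^ (2 * k + 2)) * Q)) := by
        refine mul_le_mul' le_rfl (hX.trans ?_)
        gcongr
    _ = ENNReal.ofReal ((2 * d) ^ (2 * k + 2) * (C * ((l * d / 2)⁻¹ ^ 2 * (2 / d) ^ (2 * k)))) * P +
        ENNReal.ofReal ((2 * d) ^ (2 * k + 2) * (C * (2 / d) ^ (2 * k + 2))) * Q := by
        rw [ENNReal.ofReal_mul (by positivity), ENNReal.ofReal_mul (by positivity),
          ENNReal.ofReal_mul (by positivity), ENNReal.ofReal_mul (by positivity),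
          ENNReal.ofReal_mul (by positivity)]
        ring
    _ ≤ _ := by
        rw [e1, e2, mul_add]
        gcongr

lemma local_step (hΩ : IsPolyhedralDomain Ω 𝓗) (S : Set (Eu n)) {l : ℝ} (hl : 0 < l) (hl4 : l ≤ 1 / 4)
    (k : ℕ) {C : ℝ} (hC : 0 < C)
    (hst : ∀ (ν : Eu n) (_ : ‖ν‖ = 1) (c : ℝ)
    (y : Eu n) (r : ℝ) (_ : 0 < r) (u : Eu n → ℝ) (_ : Sm (HB ν c y (2 * r)) u)
    (_ : ContinuousOn u ({x | c ≤ ⟪ν, x⟫} ∩ ball y (2 * r)))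
    (_ : ∀ x ∈ ball y (2 * r), ⟪ν, x⟫ = c → u x = 0),
    ∫⁻ x in HB ν c y r, ENNReal.ofReal (MM (se n) (k + 2) u x ^ 2) ≤
      ENNReal.ofReal C * (ENNReal.ofReal (r⁻¹ ^ 2) *
        (∫⁻ x in HB ν c y (2 * r), ENNReal.ofReal (MM (se n) (k + 1) u x ^ 2)) +
        ∫⁻ x in HB ν c y (2 * r), ENNReal.ofReal (MM (se n) k (laplaceOp u) x ^ 2)))
    {y : Eu n} (hy : 0 < infDist y S)
    (hloc : Ω ∩ ball y (l * infDist y S) = ∅ ∨ ∃ (ν : Eu n) (c' : ℝ), ‖ν‖ = 1 ∧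
      Ω ∩ ball y (l * infDist y S) = HB ν c' y (l * infDist y S) ∧
      ∀ x ∈ ball y (l * infDist y S), ⟪ν, x⟫ = c' → x ∈ frontier Ω)
    {u : Eu n → ℝ} (hu : Sm Ω u) (hc : ContinuousOn u (closure Ω)) (h0 : ∀ x ∈ frontier Ω, u x = 0) :
    ∫⁻ x in Ω ∩ ball y (l / 2 * infDist y S),
        ENNReal.ofReal (infDist x S ^ (2 * k + 2) * MM (se n) (k + 2) u x ^ 2) ≤
      ENNReal.ofReal (C * 4 ^ (2 * k + 2) / l ^ 2) *
      ((∫⁻ x in Ω ∩ ball y (l * infDist y S),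
        ENNReal.ofReal (infDist x S ^ (2 * k) * MM (se n) (k + 1) u x ^ 2)) +
       ∫⁻ x in Ω ∩ ball y (l * infDist y S),
        ENNReal.ofReal (infDist x S ^ (2 * k + 2) * MM (se n) k (laplaceOp u) x ^ 2)) := by
  have hsub : ball y (l / 2 * infDist y S) ⊆ ball y (l * infDist y S) :=
    ball_subset_ball (by nlinarith)
  rcases hloc with he | ⟨ν, c', hν, heq, hfr⟩
  · have : Ω ∩ ball y (l / 2 * infDist y S) = ∅ :=
      subset_eq_empty (inter_subset_inter_right _ hsub) he
    rw [this]; simp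
  have heta := fun x hx => eta_ball S hl4 (x := x) hy hx
  generalize hd : infDist y S = d at *
  have heq' : Ω ∩ ball y (l / 2 * d) = HB ν c' y (l / 2 * d) := by
    have h1 : ball y (l / 2 * d) = ball y (l * d) ∩ ball y (l / 2 * d) := (inter_eq_right.2 hsub).symm
    rw [h1, ← inter_assoc, heq, HB, HB, inter_assoc, ← h1]
  have hr : 0 < l * d / 2 := by positivity
  have h2r : 2 * (l * d / 2) = l * d := by ring
  have hstage := hst ν hν c' y (l * d / 2) hr u
  rw [h2r] at hstage
  have hHBs : HB ν c' y (l * d) ⊆ Ω := heq ▸ inter_subset_left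
  specialize hstage (hu.mono hHBs) (hc.mono ?_) (fun x hx hxc => h0 x (hfr x hx hxc))
  · rintro x ⟨hx1, hx2⟩
    have hx1' : c' ≤ ⟪ν, x⟫ := hx1
    rcases hx1'.lt_or_eq with h | h
    · exact subset_closure (hHBs ⟨h, hx2⟩)
    · exact frontier_subset_closure (hfr x hx2 h.symm)
  rw [heq, heq', show l / 2 * d = l * d / 2 by ring]
  have hsub' : HB ν c' y (l * d / 2) ⊆ HB ν c' y (l * d) := HB_mono _ _ _ (by linarith)
  refine (weight_up (HB_open _ _ _ _).measurableSet (fun x => infDist x S) _ (2 * k + 2) (d := d)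
    (fun x hx => ⟨infDist_nonneg, (heta x (hsub' hx).2).2⟩) hy.le).trans ?_
  refine alg_step d l C k hy hl hl4 hC _ _ _ _ _ hstage ?_ ?_
  · exact weight_dn (HB_open _ _ _ _).measurableSet (fun x => infDist x S) _ (2 * k) (d := d)
      (fun x hx => (heta x hx.2).1) hy
  · exact weight_dn (HB_open _ _ _ _).measurableSet (fun x => infDist x S) _ (2 * k + 2) (d := d)
      (fun x hx => (heta x hx.2).1) hy

lemma wM_meas (hΩ : IsOpen Ω) (S : Set (Eu n)) (m k : ℕ) {u : Eu n → ℝ} (hu : Sm Ω u) :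
    Measurable (Ω.indicator fun x => ENNReal.ofReal (infDist x S ^ m * MM (se n) k u x ^ 2)) :=
  meas_ind hΩ (((eta_cont S).continuousOn.pow m).mul ((MM_cont hΩ k hu).pow 2))

lemma global_step (hn : 0 < n) (hΩ : IsPolyhedralDomain Ω 𝓗) (hS : (polySingularSet Ω 𝓗).Nonempty) (k : ℕ) :
    ∃ C : ℝ, 0 < C ∧ ∀ u : Eu n → ℝ, Sm Ω u → ContinuousOn u (closure Ω) →
      (∀ x ∈ frontier Ω, u x = 0) →
      ∫⁻ x in Ω, ENNReal.ofReal (infDist x (polySingularSet Ω 𝓗) ^ (2 * k + 2) * MM (se n) (k + 2) u x ^ 2) ≤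
      ENNReal.ofReal C *
      ((∫⁻ x in Ω, ENNReal.ofReal (infDist x (polySingularSet Ω 𝓗) ^ (2 * k) * MM (se n) (k + 1) u x ^ 2)) +
       ∫⁻ x in Ω, ENNReal.ofReal (infDist x (polySingularSet Ω 𝓗) ^ (2 * k + 2) *
          MM (se n) k (laplaceOp u) x ^ 2)) := by
  obtain ⟨l, hl, hl4, hloc⟩ := local_structure hn hΩ hS
  obtain ⟨C, hC, hst⟩ := stage n k
  have hpos : Ω ⊆ {x | 0 < infDist x (polySingularSet Ω 𝓗)} := fun x hx => eta_pos_in hΩ hS hx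
  generalize hSd : polySingularSet Ω 𝓗 = S at *
  refine ⟨32 ^ n * (C * 4 ^ (2 * k + 2) / l ^ 2), by positivity, fun u hu hc h0 => ?_⟩
  have hΩm := hΩ.isOpen.measurableSet
  have hf := laplaceOp_sm hΩ.isOpen hu
  have m1 := wM_meas hΩ.isOpen S (2 * k + 2) (k + 2) hu
  have m2 := wM_meas hΩ.isOpen S (2 * k) (k + 1) hu
  have m3 := wM_meas hΩ.isOpen S (2 * k + 2) k hf
  have key := averaging S hl hl4 m1 (m2.add m3) (C := ENNReal.ofReal (C * 4 ^ (2 * k + 2) / l ^ 2))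
    ENNReal.ofReal_ne_top (fun y hy => by
      simp only [Pi.add_apply]
      rw [lintegral_add_left m2, setLIntegral_indicator hΩm, setLIntegral_indicator hΩm,
        setLIntegral_indicator hΩm]
      exact local_step hΩ S hl hl4 k hC hst hy (hloc y hy) hu hc h0)
  simp only [Pi.add_apply] at key
  rw [lintegral_add_left m2, setLIntegral_indicator hΩm, setLIntegral_indicator hΩm,
        setLIntegral_indicator hΩm, inter_eq_left.2 hpos] at key
  rw [ENNReal.ofReal_mul (by positivity)]
  exact key

end

section
variable {n : ℕ} {U : Set (Eu n)}

lemma da_cons (i : Fin n) (L : List (Fin n)) (u : Eu n → ℝ) :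
    derivAlong (i :: L) u = pd (se n i) (derivAlong L u) := rfl

lemma da_sm (hU : IsOpen U) (L : List (Fin n)) {u : Eu n → ℝ} (hu : Sm U u) : Sm U (derivAlong L u) := by
  induction L with
  | nil => exact hu
  | cons i L ih => exact ih.pd hU _

lemma da_ipd (hU : IsOpen U) (L : List (Fin n)) {u : Eu n → ℝ} (hu : Sm U u) :
    EqOn (derivAlong L u) (ipd (L.map (se n)) u) U := by
  induction L with
  | nil => intro x _; rfl
  | cons i L ih =>
    exact (pd_congr hU ih (se n i)).trans (ipd_pd hU _ hu _).symm

lemma da_le (hU : IsOpen U) (L : List (Fin n)) {u : Eu n → ℝ} (hu : Sm U u) {x : Eu n} (hx : x ∈ U) :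
    |derivAlong L u x| ≤ MM (se n) L.length u x := by
  rw [da_ipd hU L hu hx]
  exact ipd_le_MM _ _ _ _

lemma da_perm (hU : IsOpen U) {L L' : List (Fin n)} (h : L.Perm L') {u : Eu n → ℝ} (hu : Sm U u) :
    EqOn (derivAlong L u) (derivAlong L' u) U := by
  induction h with
  | nil => exact fun _ _ => rfl
  | cons i _ ih => exact pd_congr hU ih (se n i)
  | swap i j L => exact pd_comm hU (da_sm hU L hu) _ _
  | trans _ _ h1 h2 => exact h1.trans h2

/-- canonical list of a multi-index -/
def cl (β : Fin n → ℕ) : List (Fin n) := (List.finRange n).flatMap fun i => List.replicate (β i) i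

lemma cl_length (β : Fin n → ℕ) : (cl β).length = ∑ i, β i := by
  simp [cl, List.length_flatMap, Fin.sum_univ_def]

lemma cl_count (β : Fin n → ℕ) (a : Fin n) : (cl β).count a = β a := by
  rw [cl, List.count_flatMap]
  have : (List.count a ∘ fun i => List.replicate (β i) i) = fun i => if i = a then β i else 0 := by
    funext i
    simp [List.count_replicate]
  rw [this, ← Fin.sum_univ_def]
  simp

lemma cl_perm (L : List (Fin n)) : L.Perm (cl fun i => L.count i) := by
  rw [List.perm_iff_count]
  intro a
  rw [cl_count]

lemma mem_mi (β : Fin n → ℕ) (m : ℕ) : β ∈ multiIndicesLE n m ↔ ∑ i, β i ≤ m := by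
  simp only [multiIndicesLE, Finset.mem_image, Finset.mem_filter, Finset.mem_univ, true_and]
  constructor
  · rintro ⟨γ, h, rfl⟩; exact h
  · intro h
    refine ⟨fun i => ⟨β i, ?_⟩, h, rfl⟩
    have : β i ≤ ∑ i, β i := Finset.single_le_sum (f := β) (fun _ _ => Nat.zero_le _) (Finset.mem_univ i)
    omega

lemma list_est (hU : IsOpen U) (S : Set (Eu n)) (m : ℕ) {f : Eu n → ℝ} (hf : Sm U f) (L : List (Fin n))
    (hL : L.length ≤ m) :
    ∫⁻ x in U, ENNReal.ofReal ((infDist x S ^ (L.length + 1) * derivAlong L f x) ^ 2) ≤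
      KnormSq U S m (-1) f := by
  have hlen : L.length = ∑ i, L.count i := by rw [← cl_length (fun i => L.count i)]; exact (cl_perm L).length_eq
  have hmem : (fun i => L.count i) ∈ multiIndicesLE n m := by
    rw [mem_mi]; omega
  refine le_trans (le_of_eq ?_) (Finset.single_le_sum (f := fun β : Fin n → ℕ => ∫⁻ x in U,
    ENNReal.ofReal (infDist x S ^ (2 * (((∑ i, β i : ℕ) : ℝ) - (-1))) * pderivMulti β f x ^ 2))
    (fun _ _ => zero_le) hmem)
  refine setLIntegral_congr_fun hU.measurableSet fun x hx => ?_
  have h1 : derivAlong L f x = pderivMulti (fun i => L.count i) f x := da_perm hU (cl_perm L) hf hx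
  show ENNReal.ofReal _ = ENNReal.ofReal _
  rw [h1, ← hlen, show (2 * ((L.length : ℝ) - (-1))) = ((2 * (L.length + 1) : ℕ) : ℝ) by push_cast; ring,
    Real.rpow_natCast, mul_pow, ← pow_mul, mul_comm 2]

lemma MM_est (hU : IsOpen U) (S : Set (Eu n)) (m j : ℕ) {f : Eu n → ℝ} (hf : Sm U f) (L : List (Fin n))
    (hL : L.length + j ≤ m) :
    ∫⁻ x in U, ENNReal.ofReal ((infDist x S ^ (L.length + j + 1) * MM (se n) j (derivAlong L f) x) ^ 2) ≤
      ((n : ℝ≥0∞) ^ 2) ^ j * KnormSq U S m (-1) f := by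
  induction j generalizing L with
  | zero =>
    refine le_trans (le_of_eq ?_) ((list_est hU S m hf L hL).trans (by simp))
    refine lintegral_congr fun x => ?_
    simp only [MM, add_zero, mul_pow, sq_abs]
  | succ j ih =>
    have := sum_sq_int (volume.restrict U) Finset.univ
      (fun i x => infDist x S ^ (L.length + (j + 1) + 1) * MM (se n) j (derivAlong (i :: L) f) x)
      (fun i _ => (((eta_cont S).continuousOn.pow _).mul
        (MM_cont hU j (da_sm hU (i :: L) hf))).aemeasurable hU.measurableSet)
      (((n : ℝ≥0∞) ^ 2) ^ j * KnormSq U S m (-1) f) (fun i _ => by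
        have := ih (i :: L) (by simp only [List.length_cons]; omega)
        simp only [List.length_cons] at this
        rwa [show L.length + 1 + j + 1 = L.length + (j + 1) + 1 by ring] at this)
    simp only [← Finset.mul_sum] at this
    refine this.trans (le_of_eq ?_)
    rw [Finset.card_univ, Fintype.card_fin, pow_succ]
    ring

lemma J_est (hU : IsOpen U) (S : Set (Eu n)) (m j : ℕ) {f : Eu n → ℝ} (hf : Sm U f) (hj : j ≤ m) :
    ∫⁻ x in U, ENNReal.ofReal (infDist x S ^ (2 * j + 2) * MM (se n) j f x ^ 2) ≤
      ENNReal.ofReal (((n : ℝ) ^ 2) ^ j) * KnormSq U S m (-1) f := by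
  have := MM_est hU S m j hf [] (by simpa using hj)
  rw [ENNReal.ofReal_pow (by positivity), ENNReal.ofReal_pow (by positivity), ENNReal.ofReal_natCast]
  refine le_trans (le_of_eq ?_) this
  refine lintegral_congr fun x => ?_
  rw [mul_pow, ← pow_mul]
  simp only [List.length_nil, derivAlong]
  congr 3
  ring

lemma MM1_sq (u : Eu n → ℝ) (x : Eu n) : MM (se n) 1 u x ^ 2 ≤ (n : ℝ) * gs (se n) u x := by
  have := sq_sum_le_card_mul_sum_sq (s := (Finset.univ : Finset (Fin n))) (f := fun j => |pd (se n j) u x|)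
  simpa [MM, gs] using this

variable {Ω : Set (Eu n)} {𝓗 : Finset (Set (Eu n))}

lemma A_est (hn : 0 < n) (hΩ : IsPolyhedralDomain Ω 𝓗) (hS : (polySingularSet Ω 𝓗).Nonempty) (m k : ℕ)
    (hk : k ≤ m + 1) :
    ∃ C : ℝ, 0 < C ∧ ∀ u : Eu n → ℝ, Sm Ω u → ContinuousOn u (closure Ω) →
      (∀ x ∈ frontier Ω, u x = 0) →
      ∫⁻ x in Ω, ENNReal.ofReal (infDist x (polySingularSet Ω 𝓗) ^ (2 * k) * MM (se n) (k + 1) u x ^ 2) ≤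
      ENNReal.ofReal C * KnormSq Ω (polySingularSet Ω 𝓗) m (-1) (laplaceOp u) := by
  induction k with
  | zero =>
    obtain ⟨C, hC, h⟩ := base_est hΩ hS
    refine ⟨n * C, by positivity, fun u hu hc h0 => ?_⟩
    have h1 := list_est hΩ.isOpen (polySingularSet Ω 𝓗) m (laplaceOp_sm hΩ.isOpen hu) [] (Nat.zero_le _)
    calc ∫⁻ x in Ω, ENNReal.ofReal (infDist x (polySingularSet Ω 𝓗) ^ (2 * 0) * MM (se n) (0 + 1) u x ^ 2)
        ≤ ∫⁻ x in Ω, ENNReal.ofReal n * ENNReal.ofReal (gs (se n) u x) := by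
          refine lintegral_mono fun x => ?_
          rw [← ENNReal.ofReal_mul (by positivity)]
          apply ENNReal.ofReal_le_ofReal
          simpa using MM1_sq u x
      _ = ENNReal.ofReal n * ∫⁻ x in Ω, ENNReal.ofReal (gs (se n) u x) :=
          lintegral_const_mul' _ _ ENNReal.ofReal_ne_top
      _ ≤ ENNReal.ofReal n * (ENNReal.ofReal C *
            KnormSq Ω (polySingularSet Ω 𝓗) m (-1) (laplaceOp u)) := by
          refine mul_le_mul' le_rfl ((h u hu hc h0).trans (mul_le_mul' le_rfl ?_))
          simpa [derivAlong] using h1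
      _ = _ := by rw [ENNReal.ofReal_mul (by positivity), mul_assoc]
  | succ k ih =>
    obtain ⟨C1, hC1, h1⟩ := ih (by omega)
    obtain ⟨C2, hC2, h2⟩ := global_step hn hΩ hS k
    refine ⟨C2 * (C1 + ((n : ℝ) ^ 2) ^ k), by positivity, fun u hu hc h0 => ?_⟩
    refine (h2 u hu hc h0).trans ?_
    rw [ENNReal.ofReal_mul hC2.le, mul_assoc, ENNReal.ofReal_add hC1.le (by positivity), add_mul]
    refine mul_le_mul' le_rfl (add_le_add (h1 u hu hc h0) ?_)
    exact J_est hΩ.isOpen _ m k (laplaceOp_sm hΩ.isOpen hu) (by omega)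

lemma I_est (hn : 0 < n) (hΩ : IsPolyhedralDomain Ω 𝓗) (hS : (polySingularSet Ω 𝓗).Nonempty) (m k : ℕ)
    (hk : k ≤ m + 2) :
    ∃ C : ℝ, 0 < C ∧ ∀ u : Eu n → ℝ, Sm Ω u → ContinuousOn u (closure Ω) →
      (∀ x ∈ frontier Ω, u x = 0) →
      ∫⁻ x in Ω, ENNReal.ofReal (infDist x (polySingularSet Ω 𝓗) ^ (2 * ((k : ℝ) - 1)) * MM (se n) k u x ^ 2) ≤
      ENNReal.ofReal C * KnormSq Ω (polySingularSet Ω 𝓗) m (-1) (laplaceOp u) := by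
  cases k with
  | zero =>
    obtain ⟨C1, hC1, h1⟩ := hardy hΩ hS
    obtain ⟨C2, hC2, h2⟩ := base_est hΩ hS
    refine ⟨C1 * C2, by positivity, fun u hu hc h0 => ?_⟩
    have h3 := list_est hΩ.isOpen (polySingularSet Ω 𝓗) m (laplaceOp_sm hΩ.isOpen hu) [] (Nat.zero_le _)
    rw [ENNReal.ofReal_mul hC1.le, mul_assoc]
    refine le_trans (le_of_eq ?_) ((h1 u hu hc h0).trans (mul_le_mul' le_rfl
      ((h2 u hu hc h0).trans (mul_le_mul' le_rfl ?_))))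
    · refine lintegral_congr fun x => ?_
      congr 1
      rw [show (2 * (((0 : ℕ) : ℝ) - 1)) = -((2 : ℕ) : ℝ) by push_cast; ring,
        Real.rpow_neg infDist_nonneg, Real.rpow_natCast]
      simp only [MM, sq_abs]
      rw [mul_comm]; rfl
    · simpa [derivAlong] using h3
  | succ k =>
    obtain ⟨C, hC, h⟩ := A_est hn hΩ hS m k (by omega)
    refine ⟨C, hC, fun u hu hc h0 => le_trans (le_of_eq ?_) (h u hu hc h0)⟩
    refine lintegral_congr fun x => ?_
    rw [show (2 * (((k + 1 : ℕ) : ℝ) - 1)) = ((2 * k : ℕ) : ℝ) by push_cast; ring, Real.rpow_natCast]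

lemma final_sq (hn : 0 < n) (hΩ : IsPolyhedralDomain Ω 𝓗) (hS : (polySingularSet Ω 𝓗).Nonempty) (m : ℕ) :
    ∃ C : ℝ, 0 < C ∧ ∀ u : Eu n → ℝ, Sm Ω u → ContinuousOn u (closure Ω) →
      (∀ x ∈ frontier Ω, u x = 0) →
      KnormSq Ω (polySingularSet Ω 𝓗) (m + 2) 1 u ≤
      ENNReal.ofReal C * KnormSq Ω (polySingularSet Ω 𝓗) m (-1) (laplaceOp u) := by
  have hI : ∀ β ∈ multiIndicesLE n (m + 2), ∃ C : ℝ, 0 < C ∧ ∀ u : Eu n → ℝ, Sm Ω u →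
      ContinuousOn u (closure Ω) → (∀ x ∈ frontier Ω, u x = 0) →
      ∫⁻ x in Ω, ENNReal.ofReal (infDist x (polySingularSet Ω 𝓗) ^ (2 * (((∑ i, β i : ℕ) : ℝ) - 1)) *
        pderivMulti β u x ^ 2) ≤
      ENNReal.ofReal C * KnormSq Ω (polySingularSet Ω 𝓗) m (-1) (laplaceOp u) := by
    intro β hβ
    obtain ⟨C, hC, h⟩ := I_est hn hΩ hS m (∑ i, β i) ((mem_mi _ _).1 hβ)
    refine ⟨C, hC, fun u hu hc h0 => le_trans ?_ (h u hu hc h0)⟩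
    refine setLIntegral_mono' hΩ.isOpen.measurableSet fun x hx => ?_
    apply ENNReal.ofReal_le_ofReal
    refine mul_le_mul_of_nonneg_left ?_ (Real.rpow_nonneg infDist_nonneg _)
    have h1 := da_le hΩ.isOpen (cl β) hu hx
    rw [cl_length] at h1
    have h2 : |pderivMulti β u x| ≤ MM (se n) (∑ i, β i) u x := h1
    rw [← sq_abs (pderivMulti β u x)]
    exact pow_le_pow_left₀ (abs_nonneg _) h2 2
  choose! C hC h using hI
  have hs : 0 ≤ ∑ β ∈ multiIndicesLE n (m + 2), C β := Finset.sum_nonneg fun β hβ => (hC β hβ).le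
  refine ⟨(∑ β ∈ multiIndicesLE n (m + 2), C β) + 1, by linarith, fun u hu hc h0 => ?_⟩
  calc KnormSq Ω (polySingularSet Ω 𝓗) (m + 2) 1 u
      ≤ ∑ β ∈ multiIndicesLE n (m + 2),
        ENNReal.ofReal (C β) * KnormSq Ω (polySingularSet Ω 𝓗) m (-1) (laplaceOp u) :=
        Finset.sum_le_sum fun β hβ => h β hβ u hu hc h0
    _ = ENNReal.ofReal (∑ β ∈ multiIndicesLE n (m + 2), C β) *
        KnormSq Ω (polySingularSet Ω 𝓗) m (-1) (laplaceOp u) := by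
        rw [← Finset.sum_mul, ENNReal.ofReal_sum_of_nonneg fun β hβ => (hC β hβ).le]
    _ ≤ _ := by
        refine mul_le_mul' (ENNReal.ofReal_le_ofReal (by linarith)) le_rfl

end

/-- A priori estimate for the Dirichlet problem in Babuška–Kondratiev spaces on a polyhedral
domain: `‖u‖_{K^{μ+1}_1} ≤ C ‖Δu‖_{K^{μ-1}_{-1}}` for functions vanishing on the boundary. -/
theorem kondratiev_apriori_estimate {n : ℕ} (hn : 2 ≤ n)
    (Ω : Set (EuclideanSpace ℝ (Fin n))) (𝓗 : Finset (Set (EuclideanSpace ℝ (Fin n))))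
    (hΩ : IsPolyhedralDomain Ω 𝓗) (hS : (polySingularSet Ω 𝓗).Nonempty)
    (μ : ℕ) (hμ : 1 ≤ μ) :
    ∃ C : ℝ, 0 < C ∧ ∀ u : EuclideanSpace ℝ (Fin n) → ℝ,
      ContDiffOn ℝ (⊤ : ℕ∞) u Ω → ContinuousOn u (closure Ω) →
      (∀ x ∈ frontier Ω, u x = 0) →
      KnormSq Ω (polySingularSet Ω 𝓗) 1 1 u < ⊤ →
      KnormSq Ω (polySingularSet Ω 𝓗) (μ - 1) (-1) (laplaceOp u) < ⊤ →
      (KnormSq Ω (polySingularSet Ω 𝓗) (μ + 1) 1 u) ^ (1 / 2 : ℝ) ≤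
        ENNReal.ofReal C *
          (KnormSq Ω (polySingularSet Ω 𝓗) (μ - 1) (-1) (laplaceOp u)) ^ (1 / 2 : ℝ) := by
  obtain ⟨m, rfl⟩ : ∃ m, μ = m + 1 := ⟨μ - 1, by omega⟩
  obtain ⟨C, hC, h⟩ := final_sq (by omega : 0 < n) hΩ hS m
  refine ⟨C ^ (1 / 2 : ℝ), Real.rpow_pos_of_pos hC _, fun u hu hc h0 _ _ => ?_⟩
  have h1 := ENNReal.rpow_le_rpow (h u hu hc h0) (by norm_num : (0 : ℝ) ≤ 1 / 2)
  rw [ENNReal.mul_rpow_of_nonneg _ _ (by norm_num : (0 : ℝ) ≤ 1 / 2),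
    ENNReal.ofReal_rpow_of_pos hC] at h1
  exact h1
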